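/- arXiv:1006.3049 — 3 statements merged into one kernel-verified Lean document; each statement's English description precedes it below -/
import Mathlib

section
/- Every subgraph G of the n-dimensional hypercube Q_n with minimum degree at least d contains a path of length at least 2^d - 1. -/
/-- The hypercube graph `Q_n` on `{0,1}^n`: two vertices are adjacent iff they
differ in exactly one coordinate (Hamming distance 1). -/
def hypercube (n : ℕ) : SimpleGraph (Fin n → Bool) :=
  SimpleGraph.fromRel (fun x y => hammingDist x y = 1)

/-!
From every vertex `v` there is a path, ending at some `b`, with at least `2 ^ deg b` vertices. Call
such a path long. If long paths exist in all subgraphs, then a longest long path from `v` ends at a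
vertex `b` that separates nothing from `v`: otherwise continue it by a long path that starts at `b`
and lives in the part cut off by `b`.

Induct on the graph by deleting all edges of one direction, a matching whose edges join different
components of the remaining graph `G₀`. Starting from `v`, follow a long path of `G₀` to a
non-separating end `b`, cross the deleted edge at `b` to a new component, and repeat; each segment
is too short by a factor of at most two. If there is no deleted edge at the end `c` of the current
segment, then the path is long. If `deg c ≤ deg b`, where `b` is the end of the previous segment,
then the last two segments together are long enough. Otherwise the deleted edge at `c` leads either
to a new component, or back to some visited `r ≠ b`. In the latter case go from `v` to `r` avoiding
`b`, cross to `c`, traverse the last segment backwards and end at `b`, whose degree is smaller.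
-/

open SimpleGraph

variable {V : Type*} {G G₀ H : SimpleGraph V} {S T U : Set V} {a b u v w x y z : V}

theorem isPath_append {p : G.Walk u v} {q : G.Walk v w} (hp : p.IsPath) (hq : q.IsPath)
    (hpq : ∀ x ∈ p.support, x ∈ q.support → x = v) : (p.append q).IsPath := by
  have hq_nodup : (v :: q.support.tail).Nodup := q.cons_tail_support ▸ hq.support_nodup
  obtain ⟨hv, hq_tail⟩ := List.nodup_cons.1 hq_nodup
  rw [Walk.isPath_def, Walk.support_append]
  exact hp.support_nodup.append hq_tail fun x hxp hxq =>
    hv (hpq x hxp (List.mem_of_mem_tail hxq) ▸ hxq)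

theorem support_subset_of_adj_mem (hS : ∀ x y, G.Adj x y → x ∈ S → y ∈ S) (p : G.Walk u v)
    (hu : u ∈ S) : ∀ x ∈ p.support, x ∈ S := by
  induction p with
  | nil => simpa using hu
  | cons h p ih => simpa [hu] using ih (hS _ _ h hu)

theorem notMem_of_mem_support (hS : ∀ x y, G.Adj x y → x ∈ S → y ∈ S) (p : G.Walk u v)
    (hu : u ∉ S) : ∀ x ∈ p.support, x ∉ S :=
  support_subset_of_adj_mem (S := Sᶜ) (fun x y hxy hx hy => hx (hS y x hxy.symm hy)) p hu

theorem reachable_of_mem_support (p : G.Walk u v) (hx : x ∈ p.support) : G.Reachable u x := by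
  classical
  exact (p.takeUntil x hx).reachable

/-- The vertex `y` can be reached from `x` by a walk all of whose vertices, including `x` and `y`,
lie in `S`. -/
def ReachableWithin (G : SimpleGraph V) (S : Set V) (x y : V) : Prop :=
  ∃ p : G.Walk x y, ∀ z ∈ p.support, z ∈ S

namespace ReachableWithin

theorem mono (hG : H ≤ G) (hST : S ⊆ T) (h : ReachableWithin H S x y) :
    ReachableWithin G T x y := by
  obtain ⟨p, hp⟩ := h
  exact ⟨p.mapLe hG, fun z hz => hST (hp z (by simpa using hz))⟩

theorem trans (hxy : ReachableWithin G S x y) (hyz : ReachableWithin G S y z) :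
    ReachableWithin G S x z := by
  obtain ⟨p, hp⟩ := hxy
  obtain ⟨q, hq⟩ := hyz
  exact ⟨p.append q, fun w hw => ((p.mem_support_append_iff q).1 hw).elim (hp w) (hq w)⟩

theorem right_mem (h : ReachableWithin G S x y) : y ∈ S := by
  obtain ⟨p, hp⟩ := h
  exact hp y p.end_mem_support

theorem of_adj (h : G.Adj x y) (hx : x ∈ S) (hy : y ∈ S) : ReachableWithin G S x y :=
  ⟨h.toWalk, by simp [hx, hy]⟩

theorem exists_isPath (h : ReachableWithin G S x y) :
    ∃ p : G.Walk x y, p.IsPath ∧ ∀ z ∈ p.support, z ∈ S := by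
  classical
  obtain ⟨p, hp⟩ := h
  exact ⟨p.bypass, p.bypass_isPath, fun z hz => hp z (p.support_bypass_subset_support hz)⟩

theorem of_mem_support {p : G.Walk v b} (hp : p.IsPath) (hx : x ∈ p.support) (hxb : x ≠ b) :
    ReachableWithin G {b}ᶜ v x := by
  classical
  refine ⟨p.takeUntil x hx, fun z hz hzb => ?_⟩
  rw [Set.mem_singleton_iff.1 hzb] at hz
  exact Walk.endpoint_notMem_support_takeUntil hp hx hxb.symm hz

end ReachableWithin

/-- A path with at least `2 ^ d` vertices, where `d` is the degree of its end. This replaces a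
minimum degree condition, which subgraphs would not inherit. The degree is meant to be finite, as
`Set.ncard` of an infinite set is `0`. -/
structure IsLongPath (p : G.Walk v b) : Prop where
  isPath : p.IsPath
  two_pow_le : 2 ^ (G.neighborSet b).ncard ≤ p.length + 1

/-- Some path starting at `v` is long relative to the degree of its end. -/
def HasLongPath (G : SimpleGraph V) (v : V) : Prop :=
  ∃ b, ∃ p : G.Walk v b, IsLongPath p

/-- Deleting `b` cuts no other vertex off from `v`. For `v = b` this says that `v` is isolated. -/
def IsNonseparating (G : SimpleGraph V) (v b : V) : Prop :=
  ∀ r, G.Reachable v r → r ≠ b → ReachableWithin G {b}ᶜ v r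

theorem exists_adj_not_reachableWithin {r : V} (hvb : G.Reachable v b) (hvr : G.Reachable v r)
    (hrb : r ≠ b) (hr : ¬ReachableWithin G {b}ᶜ v r) :
    ∃ w, G.Adj b w ∧ ¬ReachableWithin G {b}ᶜ v w := by
  obtain ⟨q, hq⟩ := (hvb.symm.trans hvr).exists_isPath
  cases q with
  | nil => exact absurd rfl hrb
  | cons h q =>
    refine ⟨_, h, fun hw => hr (hw.trans ⟨q, fun z hz hzb => ?_⟩)⟩
    exact ((Walk.cons_isPath_iff h q).1 hq).2 (Set.mem_singleton_iff.1 hzb ▸ hz)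

section Nonseparating

variable [Finite V]

theorem one_lt_two_pow_ncard_neighborSet (h : G.Adj v w) : 1 < 2 ^ (G.neighborSet v).ncard :=
  Nat.one_lt_two_pow ((Set.ncard_pos (Set.toFinite _)).2 ⟨w, h⟩).ne'

theorem IsLongPath.ne_of_adj {p : G.Walk v b} (hp : IsLongPath p) (h : G.Adj v w) : b ≠ v := by
  rintro rfl
  have hlen : p.length = 0 := Walk.length_eq_zero_iff.2 (Walk.isPath_iff_nil.1 hp.isPath)
  have := hp.two_pow_le
  have := one_lt_two_pow_ncard_neighborSet h
  omega

theorem exists_longer_isLongPath (hH : ∀ H ≤ G, ∀ u, HasLongPath H u)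
    {p : G.Walk v b} (hp : IsLongPath p) (hb : ¬IsNonseparating G v b) :
    ∃ z, ∃ q : G.Walk v z, IsLongPath q ∧ p.length < q.length := by
  simp only [IsNonseparating, not_forall] at hb
  obtain ⟨r, hvr, hrb, hr⟩ := hb
  obtain ⟨w, hbw, hw⟩ := exists_adj_not_reachableWithin p.reachable hvr hrb hr
  let S : Set V := {x | ¬ReachableWithin G {b}ᶜ v x}
  have hbS : b ∈ S := fun h => h.right_mem rfl
  let H : SimpleGraph V := (G.induce S).spanningCoe
  have hHG : H ≤ G := G.spanningCoe_induce_le S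
  have hH_adj {x y : V} : H.Adj x y ↔ G.Adj x y ∧ x ∈ S ∧ y ∈ S := by simp [H]
  obtain ⟨z, q, hq⟩ := hH H hHG b
  have hqS : ∀ x ∈ q.support, x ∈ S :=
    support_subset_of_adj_mem (fun x y hxy _ => (hH_adj.1 hxy).2.2) q hbS
  have hzb : z ≠ b := hq.ne_of_adj (hH_adj.2 ⟨hbw, hbS, hw⟩)
  have hzS : z ∈ S := hqS z q.end_mem_support
  have hdeg : H.neighborSet z = G.neighborSet z := by
    refine Set.Subset.antisymm (fun y hy => hHG hy) fun y hy => hH_adj.2 ⟨hy, hzS, fun hvy => ?_⟩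
    exact hzS (hvy.trans (.of_adj hy.symm hvy.right_mem hzb))
  have hpath : (p.append (q.mapLe hHG)).IsPath := by
    refine isPath_append hp.isPath (hq.isPath.mapLe hHG) fun x hxp hxq => ?_
    by_contra hxb
    exact hqS x (by simpa using hxq) (.of_mem_support hp.isPath hxp hxb)
  have hq_pos : q.length ≠ 0 := fun h => hzb (Walk.eq_of_length_eq_zero h).symm
  have hq_long := hq.two_pow_le
  rw [hdeg] at hq_long
  have hlen : (p.append (q.mapLe hHG)).length = p.length + q.length := by simp
  exact ⟨z, _, ⟨hpath, by omega⟩, by omega⟩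

theorem exists_isLongPath_isNonseparating (hH : ∀ H ≤ G, ∀ u, HasLongPath H u) (v : V) :
    ∃ b, ∃ p : G.Walk v b, IsLongPath p ∧ IsNonseparating G v b := by
  have := Fintype.ofFinite V
  let lengths : Set ℕ := {n | ∃ b, ∃ p : G.Walk v b, IsLongPath p ∧ p.length = n}
  have hne : lengths.Nonempty := by
    obtain ⟨b, p, hp⟩ := hH G le_rfl v
    exact ⟨_, b, p, hp, rfl⟩
  have hbdd : BddAbove lengths := by
    refine ⟨Fintype.card V, ?_⟩
    rintro _ ⟨b, p, hp, rfl⟩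
    exact hp.isPath.length_lt.le
  obtain ⟨_, ⟨b, p, hp, rfl⟩, hmax⟩ := hbdd.exists_isGreatest_of_nonempty hne
  refine ⟨b, p, hp, ?_⟩
  by_contra hb
  obtain ⟨z, q, hq, hlt⟩ := exists_longer_isLongPath hH hp hb
  exact hlt.not_ge (hmax ⟨z, q, hq, rfl⟩)

end Nonseparating

/-- The graph `G` arises from its spanning subgraph `G₀` by adding a matching each of whose edges
joins two different components of `G₀`. -/
structure IsMatchingExtension (G₀ G : SimpleGraph V) : Prop where
  le : G₀ ≤ G
  adj_of_reachable : ∀ ⦃x y⦄, G.Adj x y → G₀.Reachable x y → G₀.Adj x y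
  eq_of_not_adj : ∀ ⦃x y z⦄, G.Adj x y → ¬G₀.Adj x y → G.Adj x z → ¬G₀.Adj x z → y = z

theorem neighborSet_eq_of_le (hle : G₀ ≤ G) (hb : ∀ r, G.Adj b r → G₀.Adj b r) :
    G.neighborSet b = G₀.neighborSet b :=
  Set.Subset.antisymm hb fun _ hr => hle hr

theorem IsMatchingExtension.ncard_neighborSet_le [Finite V] (h : IsMatchingExtension G₀ G) (b : V) :
    (G.neighborSet b).ncard ≤ (G₀.neighborSet b).ncard + 1 := by
  by_cases hb : ∀ r, G.Adj b r → G₀.Adj b r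
  · rw [neighborSet_eq_of_le h.le hb]
    exact Nat.le_succ _
  · push Not at hb
    obtain ⟨a, hba, hba₀⟩ := hb
    have hsub : G.neighborSet b ⊆ insert a (G₀.neighborSet b) := fun y hby =>
      or_iff_not_imp_right.2 fun hby₀ => h.eq_of_not_adj hby hby₀ hba hba₀
    exact (Set.ncard_le_ncard hsub).trans (Set.ncard_insert_le _ _)

theorem IsMatchingExtension.two_pow_ncard_le [Finite V] (h : IsMatchingExtension G₀ G)
    {t : G₀.Walk a b} (ht : IsLongPath t) :
    2 ^ (G.neighborSet b).ncard ≤ 2 * (t.length + 1) :=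
  calc 2 ^ (G.neighborSet b).ncard
    _ ≤ 2 ^ ((G₀.neighborSet b).ncard + 1) :=
      Nat.pow_le_pow_right two_pos (h.ncard_neighborSet_le b)
    _ = 2 * 2 ^ (G₀.neighborSet b).ncard := pow_succ' _ _
    _ ≤ 2 * (t.length + 1) := Nat.mul_le_mul_left 2 ht.two_pow_le

/-- The exploration of `G` from `v` enters a new component of `G₀` at `a`, along the path `p`. The
set `U` of vertices visited before is a union of components of `G₀`; initially `U = ∅` and
`a = v`. -/
structure IsEntry (G₀ : SimpleGraph V) (U : Set V) (p : G.Walk v a) : Prop where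
  adj_mem : ∀ x y, G₀.Adj x y → x ∈ U → y ∈ U
  notMem : a ∉ U
  isPath : p.IsPath
  mem_insert : ∀ x ∈ p.support, x ∈ insert a U
  reachableWithin : ∀ r ∈ U, ReachableWithin G U v r

/-- The exploration of `G` from `v` is about to leave the set `U` of visited vertices, a union of
components of `G₀`, along an edge at `b`. The path from `v` to `b` may be too short for
`IsLongPath`, by a factor of at most two. -/
structure IsFrontier (G₀ G : SimpleGraph V) (v : V) (U : Set V) (b : V) : Prop where
  adj_mem : ∀ x y, G₀.Adj x y → x ∈ U → y ∈ U
  exists_isPath : ∃ p : G.Walk v b, p.IsPath ∧ (∀ x ∈ p.support, x ∈ U) ∧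
    2 ^ (G.neighborSet b).ncard ≤ 2 * (p.length + 1)
  reachableWithin : ∀ r ∈ U, r ≠ b → ReachableWithin G (U \ {b}) v r
  exists_adj : ∃ a ∉ U, G.Adj b a

theorem isEntry_nil (G₀ G : SimpleGraph V) (v : V) : IsEntry G₀ ∅ (.nil : G.Walk v v) where
  adj_mem _ _ _ hx := hx
  notMem := id
  isPath := .nil
  mem_insert x hx := by simpa using hx
  reachableWithin _ hr := hr.elim

theorem IsFrontier.reachableWithin_of_mem (hb : IsFrontier G₀ G v U b) (hx : x ∈ U) :
    ReachableWithin G U v x := by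
  by_cases hxb : x = b
  · obtain ⟨p, -, hpU, -⟩ := hb.exists_isPath
    exact hxb ▸ ⟨p, hpU⟩
  · exact (hb.reachableWithin x hx hxb).mono le_rfl Set.sdiff_subset

theorem IsFrontier.isEntry_concat (hb : IsFrontier G₀ G v U b) {p : G.Walk v x} (hp : p.IsPath)
    (hpU : ∀ y ∈ p.support, y ∈ U) (hxa : G.Adj x a) (ha : a ∉ U) :
    IsEntry G₀ U (p.concat hxa) where
  adj_mem := hb.adj_mem
  notMem := ha
  isPath := hp.concat (fun hap => ha (hpU a hap)) hxa
  mem_insert y hy := by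
    rw [Walk.support_concat, List.mem_append, List.mem_singleton] at hy
    exact hy.elim (fun hyp => .inr (hpU y hyp)) .inl
  reachableWithin _ hr := hb.reachableWithin_of_mem hr

namespace IsEntry

variable {p : G.Walk v a} {t : G₀.Walk a b}

theorem isPath_append_mapLe (hp : IsEntry G₀ U p) (hle : G₀ ≤ G) (ht : t.IsPath) :
    (p.append (t.mapLe hle)).IsPath :=
  isPath_append hp.isPath (ht.mapLe hle) fun x hxp hxt =>
    (hp.mem_insert x hxp).resolve_right
      (notMem_of_mem_support hp.adj_mem t hp.notMem x (by simpa using hxt))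

theorem reachableWithin_diff_singleton (hp : IsEntry G₀ U p) (hle : G₀ ≤ G) (t : G₀.Walk a b)
    (hb : IsNonseparating G₀ a b) {r : V} (hr : r ∈ U ∪ {x | G₀.Reachable a x}) (hrb : r ≠ b) :
    ReachableWithin G ((U ∪ {x | G₀.Reachable a x}) \ {b}) v r := by
  have hbU : b ∉ U := notMem_of_mem_support hp.adj_mem t hp.notMem b t.end_mem_support
  have hU : U ⊆ (U ∪ {x | G₀.Reachable a x}) \ {b} := fun x hx =>
    ⟨.inl hx, fun hxb => hbU (Set.mem_singleton_iff.1 hxb ▸ hx)⟩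
  rcases hr with hrU | har
  · exact (hp.reachableWithin r hrU).mono le_rfl hU
  · obtain ⟨q, hq⟩ := hb r har hrb
    have hab : a ≠ b := hq a q.start_mem_support
    have hva : ReachableWithin G ((U ∪ {x | G₀.Reachable a x}) \ {b}) v a := by
      refine ⟨p, fun x hx => ?_⟩
      rcases hp.mem_insert x hx with rfl | hxU
      · exact ⟨.inr (.refl x), hab⟩
      · exact hU hxU
    have har' : ReachableWithin G₀ ((U ∪ {x | G₀.Reachable a x}) \ {b}) a r :=
      ⟨q, fun x hx => ⟨.inr (reachable_of_mem_support q hx), hq x hx⟩⟩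
    exact hva.trans (har'.mono hle subset_rfl)

theorem hasLongPath_or_exists_adj (hp : IsEntry G₀ U p) (hle : G₀ ≤ G) (ht : IsLongPath t) :
    HasLongPath G v ∨ ∃ r, G.Adj b r ∧ ¬G₀.Adj b r := by
  by_contra! ⟨hno, hb⟩
  refine hno ⟨b, p.append (t.mapLe hle), hp.isPath_append_mapLe hle ht.isPath, ?_⟩
  rw [neighborSet_eq_of_le hle hb, Walk.length_append, Walk.length_mapLe]
  exact ht.two_pow_le.trans (by omega)

theorem isFrontier_union [Finite V] (hp : IsEntry G₀ U p) (h : IsMatchingExtension G₀ G)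
    (ht : IsLongPath t) (hb : IsNonseparating G₀ a b) {r : V} (hbr : G.Adj b r)
    (hbr₀ : ¬G₀.Adj b r) (hrU : r ∉ U) :
    IsFrontier G₀ G v (U ∪ {x | G₀.Reachable a x}) b where
  adj_mem x y hxy hx := hx.imp (hp.adj_mem x y hxy) fun hax => hax.trans hxy.reachable
  exists_isPath := by
    refine ⟨p.append (t.mapLe h.le), hp.isPath_append_mapLe h.le ht.isPath, fun x hx => ?_, ?_⟩
    · rcases (p.mem_support_append_iff _).1 hx with hxp | hxt
      · exact (hp.mem_insert x hxp).elim (fun hxa => .inr (hxa ▸ .refl x)) .inl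
      · exact .inr (reachable_of_mem_support t (by simpa using hxt))
    · rw [Walk.length_append, Walk.length_mapLe]
      exact (h.two_pow_ncard_le ht).trans (by omega)
  reachableWithin _ hr hrb := hp.reachableWithin_diff_singleton h.le t hb hr hrb
  exists_adj := by
    refine ⟨r, ?_, hbr⟩
    rintro (hrU' | har)
    · exact hrU hrU'
    · exact hbr₀ (h.adj_of_reachable hbr (t.reachable.symm.trans har))

end IsEntry

theorem IsFrontier.hasLongPath_of_adj_mem (hb : IsFrontier G₀ G v U b) (hle : G₀ ≤ G)
    (hba : G.Adj b a) (ha : a ∉ U) {t : G₀.Walk a z} (ht : t.IsPath)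
    (hlen : 2 ^ (G.neighborSet b).ncard ≤ t.length + 1) (hxz : G.Adj x z) (hxU : x ∈ U)
    (hxb : x ≠ b) : HasLongPath G v := by
  have hbU : b ∈ U := by
    obtain ⟨p, -, hpU, -⟩ := hb.exists_isPath
    exact hpU b p.end_mem_support
  have htU : ∀ y ∈ t.support, y ∉ U := notMem_of_mem_support hb.adj_mem t ha
  have hzU : z ∉ U := htU z t.end_mem_support
  obtain ⟨q, hq, hqU⟩ := (hb.reachableWithin x hxU hxb).exists_isPath
  have hentry : IsEntry G₀ U (q.concat hxz) :=
    hb.isEntry_concat hq (fun y hy => (hqU y hy).1) hxz hzU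
  have hpath : ((q.concat hxz).append (t.reverse.mapLe hle)).IsPath :=
    hentry.isPath_append_mapLe hle ht.reverse
  have hb_notMem : b ∉ ((q.concat hxz).append (t.reverse.mapLe hle)).support := by
    have hbq : b ∉ q.support := fun h => (hqU b h).2 rfl
    have hbt : b ∉ t.support := fun h => htU b h hbU
    have hbz : b ≠ z := fun h => hzU (h ▸ hbU)
    simp [Walk.support_concat, hbq, hbt, hbz]
  refine ⟨b, _, hpath.concat hb_notMem hba.symm, ?_⟩
  simp only [Walk.length_concat, Walk.length_append, Walk.length_mapLe, Walk.length_reverse]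
  omega

theorem two_pow_le_of_add_lt_two_pow {d d' e k l : ℕ} (hk : 2 ^ d ≤ 2 * k) (hl : 2 ^ e ≤ l)
    (hd' : d' ≤ e + 1) (hlt : k + l < 2 ^ d') : 2 ^ d ≤ l := by
  have h_double : 2 ^ d' ≤ 2 * l :=
    calc 2 ^ d' ≤ 2 ^ (e + 1) := Nat.pow_le_pow_right two_pos hd'
      _ = 2 * 2 ^ e := pow_succ' 2 e
      _ ≤ 2 * l := Nat.mul_le_mul_left 2 hl
  have hdd' : d < d' := (Nat.pow_lt_pow_iff_right one_lt_two).1 (by omega)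
  exact (Nat.pow_le_pow_right two_pos (by omega)).trans hl

section Exploration

variable [Finite V]

theorem IsFrontier.hasLongPath_or_exists_ssuperset (hb : IsFrontier G₀ G v U b)
    (h : IsMatchingExtension G₀ G)
    (hG₀ : ∀ u, ∃ z, ∃ t : G₀.Walk u z, IsLongPath t ∧ IsNonseparating G₀ u z) :
    HasLongPath G v ∨ ∃ U' b', U ⊂ U' ∧ IsFrontier G₀ G v U' b' := by
  refine or_iff_not_imp_left.2 fun hno => ?_
  obtain ⟨a, ha, hba⟩ := hb.exists_adj
  obtain ⟨p, hp, hpU, hp_len⟩ := hb.exists_isPath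
  obtain ⟨z, t, ht, hz⟩ := hG₀ a
  have hentry : IsEntry G₀ U (p.concat hba) := hb.isEntry_concat hp hpU hba ha
  obtain ⟨r, hzr, hzr₀⟩ := (hentry.hasLongPath_or_exists_adj h.le ht).resolve_left hno
  have hlt : p.length + 1 + (t.length + 1) < 2 ^ (G.neighborSet z).ncard := by
    by_contra! hge
    refine hno ⟨z, _, hentry.isPath_append_mapLe h.le ht.isPath, ?_⟩
    simp only [Walk.length_append, Walk.length_concat, Walk.length_mapLe]
    omega
  have ht_len : 2 ^ (G.neighborSet b).ncard ≤ t.length + 1 :=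
    two_pow_le_of_add_lt_two_pow hp_len ht.two_pow_le (h.ncard_neighborSet_le z) hlt
  have hrb : r ≠ b := by
    rintro rfl
    have hra₀ : ¬G₀.Adj r a := fun hra => ha (hb.adj_mem r a hra (hpU r p.end_mem_support))
    obtain rfl : z = a := h.eq_of_not_adj hzr.symm (fun hrz => hzr₀ hrz.symm) hba hra₀
    have ht_zero : t.length = 0 := Walk.length_eq_zero_iff.2 (Walk.isPath_iff_nil.1 ht.isPath)
    have := one_lt_two_pow_ncard_neighborSet hba
    omega
  have hrU : r ∉ U := fun hrU =>
    hno (hb.hasLongPath_of_adj_mem h.le hba ha ht.isPath ht_len hzr.symm hrU hrb)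
  refine ⟨_, z, ?_, hentry.isFrontier_union h ht hz hzr hzr₀ hrU⟩
  exact Set.ssubset_iff_exists.2 ⟨Set.subset_union_left, a, .inr (.refl a), ha⟩

theorem IsFrontier.hasLongPath (h : IsMatchingExtension G₀ G)
    (hG₀ : ∀ u, ∃ z, ∃ t : G₀.Walk u z, IsLongPath t ∧ IsNonseparating G₀ u z)
    (hb : IsFrontier G₀ G v U b) : HasLongPath G v := by
  induction U using WellFoundedGT.induction generalizing b with
  | ind U ih =>
    rcases hb.hasLongPath_or_exists_ssuperset h hG₀ with hlong | ⟨U', b', hUU', hb'⟩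
    · exact hlong
    · exact ih U' hUU' hb'

theorem IsMatchingExtension.hasLongPath (h : IsMatchingExtension G₀ G)
    (hG₀ : ∀ H ≤ G₀, ∀ u, HasLongPath H u) (v : V) : HasLongPath G v := by
  have hG₀' := exists_isLongPath_isNonseparating hG₀
  obtain ⟨b, t, ht, hb⟩ := hG₀' v
  have hentry := isEntry_nil G₀ G v
  rcases hentry.hasLongPath_or_exists_adj h.le ht with hlong | ⟨r, hbr, hbr₀⟩
  · exact hlong
  · exact (hentry.isFrontier_union h ht hb hbr hbr₀ (Set.notMem_empty r)).hasLongPath h hG₀'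

end Exploration

theorem isMatchingExtension_sdiff_comap {α : Type*} {g : V → α}
    (hg : ∀ x y z, G.Adj x y → G.Adj x z → g x ≠ g y → g x ≠ g z → y = z) :
    IsMatchingExtension (G \ (⊤ : SimpleGraph α).comap g) G where
  le := sdiff_le
  adj_of_reachable x y hxy hreach := by
    obtain ⟨p⟩ := hreach
    have hconst : g y = g x := support_subset_of_adj_mem (S := {z | g z = g x})
      (fun z w hzw hz => (not_not.1 hzw.2).symm.trans hz) p rfl y p.end_mem_support
    exact ⟨hxy, not_not.2 hconst.symm⟩
  eq_of_not_adj x y z hxy hxy₀ hxz hxz₀ :=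
    hg x y z hxy hxz (fun hy => hxy₀ ⟨hxy, not_not.2 hy⟩) fun hz => hxz₀ ⟨hxz, not_not.2 hz⟩

theorem hasLongPath_of_forall_not_adj (hv : ∀ w, ¬G.Adj v w) : HasLongPath G v := by
  refine ⟨v, .nil, .nil, ?_⟩
  have hdeg : G.neighborSet v = ∅ := Set.eq_empty_iff_forall_notMem.2 hv
  simp [hdeg]

theorem hypercube_minDegree_long_path_general {ι α : Type*} [Finite V] (f : ι → V → α)
    (hsep : ∀ x y, G.Adj x y → ∃ i, f i x ≠ f i y)
    (hmatch : ∀ i x y z, G.Adj x y → G.Adj x z → f i x ≠ f i y → f i x ≠ f i z → y = z) (v : V) :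
    ∃ b, ∃ p : G.Walk v b, p.IsPath ∧ 2 ^ (G.neighborSet b).ncard ≤ p.length + 1 := by
  suffices hlong : HasLongPath G v by
    obtain ⟨b, p, hp⟩ := hlong
    exact ⟨b, p, hp.isPath, hp.two_pow_le⟩
  induction G using WellFoundedLT.induction generalizing v with
  | ind G ih =>
    by_cases hv : ∀ w, ¬G.Adj v w
    · exact hasLongPath_of_forall_not_adj hv
    push Not at hv
    obtain ⟨w, hvw⟩ := hv
    obtain ⟨i, hi⟩ := hsep v w hvw
    have hext := isMatchingExtension_sdiff_comap (hmatch i)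
    refine hext.hasLongPath (fun H hH u => ih H ?_ ?_ ?_ u) v
    · exact lt_of_le_of_ne (hH.trans hext.le) fun hHG => (hH (hHG ▸ hvw)).2 hi
    · exact fun x y hxy => hsep x y (hext.le (hH hxy))
    · exact fun j x y z hxy hxz => hmatch j x y z (hext.le (hH hxy)) (hext.le (hH hxz))

theorem hypercube_adj_iff {n : ℕ} {x y : Fin n → Bool} :
    (hypercube n).Adj x y ↔ hammingDist x y = 1 := by
  rw [hypercube, fromRel_adj, hammingDist_comm y x, or_self, and_iff_right_iff_imp]
  rintro hxy rfl
  simp at hxy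

theorem hypercube_eq_of_ne {n : ℕ} {x y z : Fin n → Bool} {i : Fin n}
    (hxy : (hypercube n).Adj x y) (hxz : (hypercube n).Adj x z) (hy : x i ≠ y i)
    (hz : x i ≠ z i) : y = z := by
  have agree {w : Fin n → Bool} (hxw : (hypercube n).Adj x w) (hw : x i ≠ w i) {j : Fin n}
      (hj : j ≠ i) : x j = w j := by
    by_contra hjw
    obtain ⟨k, hk⟩ := Finset.card_eq_one.1 (hypercube_adj_iff.1 hxw)
    have eq_k {l : Fin n} (hl : x l ≠ w l) : l = k := by
      rw [← Finset.mem_singleton, ← hk]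
      simpa using hl
    exact hj ((eq_k hjw).trans (eq_k hw).symm)
  funext j
  by_cases hj : j = i
  · subst hj
    exact (Bool.eq_not_of_ne hy.symm).trans (Bool.eq_not_of_ne hz.symm).symm
  · exact (agree hxy hy hj).symm.trans (agree hxz hz hj)

theorem hypercube_subgraph_exists_isPath {n : ℕ} (G : (hypercube n).Subgraph) (v : G.verts) :
    ∃ b, ∃ p : G.coe.Walk v b, p.IsPath ∧ 2 ^ (G.neighborSet b).ncard ≤ p.length + 1 := by
  obtain ⟨b, p, hp, hlen⟩ := hypercube_minDegree_long_path_general (G := G.coe)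
    (fun i x => x.1 i) (fun _ _ hxy => Function.ne_iff.1 (G.adj_sub hxy).ne)
    (fun _ _ _ _ hxy hxz hy hz =>
      Subtype.ext (hypercube_eq_of_ne (G.adj_sub hxy) (G.adj_sub hxz) hy hz)) v
  have hdeg : (G.coe.neighborSet b).ncard = (G.neighborSet b).ncard :=
    Nat.card_congr (Subgraph.coeNeighborSetEquiv b)
  exact ⟨b, p, hp, hdeg ▸ hlen⟩

/-- Every subgraph `G` of `Q_n` with minimum degree at least `d` contains a path of
length at least `2^d - 1`. -/
theorem hypercube_minDegree_long_path (n d : ℕ) (G : (hypercube n).Subgraph)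
    (hne : G.verts.Nonempty)
    (hmin : ∀ v ∈ G.verts, d ≤ (G.neighborSet v).ncard) :
    ∃ (u v : G.verts) (p : G.coe.Walk u v), p.IsPath ∧ 2 ^ d - 1 ≤ p.length := by
  obtain ⟨b, p, hp, hlen⟩ := hypercube_subgraph_exists_isPath G ⟨hne.some, hne.some_mem⟩
  have hpow := Nat.pow_le_pow_right two_pos (hmin b b.2)
  exact ⟨_, b, p, hp, Nat.sub_le_iff_le_add.2 (hpow.trans hlen)⟩
end

section
/- Every subgraph G of the n-dimensional hypercube Q_n with average degree at least d contains a path of length at least 2^(d/2) - 1. -/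
/-!
Pass to a nonempty set `W` of vertices that is minimal with `d |W| ≤ 2 e(W)`. By the
edge-isoperimetric inequality `2 e(S) ≤ |S| log₂ |S|` in the cube, `|W| ≥ 2 ^ d`.

Run a depth-first search on `W`. At every moment the stack is a path, and an unvisited vertex is
adjacent only to unvisited vertices and to the stack. The number of unvisited vertices plus the
size of the stack drops by one at each backtracking step, so at some moment the search is about to
pop a vertex `u` while the unvisited set `X` and the rest `A` of the stack satisfy
`|X| + |A| = 2 ^ (d - 1)`. As `u` has no unvisited neighbour, the edges meeting `X` all lie in
`X ∪ A`. At least `|A| - 1` edges of `X ∪ A` lie on the path `A`, so deleting `X` from `W` destroys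
at most `(d - 1) 2 ^ (d - 2) - (|A| - 1)` edges. The vertex `u` and `A` form a path of length `|A|`;
if `(|A| + 1) ^ 2 < 2 ^ d`, then the number of destroyed edges is at most `d |X| / 2`, so `W \ X`
contradicts the minimality of `W`.
-/

open Finset SimpleGraph

section EdgesWithin

variable {V V' : Type*} {G : SimpleGraph V} {G' : SimpleGraph V'}

open Classical in
/-- The edges of the graph `G` with both endpoints in the finite vertex set `S`, that is, the edges
of the subgraph induced on `S`, kept as edges of `G` so that different `S` can be compared. -/
noncomputable def edgesWithin (G : SimpleGraph V) (S : Finset V) : Finset (Sym2 V) :=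
  {e ∈ S.sym2 | e ∈ G.edgeSet}

theorem mem_edgesWithin {S : Finset V} {e : Sym2 V} :
    e ∈ edgesWithin G S ↔ (∀ v ∈ e, v ∈ S) ∧ e ∈ G.edgeSet := by
  simp [edgesWithin, mem_sym2_iff]

theorem mk_mem_edgesWithin {S : Finset V} {x y : V} :
    s(x, y) ∈ edgesWithin G S ↔ (x ∈ S ∧ y ∈ S) ∧ G.Adj x y := by
  simp [mem_edgesWithin]

theorem coe_edgesWithin_univ [Fintype V] : (edgesWithin G univ : Set (Sym2 V)) = G.edgeSet := by
  ext e
  simp [mem_edgesWithin]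

theorem edgesWithin_eq_empty_of_subsingleton {S : Finset V} (hS : (S : Set V).Subsingleton) :
    edgesWithin G S = ∅ := by
  refine eq_empty_of_forall_notMem fun e ↦ ?_
  induction e with | _ x y
  rw [mk_mem_edgesWithin]
  rintro ⟨⟨hx, hy⟩, hxy⟩
  exact hxy.ne (hS hx hy)

theorem card_edgesWithin_le_of_copy (f : Copy G G') (S : Finset V) :
    #(edgesWithin G S) ≤ #(edgesWithin G' (S.map f.toEmbedding)) := by
  refine card_le_card_of_injOn (Sym2.map f) ?_ (Sym2.map.injective f.injective).injOn
  intro e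
  induction e with | _ x y =>
  simp only [mem_coe, Sym2.map_mk, mk_mem_edgesWithin, mem_map]
  rintro ⟨⟨hx, hy⟩, hxy⟩
  exact ⟨⟨⟨x, hx, rfl⟩, y, hy, rfl⟩, f.toHom.map_adj hxy⟩

theorem card_edgesWithin_union_add_inter_le [DecidableEq V] {S T : Finset V}
    (hST : ∀ x ∈ S \ T, ∀ y ∈ T \ S, ¬G.Adj x y) :
    #(edgesWithin G (S ∪ T)) + #(edgesWithin G (S ∩ T)) ≤
      #(edgesWithin G S) + #(edgesWithin G T) := by
  rw [← card_union_add_card_inter (edgesWithin G S)]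
  gcongr <;> intro e <;> induction e with | _ x y
  · simp only [mem_union, mk_mem_edgesWithin]
    grind [hST x, hST y, G.adj_comm x y]
  · simp only [mem_inter, mk_mem_edgesWithin]
    tauto

theorem length_le_card_edgesWithin_support [DecidableEq V] {u v : V} {p : G.Walk u v}
    (hp : p.IsPath) : p.length ≤ #(edgesWithin G p.support.toFinset) := by
  rw [← p.length_edges, ← List.toFinset_card_of_nodup hp.edges_nodup]
  refine card_le_card fun e he ↦ ?_
  rw [List.mem_toFinset] at he
  exact mem_edgesWithin.2
    ⟨fun x hx ↦ List.mem_toFinset.2 (p.mem_support_of_mem_edges he hx), p.edges_subset_edgeSet he⟩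

theorem length_sub_one_le_card_edgesWithin_support_tail [DecidableEq V] {u v : V}
    {p : G.Walk u v} (hp : p.IsPath) :
    p.length - 1 ≤ #(edgesWithin G p.support.tail.toFinset) := by
  cases p with
  | nil => simp
  | cons h q => simpa using length_le_card_edgesWithin_support hp.of_cons

end EdgesWithin

section Isoperimetry

variable {n : ℕ}

theorem mul_logb_add_mul_logb_add_le {x y : ℝ} (hx : 0 < x) (hxy : x ≤ y) :
    x * Real.logb 2 x + y * Real.logb 2 y + 2 * x ≤ (x + y) * Real.logb 2 (x + y) := by
  have hy : 0 < y := hx.trans_le hxy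
  have log_two_mul : 1 + Real.logb 2 x ≤ Real.logb 2 (x + y) := by
    rw [← Real.logb_self_eq_one one_lt_two, ← Real.logb_mul two_ne_zero hx.ne']
    exact Real.logb_le_logb_of_le one_lt_two (by positivity) (by linarith)
  have bernoulli : (2 : ℝ) ^ (x / y) ≤ (x + y) / y := by
    have h := rpow_one_add_le_one_add_mul_self (s := 1) (by norm_num)
      (div_nonneg hx.le hy.le) ((div_le_one hy).2 hxy)
    rw [one_add_one_eq_two, mul_one] at h
    rwa [add_div, div_self hy.ne', add_comm]
  have log_ratio : x / y + Real.logb 2 y ≤ Real.logb 2 (x + y) := by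
    rw [← le_sub_iff_add_le, ← Real.logb_div (by positivity) hy.ne',
      Real.le_logb_iff_rpow_le one_lt_two (by positivity)]
    exact bernoulli
  calc x * Real.logb 2 x + y * Real.logb 2 y + 2 * x
      = x * (1 + Real.logb 2 x) + y * (x / y + Real.logb 2 y) := by field_simp; ring
    _ ≤ x * Real.logb 2 (x + y) + y * Real.logb 2 (x + y) := by gcongr
    _ = (x + y) * Real.logb 2 (x + y) := by ring

theorem hypercube_adj {x y : Fin n → Bool} : (hypercube n).Adj x y ↔ hammingDist x y = 1 := by
  rw [hypercube, fromRel_adj, hammingDist_comm y x, or_self, and_iff_right_iff_imp]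
  rintro h rfl
  simp at h

theorem eq_update_not_of_hypercube_adj {x y : Fin n → Bool} {i : Fin n}
    (h : (hypercube n).Adj x y) (hi : x i ≠ y i) : y = Function.update x i (!x i) := by
  rw [hypercube_adj, hammingDist, card_eq_one] at h
  obtain ⟨j, hj⟩ := h
  have differ_iff (k : Fin n) : x k ≠ y k ↔ k = j := by simpa using Finset.ext_iff.1 hj k
  obtain rfl : i = j := (differ_iff i).1 hi
  ext k
  obtain rfl | hk := eq_or_ne k i
  · simpa using (Bool.not_eq.2 hi).symm
  · rw [Function.update_of_ne hk, not_not.1 (mt (differ_iff k).1 hk)]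

theorem card_edgesWithin_hypercube_le_split (A : Finset (Fin n → Bool)) (i : Fin n) (b : Bool) :
    #(edgesWithin (hypercube n) A) ≤ #(edgesWithin (hypercube n) {x ∈ A | x i = b}) +
      #(edgesWithin (hypercube n) {x ∈ A | x i = !b}) + #{x ∈ A | x i = b} := by
  set crossing := image (fun x ↦ s(x, Function.update x i (!x i))) {x ∈ A | x i = b}
  have cover : edgesWithin (hypercube n) A ⊆ edgesWithin (hypercube n) {x ∈ A | x i = b} ∪
      edgesWithin (hypercube n) {x ∈ A | x i = !b} ∪ crossing := by
    intro e
    induction e with | _ x y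
    simp only [crossing, mem_union, mk_mem_edgesWithin, mem_filter, mem_image]
    rintro ⟨⟨hx, hy⟩, hxy⟩
    by_cases hi : x i = y i
    · cases b <;> cases hyi : y i <;> simp_all
    · right
      by_cases hb : x i = b
      · exact ⟨x, ⟨hx, hb⟩, by rw [eq_update_not_of_hypercube_adj hxy hi]⟩
      · refine ⟨y, ⟨hy, ?_⟩, ?_⟩
        · cases b <;> cases hyi : y i <;> simp_all
        · rw [← eq_update_not_of_hypercube_adj hxy.symm (Ne.symm hi), Sym2.eq_swap]
  calc #(edgesWithin (hypercube n) A)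
      ≤ _ := card_le_card cover
    _ ≤ _ := card_union_le _ _
    _ ≤ _ := by gcongr; exacts [card_union_le _ _, card_image_le]

theorem two_mul_card_edgesWithin_hypercube_le (A : Finset (Fin n → Bool)) :
    2 * (#(edgesWithin (hypercube n) A) : ℝ) ≤ #A * Real.logb 2 #A := by
  induction A using Finset.strongInduction with | _ A ih
  obtain hA | hA := (A : Set (Fin n → Bool)).subsingleton_or_nontrivial
  · obtain h | h : #A = 0 ∨ #A = 1 := Nat.le_one_iff_eq_zero_or_eq_one.1 (card_le_one.2 hA)
    all_goals simp [edgesWithin_eq_empty_of_subsingleton hA, h]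
  · obtain ⟨x, hx, y, hy, hxy⟩ := hA
    obtain ⟨i, hi⟩ := Function.ne_iff.1 hxy
    let side (b : Bool) : Finset (Fin n → Bool) := {z ∈ A | z i = b}
    have side_nonempty (b : Bool) : (side b).Nonempty := by
      obtain h | h : x i = b ∨ y i = b := by cases b <;> cases hxi : x i <;> simp_all
      exacts [⟨x, mem_filter.2 ⟨hx, h⟩⟩, ⟨y, mem_filter.2 ⟨hy, h⟩⟩]
    have card_side_add (b : Bool) : #(side b) + #(side !b) = #A := by
      rw [← card_filter_add_card_filter_not (s := A) (fun z ↦ z i = b)]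
      simp [side, Bool.eq_not]
    have side_ssubset (b : Bool) : side b ⊂ A := by
      refine (filter_subset _ _).ssubset_of_ne fun h ↦ ?_
      have := card_side_add b
      have := (side_nonempty !b).card_pos
      simp_all [side]
    obtain ⟨b, hb⟩ : ∃ b, #(side b) ≤ #(side !b) :=
      (le_total #(side true) #(side false)).elim (⟨true, ·⟩) (⟨false, ·⟩)
    have split : (#(edgesWithin (hypercube n) A) : ℝ) ≤ #(edgesWithin (hypercube n) (side b)) +
        #(edgesWithin (hypercube n) (side !b)) + #(side b) :=
      mod_cast card_edgesWithin_hypercube_le_split A i b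
    have entropy := mul_logb_add_mul_logb_add_le (x := #(side b)) (y := #(side !b))
      (mod_cast (side_nonempty b).card_pos) (mod_cast hb)
    rw [← Nat.cast_add, card_side_add] at entropy
    linarith [ih _ (side_ssubset b), ih _ (side_ssubset !b)]

variable {V : Type*} {G : SimpleGraph V}

theorem two_mul_card_edgesWithin_le_of_copy_hypercube (φ : Copy G (hypercube n)) (S : Finset V) :
    2 * (#(edgesWithin G S) : ℝ) ≤ #S * Real.logb 2 #S := by
  calc 2 * (#(edgesWithin G S) : ℝ)
      ≤ 2 * #(edgesWithin (hypercube n) (S.map φ.toEmbedding)) := by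
        gcongr; exact card_edgesWithin_le_of_copy φ S
    _ ≤ #S * Real.logb 2 #S := by
        simpa only [card_map] using two_mul_card_edgesWithin_hypercube_le (S.map φ.toEmbedding)

theorem two_mul_card_edgesWithin_le_of_card_eq_two_pow (φ : Copy G (hypercube n)) {S : Finset V}
    {k : ℕ} (hS : #S = 2 ^ k) : 2 * #(edgesWithin G S) ≤ 2 ^ k * k := by
  have h := two_mul_card_edgesWithin_le_of_copy_hypercube φ S
  rw [hS, Nat.cast_pow, Nat.cast_ofNat, Real.logb_pow, Real.logb_self_eq_one one_lt_two,
    mul_one] at h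
  exact_mod_cast h

theorem two_pow_le_card_of_mul_card_le (φ : Copy G (hypercube n)) {S : Finset V} (hS : S.Nonempty)
    {d : ℕ} (hd : d * #S ≤ 2 * #(edgesWithin G S)) : 2 ^ d ≤ #S := by
  have card_pos : (0 : ℝ) < #S := mod_cast hS.card_pos
  have hd' : (d : ℝ) * #S ≤ 2 * #(edgesWithin G S) := mod_cast hd
  have d_le_log : (d : ℝ) ≤ Real.logb 2 #S :=
    le_of_mul_le_mul_left
      (by linarith [two_mul_card_edgesWithin_le_of_copy_hypercube φ S]) card_pos
  rw [Real.le_logb_iff_rpow_le one_lt_two card_pos, Real.rpow_natCast] at d_le_log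
  exact_mod_cast d_le_log

end Isoperimetry

section DepthFirstSearch

variable {V : Type*} {G : SimpleGraph V} {W X : Finset V} {u v : V}

/-- A state of a depth-first search of the subgraph of `G` induced on `W`: `X` is the set of
unvisited vertices and the support of the walk `p` is the stack, with its top first. -/
structure IsSearchState (W X : Finset V) (p : G.Walk u v) : Prop where
  isPath : p.IsPath
  mem_of_mem_support : ∀ y ∈ p.support, y ∈ W
  subset : X ⊆ W
  notMem_of_mem_support : ∀ y ∈ p.support, y ∉ X
  mem_or_mem_support_of_adj : ∀ x ∈ X, ∀ y ∈ W, G.Adj x y → y ∈ X ∨ y ∈ p.support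

namespace IsSearchState

theorem nil [DecidableEq V] {x : V} (hX : X ⊆ W) (hx : x ∈ X)
    (hclosed : ∀ z ∈ X, ∀ y ∈ W, G.Adj z y → y ∈ X) :
    IsSearchState W (X.erase x) (Walk.nil : G.Walk x x) where
  isPath := .nil
  mem_of_mem_support := by simpa using hX hx
  subset := (erase_subset x X).trans hX
  notMem_of_mem_support := by simp
  mem_or_mem_support_of_adj z hz y hy hzy := by
    have := hclosed z (mem_of_mem_erase hz) y hy hzy
    grind [Walk.support_nil]

theorem cons [DecidableEq V] {p : G.Walk u v} (h : IsSearchState W X p) {x : V} (hx : x ∈ X)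
    (hxu : G.Adj x u) : IsSearchState W (X.erase x) (p.cons hxu) where
  isPath := h.isPath.cons fun hxp ↦ h.notMem_of_mem_support x hxp hx
  mem_of_mem_support := by
    simpa [h.subset hx] using h.mem_of_mem_support
  subset := (erase_subset x X).trans h.subset
  notMem_of_mem_support := by
    simpa using fun y hy _ ↦ h.notMem_of_mem_support y hy
  mem_or_mem_support_of_adj z hz y hy hzy := by
    have := h.mem_or_mem_support_of_adj z (mem_of_mem_erase hz) y hy hzy
    grind [Walk.support_cons]

theorem mem_or_mem_support_tail_of_adj {p : G.Walk u v} (h : IsSearchState W X p)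
    (hu : ∀ x ∈ X, ¬G.Adj x u) {x y : V} (hx : x ∈ X) (hy : y ∈ W) (hxy : G.Adj x y) :
    y ∈ X ∨ y ∈ p.support.tail := by
  refine (h.mem_or_mem_support_of_adj x hx y hy hxy).imp_right fun hyp ↦ ?_
  rw [← p.cons_tail_support, List.mem_cons] at hyp
  exact hyp.resolve_left fun hyu ↦ hu x hx (hyu ▸ hxy)

theorem of_cons {w : V} {huw : G.Adj u w} {p : G.Walk w v}
    (h : IsSearchState W X (p.cons huw)) (hu : ∀ x ∈ X, ¬G.Adj x u) : IsSearchState W X p where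
  isPath := h.isPath.of_cons
  mem_of_mem_support y hy := h.mem_of_mem_support y (List.mem_cons_of_mem u hy)
  subset := h.subset
  notMem_of_mem_support y hy := h.notMem_of_mem_support y (List.mem_cons_of_mem u hy)
  mem_or_mem_support_of_adj _ hx _ hy hxy := h.mem_or_mem_support_tail_of_adj hu hx hy hxy

theorem exists_forall_not_adj {p : G.Walk u v} (h : IsSearchState W X p) :
    ∃ (X' : Finset V) (u' : V) (p' : G.Walk u' v), IsSearchState W X' p' ∧
      (∀ x ∈ X', ¬G.Adj x u') ∧ #X' + p'.length = #X + p.length := by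
  classical
  induction X using Finset.strongInduction generalizing u with | _ X ih
  by_cases hu : ∀ x ∈ X, ¬G.Adj x u
  · exact ⟨X, u, p, h, hu, rfl⟩
  · push Not at hu
    obtain ⟨x, hx, hxu⟩ := hu
    obtain ⟨X', u', p', h', hu', hcard⟩ := ih _ (erase_ssubset hx) (h.cons hx hxu)
    refine ⟨X', u', p', h', hu', hcard.trans ?_⟩
    rw [Walk.length_cons, ← card_erase_add_one hx]
    ring

theorem exists_card_add_length_eq {m : ℕ} (hm : m < #W) :
    ∃ (X : Finset V) (u v : V) (p : G.Walk u v), IsSearchState W X p ∧ #X + p.length = m := by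
  classical
  obtain ⟨k, hk⟩ := Nat.exists_eq_add_of_lt hm
  induction k generalizing m with
  | zero =>
    obtain ⟨w, hw⟩ := card_pos.1 (m.zero_le.trans_lt hm)
    refine ⟨_, w, w, _, nil Subset.rfl hw fun _ _ _ hy _ ↦ hy, ?_⟩
    simp [card_erase_of_mem hw, hk]
  | succ k ih =>
    obtain ⟨X₀, u₀, v, p₀, h₀, hcard₀⟩ := ih (m := m + 1) (by omega) (by omega)
    obtain ⟨X, u, p, h, hu, hcard⟩ := h₀.exists_forall_not_adj
    rw [hcard₀] at hcard
    cases p with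
    | nil =>
      rw [Walk.length_nil, add_zero] at hcard
      obtain ⟨x, hx⟩ := card_pos.1 (by omega : 0 < #X)
      refine ⟨_, x, x, _, nil h.subset hx fun z hz y hy hzy ↦ ?_, ?_⟩
      · simpa using h.mem_or_mem_support_tail_of_adj hu hz hy hzy
      · simp [card_erase_of_mem hx, hcard]
    | cons huw q => exact ⟨X, _, v, q, h.of_cons hu, by simpa [← add_assoc] using hcard⟩

theorem card_edgesWithin_add_le [DecidableEq V] {p : G.Walk u v} (h : IsSearchState W X p)
    (hu : ∀ x ∈ X, ¬G.Adj x u) :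
    #(edgesWithin G W) + (p.length - 1) ≤
      #(edgesWithin G (W \ X)) + #(edgesWithin G (X ∪ p.support.tail.toFinset)) := by
  set A := p.support.tail.toFinset
  have hAW : A ⊆ W := fun y hy ↦
    h.mem_of_mem_support y (List.mem_of_mem_tail (List.mem_toFinset.1 hy))
  have hAX : Disjoint A X := disjoint_left.2 fun y hy ↦
    h.notMem_of_mem_support y (List.mem_of_mem_tail (List.mem_toFinset.1 hy))
  have union_eq : (W \ X) ∪ (X ∪ A) = W := by
    rw [← union_assoc, sdiff_union_of_subset h.subset, union_eq_left.2 hAW]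
  have inter_eq : (W \ X) ∩ (X ∪ A) = A := by
    rw [inter_union_distrib_left, sdiff_inter_self, empty_union, inter_eq_right, subset_sdiff]
    exact ⟨hAW, hAX⟩
  have not_adj : ∀ y ∈ (W \ X) \ (X ∪ A), ∀ x ∈ (X ∪ A) \ (W \ X), ¬G.Adj y x := by
    intro y hy x hx hyx
    have hxX : x ∈ X := by grind
    have := h.mem_or_mem_support_tail_of_adj hu hxX (by grind : y ∈ W) hyx.symm
    grind [List.mem_toFinset]
  have path_edges : p.length - 1 ≤ #(edgesWithin G A) :=
    length_sub_one_le_card_edgesWithin_support_tail h.isPath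
  have submodular := card_edgesWithin_union_add_inter_le not_adj
  rw [union_eq, inter_eq] at submodular
  omega

theorem card_union_support_tail [DecidableEq V] {p : G.Walk u v} (h : IsSearchState W X p) :
    #(X ∪ p.support.tail.toFinset) = #X + p.length := by
  rw [card_union_of_disjoint, List.toFinset_card_of_nodup h.isPath.support_nodup.tail]
  · simp
  · exact disjoint_right.2 fun y hy ↦
      h.notMem_of_mem_support y (List.mem_of_mem_tail (List.mem_toFinset.1 hy))

end IsSearchState

end DepthFirstSearch

theorem sq_le_two_pow {k : ℕ} (hk : 4 ≤ k) : k ^ 2 ≤ 2 ^ k := by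
  induction k, hk using Nat.le_induction with
  | base => norm_num
  | succ k hk ih =>
    rw [pow_succ 2 k]
    nlinarith

theorem mul_le_two_pow_add_of_sq_lt {a k : ℕ} (h : (a + 1) ^ 2 < 2 ^ (k + 1)) :
    (k + 1) * a ≤ 2 ^ k + 2 * (a - 1) := by
  obtain _ | b := a
  · simp
  rw [Nat.add_sub_cancel]
  obtain hk | hk := Nat.lt_or_ge k 5
  · have : b < 4 := by
      have : 2 ^ (k + 1) ≤ 2 ^ 5 := Nat.pow_le_pow_right two_pos hk
      nlinarith
    interval_cases k <;> interval_cases b <;> omega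
  · obtain ⟨j, rfl⟩ : ∃ j, k = j + 1 := ⟨k - 1, by omega⟩
    have sq_lt : (j * (b + 2)) ^ 2 < (2 ^ (j + 1)) ^ 2 := by
      calc (j * (b + 2)) ^ 2
          = j ^ 2 * (b + 1 + 1) ^ 2 := by ring
        _ < 2 ^ j * 2 ^ (j + 1 + 1) :=
          Nat.mul_lt_mul_of_le_of_lt (sq_le_two_pow (by omega)) h (by positivity)
        _ = (2 ^ (j + 1)) ^ 2 := by ring
    have := lt_of_pow_lt_pow_left₀ 2 (by positivity) sq_lt
    linarith

section Main

variable {V : Type*} {G : SimpleGraph V} {n d : ℕ}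

theorem exists_ssubset_mul_card_le (φ : Copy G (hypercube n)) {W : Finset V} (hW : W.Nonempty)
    (hdense : d * #W ≤ 2 * #(edgesWithin G W))
    (hshort : ∀ (u v : V) (p : G.Walk u v), p.IsPath → (p.length + 1) ^ 2 < 2 ^ d) :
    ∃ W' ⊂ W, W'.Nonempty ∧ d * #W' ≤ 2 * #(edgesWithin G W') := by
  classical
  obtain _ | k := d
  · obtain ⟨w, -⟩ := hW
    simpa using hshort w w .nil .nil
  have two_pow_lt : 2 ^ k < #W :=
    (Nat.pow_lt_pow_right one_lt_two k.lt_succ_self).trans_le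
      (two_pow_le_card_of_mul_card_le φ hW hdense)
  obtain ⟨X₀, u₀, v, p₀, h₀, hcard₀⟩ :=
    IsSearchState.exists_card_add_length_eq (G := G) two_pow_lt
  obtain ⟨X, u, p, h, hu, hcard⟩ := h₀.exists_forall_not_adj
  rw [hcard₀] at hcard
  have hlen := hshort u v p h.isPath
  have length_lt : p.length < 2 ^ k := by
    have := pow_succ 2 k
    nlinarith
  have X_nonempty : X.Nonempty := card_pos.1 (by omega)
  have edges_removed := h.card_edgesWithin_add_le hu
  have isoperimetry := two_mul_card_edgesWithin_le_of_card_eq_two_pow φ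
    (h.card_union_support_tail.trans hcard)
  have arith := mul_le_two_pow_add_of_sq_lt hlen
  have card_W : #(W \ X) + #X = #W := card_sdiff_add_card_eq_card h.subset
  refine ⟨W \ X, sdiff_ssubset h.subset X_nonempty, ⟨u, mem_sdiff.2 ⟨?_, ?_⟩⟩, ?_⟩
  · exact h.mem_of_mem_support u p.start_mem_support
  · exact h.notMem_of_mem_support u p.start_mem_support
  · have : (k + 1) * #X + (k + 1) * p.length = 2 ^ k * k + 2 ^ k := by
      rw [← mul_add, hcard]
      ring
    rw [← card_W, mul_add] at hdense
    omega

theorem exists_isPath_two_pow_le_sq [Nonempty V] (φ : Copy G (hypercube n))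
    (hdense : d * Nat.card V ≤ 2 * G.edgeSet.ncard) :
    ∃ (u v : V) (p : G.Walk u v), p.IsPath ∧ 2 ^ d ≤ (p.length + 1) ^ 2 := by
  have := Finite.of_injective φ φ.injective
  have := Fintype.ofFinite V
  by_contra! hshort
  have univ_dense : d * #(univ : Finset V) ≤ 2 * #(edgesWithin G univ) := by
    rwa [card_univ, ← Nat.card_eq_fintype_card, ← Set.ncard_coe_finset, coe_edgesWithin_univ]
  obtain ⟨W, ⟨hW, hWdense⟩, hmin⟩ := exists_minimal_of_wellFoundedLT
    (fun W : Finset V ↦ W.Nonempty ∧ d * #W ≤ 2 * #(edgesWithin G W))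
    ⟨univ, univ_nonempty, univ_dense⟩
  obtain ⟨W', hlt, hW'⟩ := exists_ssubset_mul_card_le φ hW hWdense hshort
  exact hlt.not_subset (hmin hW' hlt.subset)

end Main

/-- Every subgraph `G` of `Q_n` with average degree at least `d`
(i.e. `2|E(G)| ≥ d·|V(G)|`) contains a path of length at least `2^(d/2) - 1`. -/
theorem hypercube_avgDegree_long_path (n d : ℕ) (G : (hypercube n).Subgraph)
    (hne : G.verts.Nonempty)
    (havg : d * G.verts.ncard ≤ 2 * G.edgeSet.ncard) :
    ∃ (u v : G.verts) (p : G.coe.Walk u v), p.IsPath ∧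
      (2 : ℝ) ^ ((d : ℝ) / 2) - 1 ≤ (p.length : ℝ) := by
  have := hne.to_subtype
  have card_edges : G.coe.edgeSet.ncard = G.edgeSet.ncard := by
    rw [← G.image_coe_edgeSet_coe,
      Set.ncard_image_of_injective _ (Sym2.map.injective Subtype.val_injective)]
  obtain ⟨u, v, p, hp, hlen⟩ := exists_isPath_two_pow_le_sq (d := d) G.coeCopy
    (by rwa [Nat.card_coe_set_eq, card_edges])
  refine ⟨u, v, p, hp, ?_⟩
  have hlen' : (2 : ℝ) ^ d ≤ (p.length + 1) ^ 2 := mod_cast hlen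
  rw [sub_le_iff_le_add, Real.rpow_div_two_eq_sqrt _ zero_le_two, Real.rpow_natCast]
  refine (sq_le_sq₀ (by positivity) (by positivity)).1 ?_
  rwa [← pow_mul, mul_comm, pow_mul, Real.sq_sqrt zero_le_two]
end

section
/- Let G be a 2-connected subgraph of Q_n and let a, b be distinct vertices of G such that every vertex z of G other than a and b has degree at least d in G. Then G contains a path from a to b of length at least 2^d - 2. -/
/-- A graph is 2-connected if it has at least 3 vertices and remains connected after
deleting any single vertex. -/
def TwoConnected {V : Type*} (H : SimpleGraph V) : Prop :=
  (∃ x y z : V, x ≠ y ∧ x ≠ z ∧ y ≠ z) ∧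
  ∀ v : V, ((⊤ : H.Subgraph).deleteVerts {v}).coe.Connected

/-!
Only two properties of the cube matter: it is bipartite, and any two of its vertices are separated
by a (coordinate) cut whose edges form a matching. For the sake of an induction on `d` and on the
number of vertices, one more vertex `z` besides `a` and `b` is allowed to have small degree.

Split the graph along a matching cut into connected parts `A ∋ a` and `B ∋ b`; degrees within the
parts are at least `e = d - 1`. By induction an end block of `A` with cut vertex `u` contains paths
of length `2 ^ e - 2` from `u` to its other vertices, and likewise for `B`.

* If an edge joins an end block of `A` to one of `B` away from the cut vertices, the two paths and
  this edge have total length `2 * (2 ^ e - 2) + 1`, one less than required. The missing edge comes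
  from parity, or from a cut vertex different from `a`, `b`; failing that, the end block of `B`
  keeps degrees at least `e` when its cut vertex is deleted, so its path can be extended by an edge.
* Otherwise the end block of `B` is joined outside `B` only to the chain of blocks from `a` to `u`.
  If only one vertex of the chain is involved, the end block together with that vertex keeps degrees
  `d` and induction on the number of vertices applies. If there are two, disjoint paths in the chain
  allow a detour through the end block of `B` on the way from `a` to the end block of `A`.

The low degree of `z` survives the splitting unless `z` becomes a leaf of `A`; then `z` has degree
two and is either deleted or put on the path.
-/

namespace CubePath

section VertexSets

variable {V : Type*} {G : SimpleGraph V} {S T : Finset V} {a b u v w x y z : V} {k m : ℕ}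

/-! ### Reachability and connectedness inside a finite vertex set -/

/-- `y` can be reached from `x` in the subgraph of `G` induced on `S`. Working with walks of `G`
that stay in `S` avoids coercions to induced subgraphs as `S` varies. -/
def ReachableIn (G : SimpleGraph V) (S : Finset V) (x y : V) : Prop :=
  ∃ p : G.Walk x y, ∀ v ∈ p.support, v ∈ S

theorem ReachableIn.refl (h : x ∈ S) : ReachableIn G S x x :=
  ⟨.nil, by simpa using h⟩

theorem ReachableIn.left_mem (h : ReachableIn G S x y) : x ∈ S :=
  h.elim fun p hp => hp x p.start_mem_support

theorem ReachableIn.right_mem (h : ReachableIn G S x y) : y ∈ S :=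
  h.elim fun p hp => hp y p.end_mem_support

theorem ReachableIn.symm (h : ReachableIn G S x y) : ReachableIn G S y x :=
  h.elim fun p hp => ⟨p.reverse, by simpa using hp⟩

theorem ReachableIn.trans (h : ReachableIn G S x y) (h' : ReachableIn G S y z) :
    ReachableIn G S x z := by
  obtain ⟨p, hp⟩ := h
  obtain ⟨q, hq⟩ := h'
  exact ⟨p.append q, fun v hv => ((p.mem_support_append_iff q).1 hv).elim (hp v) (hq v)⟩

theorem ReachableIn.mono (h : ReachableIn G S x y) (hST : S ⊆ T) : ReachableIn G T x y :=
  h.elim fun p hp => ⟨p, fun v hv => hST (hp v hv)⟩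

theorem reachableIn_of_adj (h : G.Adj x y) (hx : x ∈ S) (hy : y ∈ S) : ReachableIn G S x y :=
  ⟨h.toWalk, by simp [hx, hy]⟩

theorem ReachableIn.tail (h : ReachableIn G S x y) (hyz : G.Adj y z) (hz : z ∈ S) :
    ReachableIn G S x z :=
  h.trans (reachableIn_of_adj hyz h.right_mem hz)

theorem ReachableIn.head (hxy : G.Adj x y) (hx : x ∈ S) (h : ReachableIn G S y z) :
    ReachableIn G S x z :=
  (reachableIn_of_adj hxy hx h.left_mem).trans h

theorem ReachableIn.induction_on {P : V → Prop} (h : ReachableIn G S x y)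
    (step : ∀ u ∈ S, ∀ v ∈ S, G.Adj u v → P u → P v) (hx : P x) : P y := by
  obtain ⟨p, hp⟩ := h
  induction p with
  | nil => exact hx
  | cons hadj p ih =>
    simp only [SimpleGraph.Walk.support_cons, List.mem_cons, forall_eq_or_imp] at hp
    exact ih (step _ hp.1 _ (hp.2 _ p.start_mem_support) hadj hx) hp.2

theorem ReachableIn.exists_exit [DecidableEq V] (h : ReachableIn G S x y) (hx : x ∈ T)
    (hy : y ∉ T) : ∃ u v, u ∈ T ∧ ReachableIn G (S ∩ T) x u ∧ G.Adj u v ∧ v ∈ S ∧ v ∉ T := by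
  by_contra! hstay
  refine hy (h.induction_on (P := fun w => w ∈ T ∧ ReachableIn G (S ∩ T) x w) ?_
    ⟨hx, .refl (Finset.mem_inter.2 ⟨h.left_mem, hx⟩)⟩).1
  intro u _ v hv huv ⟨hu, hreach⟩
  have hvT := hstay u v hu hreach huv hv
  exact ⟨hvT, hreach.tail huv (Finset.mem_inter.2 ⟨hv, hvT⟩)⟩

/-- `S` induces a connected (possibly empty) subgraph of `G`. -/
def ConnectedOn (G : SimpleGraph V) (S : Finset V) : Prop :=
  ∀ x ∈ S, ∀ y ∈ S, ReachableIn G S x y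

/-- No single vertex disconnects the subgraph of `G` induced on `S`. Together with a lower bound
on the size of `S` this is 2-connectedness. -/
def BiconnectedOn [DecidableEq V] (G : SimpleGraph V) (S : Finset V) : Prop :=
  ∀ v, ConnectedOn G (S.erase v)

theorem connectedOn_of_root (h : ∀ x ∈ S, ReachableIn G S x y) : ConnectedOn G S :=
  fun x hx z hz => (h x hx).trans (h z hz).symm

open Classical in
/-- The connected component of `v` in the subgraph of `G` induced on `S`, empty if `v ∉ S`. -/
noncomputable def componentIn (G : SimpleGraph V) (S : Finset V) (v : V) : Finset V :=
  S.filter (ReachableIn G S v)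

theorem mem_componentIn : w ∈ componentIn G S v ↔ ReachableIn G S v w := by
  simp only [componentIn, Finset.mem_filter, and_iff_right_iff_imp]
  exact ReachableIn.right_mem

theorem componentIn_subset : componentIn G S v ⊆ S :=
  fun _ hw => (mem_componentIn.1 hw).right_mem

theorem componentIn_connectedOn : ConnectedOn G (componentIn G S v) := by
  refine connectedOn_of_root (y := v) fun x hx => ReachableIn.symm ?_
  have hvx := mem_componentIn.1 hx
  refine hvx.induction_on (P := ReachableIn G (componentIn G S v) v) ?_
    (.refl (mem_componentIn.2 (.refl hvx.left_mem)))
  intro u _ w hw huw hvu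
  exact hvu.tail huw (mem_componentIn.2 ((mem_componentIn.1 hvu.right_mem).tail huw hw))

/-! ### Degrees into a finite vertex set -/

open Classical in
/-- The number of neighbours of `v` in `S`; the vertex `v` itself need not lie in `S`. -/
noncomputable def degreeIn (G : SimpleGraph V) (S : Finset V) (v : V) : ℕ :=
  (S.filter (G.Adj v)).card

theorem degreeIn_le_degreeIn (h : ∀ w ∈ T, G.Adj v w → w ∈ S) :
    degreeIn G T v ≤ degreeIn G S v := by
  classical
  refine Finset.card_le_card fun w hw => ?_
  rw [Finset.mem_filter] at hw ⊢
  exact ⟨h w hw.1 hw.2, hw.2⟩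

theorem degreeIn_le_degreeIn_add_one
    (h : ∀ w ∈ T, ∀ w' ∈ T, G.Adj v w → G.Adj v w' → w ∉ S → w' ∉ S → w = w') :
    degreeIn G T v ≤ degreeIn G S v + 1 := by
  classical
  have hout : (T.filter (fun w => G.Adj v w ∧ w ∉ S)).card ≤ 1 := by
    rw [Finset.card_le_one]
    grind
  calc degreeIn G T v
      ≤ (S.filter (G.Adj v) ∪ T.filter (fun w => G.Adj v w ∧ w ∉ S)).card := by
        refine Finset.card_le_card fun w hw => ?_
        grind
    _ ≤ (S.filter (G.Adj v)).card + (T.filter (fun w => G.Adj v w ∧ w ∉ S)).card :=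
        Finset.card_union_le _ _
    _ ≤ degreeIn G S v + 1 := by unfold degreeIn; gcongr

theorem exists_adj_of_degreeIn_pos (h : 0 < degreeIn G S v) : ∃ w ∈ S, G.Adj v w := by
  classical
  obtain ⟨w, hw⟩ := Finset.card_pos.1 h
  exact ⟨w, Finset.mem_filter.1 hw⟩

theorem two_le_degreeIn_iff :
    2 ≤ degreeIn G S v ↔ ∃ w ∈ S, ∃ w' ∈ S, w ≠ w' ∧ G.Adj v w ∧ G.Adj v w' := by
  classical
  rw [degreeIn, Nat.succ_le_iff, Finset.one_lt_card]
  simp only [Finset.mem_filter]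
  grind

theorem degreeIn_le_two (h : ∀ w ∈ S, G.Adj v w → w = x ∨ w = y) : degreeIn G S v ≤ 2 := by
  classical
  refine (Finset.card_le_card (t := {x, y}) fun w hw => ?_).trans Finset.card_le_two
  grind

theorem degreeIn_le_degreeIn_erase_add_one [DecidableEq V] :
    degreeIn G S v ≤ degreeIn G (S.erase z) v + 1 :=
  degreeIn_le_degreeIn_add_one (by grind)

theorem degreeIn_le_degreeIn_erase [DecidableEq V] (h : ¬ G.Adj v z) :
    degreeIn G S v ≤ degreeIn G (S.erase z) v :=
  degreeIn_le_degreeIn (by grind)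

/-! ### Long paths inside a finite vertex set -/

/-- `G` has a path from `a` to `b` of length at least `k` all of whose vertices lie in `S`. -/
def LongPathIn (G : SimpleGraph V) (S : Finset V) (k : ℕ) (a b : V) : Prop :=
  ∃ p : G.Walk a b, p.IsPath ∧ (∀ v ∈ p.support, v ∈ S) ∧ k ≤ p.length

theorem LongPathIn.mono (h : LongPathIn G S k a b) (hST : S ⊆ T) (hmk : m ≤ k) :
    LongPathIn G T m a b := by
  obtain ⟨p, hp, hpS, hpk⟩ := h
  exact ⟨p, hp, fun v hv => hST (hpS v hv), hmk.trans hpk⟩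

theorem LongPathIn.symm (h : LongPathIn G S k a b) : LongPathIn G S k b a := by
  obtain ⟨p, hp, hpS, hpk⟩ := h
  exact ⟨p.reverse, hp.reverse, by simpa using hpS, by simpa using hpk⟩

theorem LongPathIn.refl (h : a ∈ S) : LongPathIn G S 0 a a :=
  ⟨.nil, .nil, by simpa using h, Nat.zero_le _⟩

theorem ReachableIn.longPathIn (h : ReachableIn G S a b) : LongPathIn G S 0 a b := by
  classical
  obtain ⟨p, hp⟩ := h
  exact ⟨p.bypass, p.bypass_isPath, fun v hv => hp v (p.support_bypass_subset_support hv),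
    Nat.zero_le _⟩

theorem LongPathIn.one_of_ne (h : LongPathIn G S k a b) (hab : a ≠ b) : LongPathIn G S 1 a b := by
  obtain ⟨p, hp, hpS, -⟩ := h
  exact ⟨p, hp, hpS, Nat.one_le_iff_ne_zero.2 fun h0 => hab (p.eq_of_length_eq_zero h0)⟩

theorem LongPathIn.join [DecidableEq V] (h : LongPathIn G S k a x) (hxy : G.Adj x y)
    (h' : LongPathIn G T m y b) (hST : Disjoint S T) :
    LongPathIn G (S ∪ T) (k + m + 1) a b := by
  obtain ⟨p, hp, hpS, hpk⟩ := h
  obtain ⟨q, hq, hqT, hqm⟩ := h'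
  have hdisj : p.support.Disjoint q.support := fun v hvp hvq =>
    Finset.disjoint_left.1 hST (hpS v hvp) (hqT v hvq)
  refine ⟨p.append (.cons hxy q), ?_, fun v hv => ?_, ?_⟩
  · rw [SimpleGraph.Walk.isPath_def, SimpleGraph.Walk.support_append,
      SimpleGraph.Walk.support_cons, List.tail_cons, List.nodup_append']
    exact ⟨hp.support_nodup, hq.support_nodup, hdisj⟩
  · rw [SimpleGraph.Walk.support_append, SimpleGraph.Walk.support_cons, List.tail_cons,
      List.mem_append] at hv
    exact Finset.mem_union.2 (hv.imp (hpS v) (hqT v))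
  · rw [SimpleGraph.Walk.length_append, SimpleGraph.Walk.length_cons]
    lia

theorem LongPathIn.glue [DecidableEq V] (h : LongPathIn G S k a u) (h' : LongPathIn G T m u b)
    (hST : ∀ v ∈ S, v ∈ T → v = u) : LongPathIn G (S ∪ T) (k + m) a b := by
  obtain ⟨q, hq, hqT, hqm⟩ := h'
  cases q with
  | nil => exact h.mono Finset.subset_union_left (Nat.add_le_add_left hqm k)
  | @cons _ y _ huy q =>
    obtain ⟨hqpath, huq⟩ := (SimpleGraph.Walk.cons_isPath_iff huy q).1 hq
    have htail : LongPathIn G (T.erase u) q.length y b :=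
      ⟨q, hqpath, fun v hv => Finset.mem_erase.2
        ⟨fun hvu => huq (hvu ▸ hv), hqT v (List.mem_cons_of_mem _ hv)⟩, le_rfl⟩
    refine (h.join huy htail ?_).mono (by gcongr; exact Finset.erase_subset u T) ?_
    · rw [Finset.disjoint_left]
      exact fun v hvS hvT => (Finset.mem_erase.1 hvT).1 (hST v hvS (Finset.mem_erase.1 hvT).2)
    · rw [SimpleGraph.Walk.length_cons] at hqm
      lia

theorem LongPathIn.adj_of_subset_pair [DecidableEq V] (h : LongPathIn G S k a b)
    (hS : S ⊆ {a, b}) (hab : a ≠ b) : G.Adj a b := by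
  obtain ⟨p, hp, hpS, -⟩ := h
  cases p with
  | nil => exact absurd rfl hab
  | @cons _ y _ hay q =>
    have hy := hS (hpS y (List.mem_cons_of_mem _ q.start_mem_support))
    rcases Finset.mem_insert.1 hy with rfl | hy
    · exact absurd hay G.irrefl
    · exact Finset.mem_singleton.1 hy ▸ hay

theorem LongPathIn.succ_of_color_eq (c : G.Coloring Bool) (h : LongPathIn G S k a b)
    (hab : c a = c b) (hk : Odd k) : LongPathIn G S (k + 1) a b := by
  obtain ⟨p, hp, hpS, hpk⟩ := h
  have heven : Even p.length := (c.even_length_iff_congr p).2 (by rw [hab])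
  exact ⟨p, hp, hpS, by grind⟩

theorem LongPathIn.succ_of_color_ne (c : G.Coloring Bool) (h : LongPathIn G S k a b)
    (hab : c a ≠ c b) (hk : Even k) : LongPathIn G S (k + 1) a b := by
  obtain ⟨p, hp, hpS, hpk⟩ := h
  have hodd : ¬ Even p.length := fun heven =>
    hab (Bool.eq_iff_iff.2 ((c.even_length_iff_congr p).1 heven))
  exact ⟨p, hp, hpS, by grind⟩

end VertexSets

section MatchingCuts

/-! ### Matching cuts -/

variable {V : Type*} {G : SimpleGraph V} {S A B C : Finset V} {a b v : V}

/-- Every vertex of `X` has at most one neighbour in `Y`. -/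
def MatchedInto (G : SimpleGraph V) (X Y : Finset V) : Prop :=
  ∀ v ∈ X, ∀ w ∈ Y, ∀ w' ∈ Y, G.Adj v w → G.Adj v w' → w = w'

/-- Any two vertices are separated by a cut whose edges form a matching; in the hypercube the
coordinate cuts have this property. -/
def HasMatchingCuts (G : SimpleGraph V) : Prop :=
  ∀ a b : V, a ≠ b → ∃ s : V → Bool, s a ≠ s b ∧
    ∀ v w w', G.Adj v w → G.Adj v w' → s w ≠ s v → s w' ≠ s v → w = w'

theorem HasMatchingCuts.comap {W : Type*} {H : SimpleGraph W} (h : HasMatchingCuts G) (f : H →g G)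
    (hf : Function.Injective f) : HasMatchingCuts H := by
  intro a b hab
  obtain ⟨s, hs, hmatch⟩ := h (f a) (f b) (hf.ne hab)
  exact ⟨s ∘ f, hs, fun v w w' hvw hvw' hw hw' =>
    hf (hmatch _ _ _ (f.map_adj hvw) (f.map_adj hvw') hw hw')⟩

theorem HasMatchingCuts.eq_of_three_common_neighbors (hG : HasMatchingCuts G) {p q r t t' : V}
    (hpq : p ≠ q) (hpr : p ≠ r) (hqr : q ≠ r) (htp : G.Adj t p) (htq : G.Adj t q)
    (htr : G.Adj t r) (htp' : G.Adj t' p) (htq' : G.Adj t' q) (htr' : G.Adj t' r) : t = t' := by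
  by_contra hne
  obtain ⟨s, hs, hmatch⟩ := hG t t' hne
  have eq_of_same_side : ∀ x y, G.Adj t x → G.Adj t y → G.Adj t' x → G.Adj t' y →
      s x = s y → x = y := by
    intro x y htx hty htx' hty' hxy
    by_cases hxt : s x = s t
    · exact hmatch t' x y htx' hty' (hxt ▸ hs) (hxy ▸ hxt ▸ hs)
    · exact hmatch t x y htx hty hxt (hxy ▸ hxt)
  have hsides : s p = s q ∨ s p = s r ∨ s q = s r := by
    cases s p <;> cases s q <;> cases s r <;> simp
  obtain h | h | h := hsides
  · exact hpq (eq_of_same_side p q htp htq htp' htq' h)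
  · exact hpr (eq_of_same_side p r htp htr htp' htr' h)
  · exact hqr (eq_of_same_side q r htq htr htq' htr' h)

variable [DecidableEq V]

/-- `S` is the disjoint union of connected sets `A ∋ a` and `B ∋ b`, and the edges of `G` between
`A` and `B` form a matching. -/
structure IsMatchedPartition (G : SimpleGraph V) (S A B : Finset V) (a b : V) : Prop where
  disjoint : Disjoint A B
  union_eq : A ∪ B = S
  connectedOn_left : ConnectedOn G A
  connectedOn_right : ConnectedOn G B
  left_mem : a ∈ A
  right_mem : b ∈ B
  matched_left : MatchedInto G A B
  matched_right : MatchedInto G B A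

theorem IsMatchedPartition.symm (h : IsMatchedPartition G S A B a b) :
    IsMatchedPartition G S B A b a :=
  ⟨h.disjoint.symm, by rw [Finset.union_comm, h.union_eq], h.connectedOn_right,
    h.connectedOn_left, h.right_mem, h.left_mem, h.matched_right, h.matched_left⟩

theorem IsMatchedPartition.degreeIn_le_left_add_one (h : IsMatchedPartition G S A B a b)
    (hv : v ∈ A) : degreeIn G S v ≤ degreeIn G A v + 1 := by
  have hunion := h.union_eq
  exact degreeIn_le_degreeIn_add_one fun w hw w' hw' hvw hvw' hwA hwA' =>
    h.matched_left v hv w (by grind) w' (by grind) hvw hvw'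

theorem connectedOn_sdiff_componentIn (hS : ConnectedOn G S) (hC : ConnectedOn G C)
    (hCS : C ⊆ S) (ha : a ∈ C) : ConnectedOn G (S \ componentIn G (S \ C) b) := by
  set B := componentIn G (S \ C) b
  have hBC : ∀ v ∈ B, v ∉ C := fun v hv => (Finset.mem_sdiff.1 (componentIn_subset hv)).2
  have hCA : C ⊆ S \ B := fun v hv => Finset.mem_sdiff.2 ⟨hCS hv, fun hvB => hBC v hvB hv⟩
  refine connectedOn_of_root (y := a) fun x hx => ?_
  by_cases hxC : x ∈ C
  · exact (hC x hxC a ha).mono hCA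
  rw [Finset.mem_sdiff] at hx
  obtain ⟨p, q, -, hxp, hpq, hq, hqC⟩ := (hS x hx.1 a (hCS ha)).exists_exit (T := S \ C)
    (by simp [hx.1, hxC]) (by simp [ha])
  have hqC : q ∈ C := by simpa [hq] using hqC
  have hxp : ReachableIn G (S \ C) x p := hxp.mono Finset.inter_subset_right
  have hcomp : componentIn G (S \ C) x ⊆ S \ B := fun y hy => by
    have hxy := mem_componentIn.1 hy
    refine Finset.mem_sdiff.2 ⟨(Finset.mem_sdiff.1 hxy.right_mem).1, fun hyB => hx.2 ?_⟩
    exact mem_componentIn.2 ((mem_componentIn.1 hyB).trans hxy.symm)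
  have hxp' : ReachableIn G (S \ B) x p :=
    (componentIn_connectedOn x (mem_componentIn.2 (.refl hxp.left_mem)) p
      (mem_componentIn.2 hxp)).mono hcomp
  exact (hxp'.tail hpq (hCA hqC)).trans ((hC q hqC a ha).mono hCA)

theorem HasMatchingCuts.exists_isMatchedPartition (hG : HasMatchingCuts G) (hS : ConnectedOn G S)
    (ha : a ∈ S) (hb : b ∈ S) (hab : a ≠ b) : ∃ A B, IsMatchedPartition G S A B a b := by
  obtain ⟨s, hs, hmatch⟩ := hG a b hab
  set C := componentIn G (S.filter (fun v => s v = s a)) a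
  have hC : ∀ v ∈ C, v ∈ S ∧ s v = s a := fun v hv => by
    simpa using componentIn_subset hv
  have haC : a ∈ C := mem_componentIn.2 (.refl (by simp [ha]))
  set B := componentIn G (S \ C) b
  have hB : ∀ v ∈ B, v ∈ S ∧ v ∉ C := fun v hv => Finset.mem_sdiff.1 (componentIn_subset hv)
  have hbB : b ∈ B := mem_componentIn.2 (.refl (by grind))
  have hcross : ∀ v ∈ B, ∀ w ∈ S \ B, G.Adj v w → s w = s a ∧ s v ≠ s a := by
    intro v hv w hw hvw
    rw [Finset.mem_sdiff] at hw
    have hwC : w ∈ C := by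
      by_contra hwC
      exact hw.2 (mem_componentIn.2 ((mem_componentIn.1 hv).tail hvw (by grind)))
    refine ⟨(hC w hwC).2, fun hva => (hB v hv).2 ?_⟩
    exact mem_componentIn.2 ((mem_componentIn.1 hwC).tail hvw.symm (by grind))
  refine ⟨S \ B, B, Finset.sdiff_disjoint, Finset.sdiff_union_of_subset fun v hv => (hB v hv).1,
    connectedOn_sdiff_componentIn hS componentIn_connectedOn (fun v hv => (hC v hv).1) haC,
    componentIn_connectedOn, by grind, hbB, ?_, ?_⟩
  · intro v hv w hw w' hw' hvw hvw'
    exact hmatch v w w' hvw hvw' (by grind [hcross w hw v hv hvw.symm])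
      (by grind [hcross w' hw' v hv hvw'.symm])
  · intro v hv w hw w' hw' hvw hvw'
    exact hmatch v w w' hvw hvw' (by grind [hcross v hv w hw hvw])
      (by grind [hcross v hv w' hw' hvw'])

end MatchingCuts

section Lobes

/-! ### Lobes and end blocks -/

variable {V : Type*} {G : SimpleGraph V} {B W X : Finset V} {r s u v x y z : V}

/-- `W` is a union of components of `B` minus the cut vertex `u`, avoiding the root `r`. -/
structure IsLobe (G : SimpleGraph V) (B W : Finset V) (u r : V) : Prop where
  nonempty : W.Nonempty
  subset : W ⊆ B
  root_notMem : r ∉ W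
  cut_mem : u ∈ B
  cut_notMem : u ∉ W
  closed : ∀ w ∈ W, ∀ v ∈ B, G.Adj w v → v ∈ W ∨ v = u

/-- An inclusion-minimal lobe `W` with cut vertex `u`. Minimality forces `insert u W` to be an
end block of `B` (see `IsEndLobe.biconnectedOn`). -/
structure IsEndLobe (G : SimpleGraph V) (B W : Finset V) (u r : V) : Prop
    extends IsLobe G B W u r where
  minimal : ∀ W' u', W' ⊂ W → ¬ IsLobe G B W' u' r

theorem isLobe_singleton (hz : z ∈ B) (hzr : z ≠ r) (hy : y ∈ B) (hzy : G.Adj z y)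
    (hunique : ∀ w ∈ B, G.Adj z w → w = y) : IsLobe G B {z} y r where
  nonempty := Finset.singleton_nonempty z
  subset := Finset.singleton_subset_iff.2 hz
  root_notMem := Finset.notMem_singleton.2 hzr.symm
  cut_mem := hy
  cut_notMem := Finset.notMem_singleton.2 hzy.ne'
  closed _ hw v hv hwv := .inr (hunique v hv (Finset.mem_singleton.1 hw ▸ hwv))

theorem IsLobe.exists_adj_cut (h : IsLobe G B X u r) (hB : ConnectedOn G B) :
    ∃ w ∈ X, G.Adj w u := by
  classical
  obtain ⟨x, hx⟩ := h.nonempty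
  obtain ⟨p, q, hp, -, hpq, hq, hqX⟩ :=
    (hB x (h.subset hx) u h.cut_mem).exists_exit hx h.cut_notMem
  exact ⟨p, hp, (h.closed p hp q hq hpq).resolve_left hqX ▸ hpq⟩

theorem IsLobe.exists_endLobe (h : IsLobe G B X u r) :
    ∃ W v, W ⊆ X ∧ IsEndLobe G B W v r := by
  obtain ⟨W, ⟨hWX, v, hW⟩, hmin⟩ := wellFounded_lt.has_min
    {W : Finset V | W ⊆ X ∧ ∃ v, IsLobe G B W v r} ⟨X, subset_rfl, u, h⟩
  exact ⟨W, v, hWX, hW, fun W' v' hlt hW' => hmin W' ⟨hlt.subset.trans hWX, v', hW'⟩ hlt⟩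

theorem IsEndLobe.connectedOn (h : IsEndLobe G B W u r) : ConnectedOn G W := by
  intro x hx y hy
  by_contra hxy
  have hssub : componentIn G W x ⊂ W :=
    Finset.ssubset_iff_subset_ne.2 ⟨componentIn_subset, fun heq =>
      hxy (mem_componentIn.1 (heq.symm ▸ hy : y ∈ componentIn G W x))⟩
  refine h.minimal _ u hssub
    { nonempty := ⟨x, mem_componentIn.2 (.refl hx)⟩
      subset := componentIn_subset.trans h.subset
      root_notMem := fun hr => h.root_notMem (componentIn_subset hr)
      cut_mem := h.cut_mem
      cut_notMem := fun hu => h.cut_notMem (componentIn_subset hu)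
      closed := fun w hw v hv hwv => ?_ }
  exact (h.closed w (componentIn_subset hw) v hv hwv).imp_left fun hvW =>
    mem_componentIn.2 ((mem_componentIn.1 hw).tail hwv hvW)

variable [DecidableEq V]

theorem isLobe_componentIn (hs : s ∈ B) (hv : v ∈ B.erase s)
    (hr : ¬ ReachableIn G (B.erase s) v r) : IsLobe G B (componentIn G (B.erase s) v) s r where
  nonempty := ⟨v, mem_componentIn.2 (.refl hv)⟩
  subset := componentIn_subset.trans (Finset.erase_subset s B)
  root_notMem h := hr (mem_componentIn.1 h)
  cut_mem := hs
  cut_notMem h := Finset.notMem_erase s B (componentIn_subset h)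
  closed _ hw _ hx hwx := or_iff_not_imp_right.2 fun hxs =>
    mem_componentIn.2 ((mem_componentIn.1 hw).tail hwx (Finset.mem_erase.2 ⟨hxs, hx⟩))

theorem isLobe_erase (hr : r ∈ B) (hy : y ∈ B) (hyr : y ≠ r) : IsLobe G B (B.erase r) r r where
  nonempty := ⟨y, Finset.mem_erase.2 ⟨hyr, hy⟩⟩
  subset := Finset.erase_subset r B
  root_notMem := Finset.notMem_erase r B
  cut_mem := hr
  cut_notMem := Finset.notMem_erase r B
  closed _ _ _ hv _ := or_iff_not_imp_right.2 fun hvr => Finset.mem_erase.2 ⟨hvr, hv⟩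

theorem IsLobe.reachableIn_cut (h : IsLobe G B X u r) (hB : ConnectedOn G B) (hx : x ∈ X) :
    ReachableIn G (insert u X) x u := by
  obtain ⟨p, q, hp, hxp, hpq, hq, hqX⟩ :=
    (hB x (h.subset hx) u h.cut_mem).exists_exit hx h.cut_notMem
  obtain rfl := (h.closed p hp q hq hpq).resolve_left hqX
  exact (hxp.mono (Finset.inter_subset_right.trans (Finset.subset_insert q X))).tail hpq
    (Finset.mem_insert_self q X)

theorem IsLobe.reachableIn_sdiff_cut (h : IsLobe G B X u r) (hB : ConnectedOn G B)
    (hx : x ∈ B) (hxX : x ∉ X) : ReachableIn G (B \ X) x u := by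
  obtain ⟨y, hy⟩ := h.nonempty
  obtain ⟨p, q, hp, hxp, hpq, hq, hqX⟩ :=
    (hB x hx y (h.subset hy)).exists_exit (T := B \ X) (by simp [*]) (by simp [*])
  rw [Finset.mem_sdiff] at hp
  have hqX : q ∈ X := by simpa [hq] using hqX
  obtain rfl := (h.closed q hqX p hp.1 hpq.symm).resolve_left hp.2
  exact hxp.mono Finset.inter_subset_right

theorem IsLobe.connectedOn_sdiff (h : IsLobe G B X u r) (hB : ConnectedOn G B) :
    ConnectedOn G (B \ X) :=
  connectedOn_of_root fun _ hx =>
    h.reachableIn_sdiff_cut hB (Finset.mem_sdiff.1 hx).1 (Finset.mem_sdiff.1 hx).2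

theorem IsLobe.reachableIn_sdiff_insert (h : IsLobe G B X u r)
    (hxy : ReachableIn G (B.erase u) x y) (hx : x ∉ X) :
    ReachableIn G (B \ insert u X) x y := by
  have hxB := hxy.left_mem
  refine hxy.induction_on (P := ReachableIn G (B \ insert u X) x) ?_ (.refl (by grind))
  intro p _ q hq hpq hxp
  have hp := hxp.right_mem
  have hqX : q ∉ X := fun hqX => by have := h.closed q hqX p; grind [hpq.symm]
  exact hxp.tail hpq (by grind)

theorem IsLobe.sdiff (h : IsLobe G B X u r) (h' : IsLobe G B W u r) (hx : x ∈ X) (hxW : x ∉ W) :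
    IsLobe G B (X \ W) u r where
  nonempty := ⟨x, Finset.mem_sdiff.2 ⟨hx, hxW⟩⟩
  subset := Finset.sdiff_subset.trans h.subset
  root_notMem hr := h.root_notMem (Finset.mem_sdiff.1 hr).1
  cut_mem := h.cut_mem
  cut_notMem hu := h.cut_notMem (Finset.mem_sdiff.1 hu).1
  closed p hp q hq hpq := by
    have := h.closed p (Finset.mem_sdiff.1 hp).1 q hq hpq
    have := fun hqW => h'.closed q hqW p (h.subset (Finset.mem_sdiff.1 hp).1) hpq.symm
    grind [h.cut_notMem]

theorem IsLobe.componentIn_ssubset (h : IsLobe G B X u r) (hB : ConnectedOn G B) (hr : r ∈ B)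
    (hv : v ∈ X) (hy : y ∈ X) (hyr : ¬ ReachableIn G (B.erase v) y r) :
    componentIn G (B.erase v) y ⊂ X := by
  have hur : ReachableIn G (B.erase v) u r :=
    (h.reachableIn_sdiff_cut hB hr h.root_notMem).symm.mono (by grind)
  refine Finset.ssubset_iff_subset_ne.2 ⟨fun z hz => ?_, ?_⟩
  · have hyz := mem_componentIn.1 hz
    refine (hyz.induction_on (P := fun z => z ∈ X ∧ ReachableIn G (B.erase v) y z) ?_
      ⟨hy, .refl hyz.left_mem⟩).1
    intro p _ q hq hpq ⟨hp, hyp⟩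
    refine ⟨(h.closed p hp q (Finset.mem_of_mem_erase hq) hpq).resolve_right ?_, hyp.tail hpq hq⟩
    rintro rfl
    exact hyr ((hyp.tail hpq hq).trans hur)
  · rintro rfl
    exact Finset.notMem_erase v B (componentIn_subset hv)

theorem IsEndLobe.reachableIn_cut_erase (h : IsEndLobe G B W u r) (hB : ConnectedOn G B)
    (hs : s ≠ u) (hv : v ∈ W) (hvs : v ≠ s) : ReachableIn G ((insert u W).erase s) v u := by
  by_cases hsW : s ∈ W
  · by_contra hvu
    set D := componentIn G ((insert u W).erase s) v
    have hDW : D ⊆ W := fun z hz => by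
      have hz' := mem_componentIn.1 hz
      grind [hz'.right_mem]
    have hsD : s ∉ D := fun hsD => Finset.notMem_erase s _ (componentIn_subset hsD)
    refine h.minimal D s (Finset.ssubset_iff_subset_ne.2 ⟨hDW, fun heq => hsD (heq ▸ hsW)⟩)
      { nonempty := ⟨v, mem_componentIn.2 (.refl (by simp [hv, hvs]))⟩
        subset := hDW.trans h.subset
        root_notMem := fun hr => h.root_notMem (hDW hr)
        cut_mem := h.subset hsW
        cut_notMem := hsD
        closed := fun w hw x hx hwx => or_iff_not_imp_right.2 fun hxs => ?_ }
    have := h.closed w (hDW hw) x hx hwx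
    exact mem_componentIn.2 ((mem_componentIn.1 hw).tail hwx (by grind))
  · rw [Finset.erase_eq_of_notMem (by simp [hs, hsW])]
    exact h.reachableIn_cut hB hv

theorem IsEndLobe.biconnectedOn (h : IsEndLobe G B W u r) (hB : ConnectedOn G B) :
    BiconnectedOn G (insert u W) := by
  intro s
  by_cases hsu : s = u
  · rw [hsu, Finset.erase_insert h.cut_notMem]
    exact h.connectedOn
  refine connectedOn_of_root (y := u) fun v hv => ?_
  obtain rfl | hvu := eq_or_ne v u
  · exact .refl hv
  · exact h.reachableIn_cut_erase hB hsu (by grind) (by grind)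

theorem exists_endLobe_mem_or_reachableIn_root {Y : Set V} (hB : ConnectedOn G B) (hr : r ∈ B)
    (hYB : ∀ y ∈ Y, y ∈ B) (hY : Y.Nontrivial) :
    ∃ W v, IsEndLobe G B W v r ∧ ∃ y ∈ Y, y ∈ W ∨ ReachableIn G (B \ insert v W) y r := by
  obtain ⟨y₀, hy₀, hy₀r⟩ := hY.exists_ne r
  obtain ⟨X, ⟨u, hX, y₁, hy₁, hy₁X⟩, hmin⟩ := wellFounded_lt.has_min
    {X : Finset V | ∃ u, IsLobe G B X u r ∧ ∃ y ∈ Y, y ∈ X}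
    ⟨_, r, isLobe_erase hr (hYB _ hy₀) hy₀r, y₀, hy₀, by simp [hy₀r, hYB _ hy₀]⟩
  obtain ⟨W, v, hWX, hW⟩ := hX.exists_endLobe
  refine ⟨W, v, hW, ?_⟩
  by_contra! hno
  have hvX : v ∈ X := by
    obtain ⟨w, hw, hwv⟩ := hW.exists_adj_cut hB
    refine (hX.closed w (hWX hw) v hW.cut_mem hwv).resolve_right ?_
    rintro rfl
    exact hmin _ ⟨v, hX.sdiff hW.toIsLobe hy₁X (hno y₁ hy₁).1, y₁, hy₁,
      Finset.mem_sdiff.2 ⟨hy₁X, (hno y₁ hy₁).1⟩⟩ (Finset.sdiff_ssubset hWX hW.nonempty)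
  obtain ⟨y, hy, hyv⟩ := hY.exists_ne v
  have hyerase : y ∈ B.erase v := Finset.mem_erase.2 ⟨hyv, hYB y hy⟩
  have hyr : ¬ ReachableIn G (B.erase v) y r := fun hyr =>
    (hno y hy).2 (hW.reachableIn_sdiff_insert hyr (hno y hy).1)
  by_cases hyX : y ∈ X
  · exact hmin _ ⟨v, isLobe_componentIn hW.cut_mem hyerase hyr, y, hy,
      mem_componentIn.2 (.refl hyerase)⟩ (hX.componentIn_ssubset hB hr hvX hyX hyr)
  · exact hyr ((hX.connectedOn_sdiff hB y (by simp [hyX, hYB y hy]) r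
      (by simp [hr, hX.root_notMem])).mono (by grind))

end Lobes

section Biconnected

/-! ### 2-connected sets -/

variable {V : Type*} {G : SimpleGraph V} {S T : Finset V} {s t v w : V}

theorem exists_mem_ne_ne (h : 3 ≤ S.card) (x y : V) : ∃ v ∈ S, v ≠ x ∧ v ≠ y := by
  classical
  have hcard : ({x, y} : Finset V).card < S.card := Finset.card_le_two.trans_lt h
  obtain ⟨v, hv, hvxy⟩ := Finset.exists_mem_notMem_of_card_lt_card hcard
  exact ⟨v, hv, by simpa using hvxy⟩

variable [DecidableEq V]

theorem BiconnectedOn.connectedOn (h : BiconnectedOn G S) (hS : 3 ≤ S.card) : ConnectedOn G S := by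
  intro x hx y hy
  obtain ⟨v, -, hvx, hvy⟩ := exists_mem_ne_ne hS x y
  exact (h v x (Finset.mem_erase.2 ⟨hvx.symm, hx⟩) y (Finset.mem_erase.2 ⟨hvy.symm, hy⟩)).mono
    (Finset.erase_subset v S)

theorem BiconnectedOn.four_le_card (c : G.Coloring Bool) (h : BiconnectedOn G S)
    (hS : 3 ≤ S.card) : 4 ≤ S.card := by
  by_contra hlt
  obtain ⟨x, y, z, hxy, hxz, hyz, rfl⟩ := Finset.card_eq_three.1 (show S.card = 3 by lia)
  have hxy := c.valid ((h z x (by grind) y (by grind)).longPathIn.adj_of_subset_pair (by grind) hxy)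
  have hxz := c.valid ((h y x (by grind) z (by grind)).longPathIn.adj_of_subset_pair (by grind) hxz)
  have hyz := c.valid ((h x y (by grind) z (by grind)).longPathIn.adj_of_subset_pair (by grind) hyz)
  exact hyz ((Bool.eq_not_of_ne hxy.symm).trans (Bool.eq_not_of_ne hxz.symm).symm)

theorem BiconnectedOn.four_le_card_of_two_le_degreeIn (c : G.Coloring Bool)
    (h : BiconnectedOn G S) (hw : w ∈ S) (hdeg : 2 ≤ degreeIn G S w) : 4 ≤ S.card := by
  obtain ⟨p, hp, q, hq, hpq, hwp, hwq⟩ := two_le_degreeIn_iff.1 hdeg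
  refine h.four_le_card c ?_
  calc 3 = ({w, p, q} : Finset V).card :=
        (Finset.card_eq_three.2 ⟨w, p, q, hwp.ne, hwq.ne, hpq, rfl⟩).symm
    _ ≤ S.card := Finset.card_le_card (by grind)

theorem BiconnectedOn.exists_adj_ne (h : BiconnectedOn G S) (hS : 3 ≤ S.card) (hv : v ∈ S)
    (hsv : s ≠ v) : ∃ w ∈ S, w ≠ s ∧ G.Adj v w := by
  obtain ⟨x, hx, hxv, hxs⟩ := exists_mem_ne_ne hS v s
  obtain ⟨p, q, hp, -, hpq, hq, -⟩ := (h s v (by grind) x (by grind)).exists_exit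
    (Finset.mem_singleton_self v) (by simpa using hxv)
  rw [Finset.mem_singleton] at hp
  exact ⟨q, Finset.mem_of_mem_erase hq, Finset.ne_of_mem_erase hq, hp ▸ hpq⟩

theorem BiconnectedOn.two_le_degreeIn (h : BiconnectedOn G S) (hS : 3 ≤ S.card) (hv : v ∈ S) :
    2 ≤ degreeIn G S v := by
  obtain ⟨s, -, hsv, -⟩ := exists_mem_ne_ne hS v v
  obtain ⟨w, hw, -, hvw⟩ := h.exists_adj_ne hS hv hsv
  obtain ⟨w', hw', hne, hvw'⟩ := h.exists_adj_ne hS hv hvw.ne'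
  exact two_le_degreeIn_iff.2 ⟨w', hw', w, hw, hne, hvw', hvw⟩

theorem BiconnectedOn.insert (h : BiconnectedOn G T) (hT : 3 ≤ T.card)
    (hdeg : 2 ≤ degreeIn G T t) : BiconnectedOn G (insert t T) := by
  by_cases htT : t ∈ T
  · rwa [Finset.insert_eq_of_mem htT]
  intro s
  obtain rfl | hst := eq_or_ne s t
  · rw [Finset.erase_insert htT]
    exact h.connectedOn hT
  obtain ⟨w, hw, hws, htw⟩ : ∃ w ∈ T, w ≠ s ∧ G.Adj t w := by
    obtain ⟨p, hp, q, hq, hpq, htp, htq⟩ := two_le_degreeIn_iff.1 hdeg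
    grind
  refine connectedOn_of_root (y := w) fun x hx => ?_
  obtain rfl | hxt := eq_or_ne x t
  · exact reachableIn_of_adj htw hx (by grind)
  · exact (h s x (by grind) w (by grind)).mono (by gcongr; exact Finset.subset_insert t T)

end Biconnected

section Chains

/-! ### Chains of blocks -/

open SimpleGraph

variable {V : Type*} {G : SimpleGraph V} {H S T : Finset V} {a g t u v w x y : V}

/-- Inside `H`, two disjoint connections run from `a` to `x` and from `y` to `u`. -/
def Linked (G : SimpleGraph V) (H : Finset V) (a x y u : V) : Prop :=
  ∃ P Q : Finset V, P ⊆ H ∧ Q ⊆ H ∧ Disjoint P Q ∧ ReachableIn G P a x ∧ ReachableIn G Q y u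

variable [DecidableEq V]

theorem eq_of_mem_takeUntil_of_mem_dropUntil {p : G.Walk a u} (hp : p.IsPath)
    (hv : v ∈ p.support) (hw : w ∈ (p.takeUntil v hv).support)
    (hw' : w ∈ (p.dropUntil v hv).support) : w = v := by
  rw [← p.take_spec hv, Walk.isPath_def, Walk.support_append, List.nodup_append'] at hp
  rw [Walk.mem_support_iff] at hw'
  exact hw'.resolve_right fun h => hp.2.2 hw h

theorem linked_of_mem_support {p : G.Walk a u} (hp : p.IsPath) (hx : x ∈ p.support)
    (hy : y ∈ p.support) (hxy : x ≠ y) :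
    Linked G p.support.toFinset a x y u ∨ Linked G p.support.toFinset a y x u := by
  induction p with
  | nil => simp_all
  | @cons a a' u hadj p ih =>
    obtain ⟨hp, hap⟩ := (Walk.cons_isPath_iff hadj p).1 hp
    have hhead : ∀ w ∈ p.support, Linked G (Walk.cons hadj p).support.toFinset a a w u := by
      refine fun w hw => ⟨{a}, p.support.toFinset, by simp, by simp, by simpa using hap,
        .refl (Finset.mem_singleton_self a), p.dropUntil w hw, fun v hv => ?_⟩
      exact List.mem_toFinset.2 (p.support_dropUntil_subset_support hw hv)
    have htail : ∀ x y, Linked G p.support.toFinset a' x y u →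
        Linked G (Walk.cons hadj p).support.toFinset a x y u := by
      rintro x y ⟨P, Q, hP, hQ, hPQ, hPx, hQy⟩
      have hsupp : (Walk.cons hadj p).support.toFinset = insert a p.support.toFinset := by simp
      refine ⟨insert a P, Q, hsupp ▸ Finset.insert_subset_insert a hP,
        hsupp ▸ hQ.trans (Finset.subset_insert a _), ?_,
        (hPx.mono (Finset.subset_insert a P)).head hadj (Finset.mem_insert_self a P), hQy⟩
      exact Finset.disjoint_insert_left.2 ⟨fun ha => hap (List.mem_toFinset.1 (hQ ha)), hPQ⟩
    rw [Walk.support_cons, List.mem_cons] at hx hy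
    rcases hx with rfl | hx
    · exact .inl (hhead y (hy.resolve_left hxy.symm))
    rcases hy with rfl | hy
    · exact .inr (hhead x hx)
    · exact (ih hp hx hy).imp (htail x y) (htail y x)

theorem ReachableIn.exists_first_hit (h : ReachableIn G S v t) (ht : t ∈ T) :
    ∃ h ∈ S ∩ T, ReachableIn G (insert h (S \ T)) v h := by
  by_cases hvT : v ∈ T
  · exact ⟨v, Finset.mem_inter.2 ⟨h.left_mem, hvT⟩, .refl (Finset.mem_insert_self _ _)⟩
  obtain ⟨w, w', -, hw, hadj, hw'S, hw'T⟩ := h.exists_exit (T := S \ T)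
    (Finset.mem_sdiff.2 ⟨h.left_mem, hvT⟩) (by simp [ht])
  refine ⟨w', by grind, (hw.mono ?_).tail hadj (Finset.mem_insert_self _ _)⟩
  grind

theorem linked_of_reachableIn_erase {p : G.Walk a u} (hp : p.IsPath) (hpH : p.support.toFinset ⊆ H)
    (hg : g ∈ p.support) (ht : t ∈ p.support) (hvt : ReachableIn G (H.erase g) v t) :
    Linked G H a g v u ∨ Linked G H a v g u := by
  obtain ⟨h, hh, hvh⟩ := hvt.exists_first_hit (T := p.support.toFinset) (List.mem_toFinset.2 ht)
  have hgh : g ≠ h := by grind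
  refine (linked_of_mem_support hp hg (y := h)
    (List.mem_toFinset.1 (Finset.mem_inter.1 hh).2) hgh).imp ?_ ?_
  · rintro ⟨P, Q, hP, hQ, hPQ, hag, hhu⟩
    have hhQ := hhu.left_mem
    refine ⟨P, Q ∪ insert h (H.erase g \ p.support.toFinset), by grind, by grind, ?_, hag,
      (hvh.mono (by grind)).trans (hhu.mono (by grind))⟩
    rw [Finset.disjoint_left] at hPQ ⊢
    grind
  · rintro ⟨P, Q, hP, hQ, hPQ, hah, hgu⟩
    have hhP := hah.right_mem
    refine ⟨P ∪ insert h (H.erase g \ p.support.toFinset), Q, by grind, by grind, ?_,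
      (hah.mono (by grind)).trans (hvh.symm.mono (by grind)), hgu⟩
    rw [Finset.disjoint_left] at hPQ ⊢
    grind

theorem Linked.exists_isPath (h : Linked G H a x y u) (hxy : G.Adj x y) :
    ∃ p : G.Walk a u, p.IsPath ∧ p.support.toFinset ⊆ H ∧ x ∈ p.support ∧ y ∈ p.support := by
  obtain ⟨P, Q, hP, hQ, hPQ, hax, hyu⟩ := h
  obtain ⟨p, hp, hpP, -⟩ := hax.longPathIn
  obtain ⟨q, hq, hqQ, -⟩ := hyu.longPathIn
  have hsupp : (p.append (.cons hxy q)).support = p.support ++ q.support := by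
    rw [Walk.support_append, Walk.support_cons, List.tail_cons]
  refine ⟨p.append (.cons hxy q), ?_, fun w hw => ?_, by simp, by simp⟩
  · rw [Walk.isPath_def, hsupp, List.nodup_append']
    exact ⟨hp.support_nodup, hq.support_nodup, fun v hvp hvq =>
      Finset.disjoint_left.1 hPQ (hpP v hvp) (hqQ v hvq)⟩
  · rw [List.mem_toFinset, hsupp, List.mem_append] at hw
    exact hw.elim (fun hw => hP (hpP w hw)) (fun hw => hQ (hqQ w hw))

/-- `H` is a chain of blocks joining `a` to `u`: every vertex still reaches one of the two ends
after the deletion of any other vertex. -/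
def IsBlockChain (G : SimpleGraph V) (H : Finset V) (a u : V) : Prop :=
  ∀ s, ∀ v ∈ H, v ≠ s → ReachableIn G (H.erase s) v a ∨ ReachableIn G (H.erase s) v u

theorem IsBlockChain.linked_of_mem_support (hH : IsBlockChain G H a u) {p : G.Walk a u}
    (hp : p.IsPath) (hpH : p.support.toFinset ⊆ H) (hg : g ∈ p.support) (hv : v ∈ H)
    (hvg : v ≠ g) : Linked G H a g v u ∨ Linked G H a v g u :=
  (hH g v hv hvg).elim (linked_of_reachableIn_erase hp hpH hg p.start_mem_support)
    (linked_of_reachableIn_erase hp hpH hg p.end_mem_support)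

theorem IsBlockChain.exists_isPath_through (hH : IsBlockChain G H a u) (hC : ConnectedOn G H)
    (ha : a ∈ H) (hu : u ∈ H) (hv : v ∈ H) :
    ∃ p : G.Walk a u, p.IsPath ∧ p.support.toFinset ⊆ H ∧ v ∈ p.support := by
  refine (hC a ha v hv).induction_on
    (P := fun v => ∃ p : G.Walk a u, p.IsPath ∧ p.support.toFinset ⊆ H ∧ v ∈ p.support) ?_ ?_
  · rintro g - v hv hgv ⟨p, hp, hpH, hgp⟩
    rcases hH.linked_of_mem_support hp hpH hgp hv hgv.ne' with hlink | hlink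
    · obtain ⟨q, hq, hqH, -, hvq⟩ := hlink.exists_isPath hgv
      exact ⟨q, hq, hqH, hvq⟩
    · obtain ⟨q, hq, hqH, hvq, -⟩ := hlink.exists_isPath hgv.symm
      exact ⟨q, hq, hqH, hvq⟩
  · obtain ⟨p, hp, hpH, -⟩ := (hC a ha u hu).longPathIn
    exact ⟨p, hp, fun w hw => hpH w (List.mem_toFinset.1 hw), p.start_mem_support⟩

theorem IsBlockChain.linked (hH : IsBlockChain G H a u) (hC : ConnectedOn G H) (ha : a ∈ H)
    (hu : u ∈ H) (hx : x ∈ H) (hy : y ∈ H) (hxy : x ≠ y) :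
    Linked G H a x y u ∨ Linked G H a y x u := by
  obtain ⟨p, hp, hpH, hxp⟩ := hH.exists_isPath_through hC ha hu hx
  exact hH.linked_of_mem_support hp hpH hxp hy hxy.symm

theorem IsBlockChain.exists_split (hH : IsBlockChain G H a u) (hC : ConnectedOn G H) (ha : a ∈ H)
    (hu : u ∈ H) (hv : v ∈ H) : ∃ P Q : Finset V, P ⊆ H ∧ Q ⊆ H ∧ (∀ w ∈ P, w ∈ Q → w = v) ∧
      ReachableIn G P a v ∧ ReachableIn G Q v u := by
  obtain ⟨p, hp, hpH, hvp⟩ := hH.exists_isPath_through hC ha hu hv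
  refine ⟨(p.takeUntil v hvp).support.toFinset, (p.dropUntil v hvp).support.toFinset,
    fun w hw => hpH (by simpa using p.support_takeUntil_subset_support hvp (by simpa using hw)),
    fun w hw => hpH (by simpa using p.support_dropUntil_subset_support hvp (by simpa using hw)),
    fun w hw hw' => ?_, ⟨p.takeUntil v hvp, by simp⟩, ⟨p.dropUntil v hvp, by simp⟩⟩
  exact eq_of_mem_takeUntil_of_mem_dropUntil hp hvp (List.mem_toFinset.1 hw)
    (List.mem_toFinset.1 hw')

open Classical in
/-- The vertices of `H` that lie on the chain of blocks of `H` joining `a` to `u`. -/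
noncomputable def chainPart (G : SimpleGraph V) (H : Finset V) (a u : V) : Finset V :=
  H.filter fun v => ∀ s, v ≠ s → ReachableIn G (H.erase s) v a ∨ ReachableIn G (H.erase s) v u

theorem mem_chainPart : v ∈ chainPart G H a u ↔
    v ∈ H ∧ ∀ s, v ≠ s → ReachableIn G (H.erase s) v a ∨ ReachableIn G (H.erase s) v u := by
  classical
  rw [chainPart, Finset.mem_filter]

theorem chainPart_subset : chainPart G H a u ⊆ H :=
  fun _ hv => (mem_chainPart.1 hv).1

theorem left_mem_chainPart (ha : a ∈ H) : a ∈ chainPart G H a u :=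
  mem_chainPart.2 ⟨ha, fun _ has => .inl (.refl (Finset.mem_erase.2 ⟨has, ha⟩))⟩

theorem right_mem_chainPart (hu : u ∈ H) : u ∈ chainPart G H a u :=
  mem_chainPart.2 ⟨hu, fun _ hus => .inr (.refl (Finset.mem_erase.2 ⟨hus, hu⟩))⟩

theorem chainPart_self (ha : a ∈ H) : chainPart G H a a = {a} := by
  refine Finset.eq_singleton_iff_unique_mem.2 ⟨left_mem_chainPart ha, fun v hv => ?_⟩
  by_contra hva
  have hreach := ((mem_chainPart.1 hv).2 a hva).elim id id
  exact (Finset.mem_erase.1 hreach.right_mem).1 rfl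

theorem mem_chainPart_of_mem_support {p : G.Walk x y} (hp : p.IsPath)
    (hpH : ∀ w ∈ p.support, w ∈ H) (hx : x ∈ chainPart G H a u) (hy : y ∈ chainPart G H a u)
    (hv : v ∈ p.support) : v ∈ chainPart G H a u := by
  refine mem_chainPart.2 ⟨hpH v hv, fun s hvs => ?_⟩
  have hends : ∀ w ∈ chainPart G H a u, ReachableIn G (H.erase s) v w →
      ReachableIn G (H.erase s) v a ∨ ReachableIn G (H.erase s) v u := fun w hw hvw =>
    ((mem_chainPart.1 hw).2 s (Finset.mem_erase.1 hvw.right_mem).1).imp hvw.trans hvw.trans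
  by_cases hs : s ∈ (p.takeUntil v hv).support
  · refine hends y hy ⟨p.dropUntil v hv, fun w hw => Finset.mem_erase.2 ⟨?_, ?_⟩⟩
    · rintro rfl
      exact hvs (eq_of_mem_takeUntil_of_mem_dropUntil hp hv hs hw).symm
    · exact hpH w (p.support_dropUntil_subset_support hv hw)
  · refine hends x hx (ReachableIn.symm ⟨p.takeUntil v hv, fun w hw => Finset.mem_erase.2 ⟨?_, ?_⟩⟩)
    · rintro rfl
      exact hs hw
    · exact hpH w (p.support_takeUntil_subset_support hv hw)

theorem reachableIn_chainPart_inter (hx : x ∈ chainPart G H a u) (hy : y ∈ chainPart G H a u)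
    (hTH : T ⊆ H) (hxy : ReachableIn G T x y) : ReachableIn G (chainPart G H a u ∩ T) x y := by
  obtain ⟨p, hp, hpT, -⟩ := hxy.longPathIn
  exact ⟨p, fun w hw => Finset.mem_inter.2
    ⟨mem_chainPart_of_mem_support hp (fun w hw => hTH (hpT w hw)) hx hy hw, hpT w hw⟩⟩

theorem connectedOn_chainPart (hH : ConnectedOn G H) : ConnectedOn G (chainPart G H a u) :=
  fun x hx y hy => (reachableIn_chainPart_inter hx hy subset_rfl
    (hH x (chainPart_subset hx) y (chainPart_subset hy))).mono Finset.inter_subset_left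

theorem isBlockChain_chainPart (ha : a ∈ H) (hu : u ∈ H) :
    IsBlockChain G (chainPart G H a u) a u := by
  intro s v hv hvs
  have hstay : ∀ w ∈ chainPart G H a u, ReachableIn G (H.erase s) v w →
      ReachableIn G ((chainPart G H a u).erase s) v w := fun w hw hvw =>
    (reachableIn_chainPart_inter hv hw (Finset.erase_subset s H) hvw).mono (by grind)
  exact ((mem_chainPart.1 hv).2 s hvs).imp (hstay a (left_mem_chainPart ha))
    (hstay u (right_mem_chainPart hu))

end Chains

section Configurations

/-! ### Lobe configurations -/

variable {V : Type*} [DecidableEq V] {G : SimpleGraph V} {S A B W A₀ W₀ : Finset V}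
  {a b r u u₀ v x y z : V} {d : ℕ}

/-- The set `S` is split into a chain of blocks `A₀` from `a` to `u₀`, a nonempty set `W₀` attached
to the chain only at `u₀`, and a connected set `B` containing `b` each of whose vertices has at most
one neighbour outside `B`. The chain is trivial when `u₀ = a`. -/
structure IsLobeConfig (G : SimpleGraph V) (S A₀ W₀ B : Finset V) (u₀ a b : V) : Prop where
  left_mem : a ∈ A₀
  cut_mem : u₀ ∈ A₀
  right_mem : b ∈ B
  disjoint_chain_lobe : Disjoint A₀ W₀
  disjoint_chain_right : Disjoint A₀ B
  disjoint_lobe_right : Disjoint W₀ B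
  union_eq : A₀ ∪ W₀ ∪ B = S
  lobe_nonempty : W₀.Nonempty
  connectedOn_chain : ConnectedOn G A₀
  isBlockChain : IsBlockChain G A₀ a u₀
  connectedOn_right : ConnectedOn G B
  matched_right : MatchedInto G B (A₀ ∪ W₀)
  eq_singleton : u₀ = a → A₀ = {a}
  lobe_closed : ∀ w ∈ W₀, ∀ v ∈ A₀, G.Adj w v → v = u₀

theorem IsLobe.exists_isLobe_disjoint_chainPart (h : IsLobe G A W u a) (hA : ConnectedOn G A)
    (ha : a ∈ A) (hv : v ∈ A \ W) (hvC : v ∉ chainPart G (A \ W) a u) :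
    ∃ Y s, IsLobe G A Y s a ∧ v ∈ Y ∧ Y ⊆ A \ W ∧ Disjoint Y (chainPart G (A \ W) a u) := by
  have haH : a ∈ A \ W := Finset.mem_sdiff.2 ⟨ha, h.root_notMem⟩
  rw [mem_chainPart] at hvC
  push Not at hvC
  obtain ⟨s, hvs, hva, hvu⟩ := hvC hv
  have hsH : s ∈ A \ W := by
    by_contra hs
    rw [Finset.erase_eq_of_notMem hs] at hva
    exact hva (h.connectedOn_sdiff hA v hv a haH)
  have hvY : v ∈ componentIn G ((A \ W).erase s) v :=
    mem_componentIn.2 (.refl (Finset.mem_erase.2 ⟨hvs, hv⟩))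
  have hYH : componentIn G ((A \ W).erase s) v ⊆ A \ W :=
    componentIn_subset.trans (Finset.erase_subset _ _)
  refine ⟨_, s, ⟨⟨v, hvY⟩, hYH.trans Finset.sdiff_subset, fun haY => hva (mem_componentIn.1 haY),
    (Finset.mem_sdiff.1 hsH).1, fun hsY => ?_, fun w hw x hx hwx => ?_⟩, hvY, hYH, ?_⟩
  · exact (Finset.mem_erase.1 (componentIn_subset hsY)).1 rfl
  · refine or_iff_not_imp_right.2 fun hxs => ?_
    have hxW : x ∉ W := fun hxW => by
      rcases h.closed x hxW w (Finset.mem_sdiff.1 (hYH hw)).1 hwx.symm with hwW | rfl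
      · exact (Finset.mem_sdiff.1 (hYH hw)).2 hwW
      · exact hvu (mem_componentIn.1 hw)
    exact mem_componentIn.2 ((mem_componentIn.1 hw).tail hwx (by simp [hxs, hx, hxW]))
  · rw [Finset.disjoint_left]
    intro w hw hwC
    have hvw := mem_componentIn.1 hw
    exact ((mem_chainPart.1 hwC).2 s (Finset.mem_erase.1 hvw.right_mem).1).elim
      (fun hwa => hva (hvw.trans hwa)) (fun hwu => hvu (hvw.trans hwu))

theorem IsLobe.exists_reachableIn_sdiff (h : IsLobe G A W u a) (hS : BiconnectedOn G S)
    (hAB : IsMatchedPartition G S A B a b) (hv : v ∈ S \ (chainPart G (A \ W) a u ∪ W))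
    (hvB : v ∉ B) : ∃ q ∈ B, ReachableIn G (S \ (chainPart G (A \ W) a u ∪ W)) v q := by
  have hunion := hAB.union_eq
  have hdisj := Finset.disjoint_left.1 hAB.disjoint
  obtain ⟨Y, s, hY, hvY, hYH, hYC⟩ := h.exists_isLobe_disjoint_chainPart hAB.connectedOn_left
    hAB.left_mem (v := v) (by grind) (by grind)
  rw [Finset.disjoint_left] at hYC
  have hbB := hAB.right_mem
  have hsA := hY.cut_mem
  have hsY := hY.cut_notMem
  obtain ⟨p, q, hp, hvp, hpq, hqS, hqY⟩ := (hS s v (by grind) b (by grind)).exists_exit hvY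
    (fun hbY => hdisj (hY.subset hbY) hbB)
  have hqB : q ∈ B := by
    by_contra hqB
    have := hY.closed p hp q (by grind) hpq
    grind
  exact ⟨q, hqB, (hvp.mono (by grind)).tail hpq (by grind [chainPart_subset, h.subset])⟩

theorem IsLobe.exists_isLobeConfig (h : IsLobe G A W u a) (hS : BiconnectedOn G S)
    (hAB : IsMatchedPartition G S A B a b) :
    ∃ B', B ⊆ B' ∧ IsLobeConfig G S (chainPart G (A \ W) a u) W B' u a b := by
  have haH : a ∈ A \ W := Finset.mem_sdiff.2 ⟨hAB.left_mem, h.root_notMem⟩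
  have huH : u ∈ A \ W := Finset.mem_sdiff.2 ⟨h.cut_mem, h.cut_notMem⟩
  have hCH : chainPart G (A \ W) a u ⊆ A \ W := chainPart_subset
  have hWA := h.subset
  have hdisj := Finset.disjoint_left.1 hAB.disjoint
  have hunion := hAB.union_eq
  have hBB : B ⊆ S \ (chainPart G (A \ W) a u ∪ W) := by grind
  refine ⟨_, hBB, left_mem_chainPart haH, right_mem_chainPart huH, hBB hAB.right_mem,
    ?_, ?_, ?_, ?_, h.nonempty, connectedOn_chainPart (h.connectedOn_sdiff hAB.connectedOn_left),
    isBlockChain_chainPart haH huH, ?_, ?_, ?_, ?_⟩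
  · exact Finset.disjoint_left.2 fun x hx => (Finset.mem_sdiff.1 (hCH hx)).2
  · exact Finset.disjoint_left.2 fun x hx => by simp [hx]
  · exact Finset.disjoint_left.2 fun x hx => by simp [hx]
  · exact Finset.union_sdiff_of_subset (by grind)
  · refine connectedOn_of_root (y := b) fun v hv => ?_
    have hBb : ∀ q ∈ B, ReachableIn G (S \ (chainPart G (A \ W) a u ∪ W)) q b := fun q hq =>
      (hAB.connectedOn_right q hq b hAB.right_mem).mono hBB
    by_cases hvB : v ∈ B
    · exact hBb v hvB
    · obtain ⟨q, hq, hvq⟩ := h.exists_reachableIn_sdiff hS hAB hv hvB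
      exact hvq.trans (hBb q hq)
  · intro v hv w hw w' hw' hvw hvw'
    by_cases hvB : v ∈ B
    · exact hAB.matched_right v hvB w (by grind) w' (by grind) hvw hvw'
    obtain ⟨Y, s, hY, hvY, hYH, hYC⟩ := h.exists_isLobe_disjoint_chainPart hAB.connectedOn_left
      hAB.left_mem (v := v) (by grind) (by grind)
    rw [Finset.disjoint_left] at hYC
    have := hY.closed v hvY w (by grind) hvw
    have := hY.closed v hvY w' (by grind) hvw'
    grind
  · rintro rfl
    exact chainPart_self haH
  · intro w hw v hv hwv
    have hvH := Finset.mem_sdiff.1 (hCH hv)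
    exact (h.closed w hw v hvH.1 hwv).resolve_left hvH.2

/-- The induction hypothesis: if `S` induces a 2-connected subgraph in which all vertices but `a`,
`b` and one further exceptional vertex `z` have degree at least `d`, then `S` contains a path of
length `2 ^ d - 2` from `a` to `b`. -/
def HasLongPaths (G : SimpleGraph V) (d : ℕ) (S : Finset V) : Prop :=
  4 ≤ S.card → BiconnectedOn G S → ∀ a ∈ S, ∀ b ∈ S, a ≠ b → ∀ z,
    (∀ v ∈ S, v ≠ a → v ≠ b → v ≠ z → d ≤ degreeIn G S v) → LongPathIn G S (2 ^ d - 2) a b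

theorem IsLobe.degreeIn_le (h : IsLobe G B W u r) (hv : v ∈ W) :
    degreeIn G B v ≤ degreeIn G (insert u W) v :=
  degreeIn_le_degreeIn fun w hw hvw =>
    Finset.mem_insert.2 (h.closed v hv w hw hvw).symm

theorem IsEndLobe.longPathIn (c : G.Coloring Bool) (h : IsEndLobe G B W u r)
    (hB : ConnectedOn G B) (hP : HasLongPaths G d (insert u W)) (hx : x ∈ insert u W)
    (hy : y ∈ insert u W) (hxy : x ≠ y) (hu : u = x ∨ u = y ∨ u = z)
    (hdeg : ∀ v ∈ W, v ≠ x → v ≠ y → v ≠ z → d ≤ degreeIn G B v)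
    (htwo : ∃ v ∈ W, 2 ≤ degreeIn G B v) : LongPathIn G (insert u W) (2 ^ d - 2) x y := by
  have hbic := h.biconnectedOn hB
  obtain ⟨w, hw, hw2⟩ := htwo
  have hcard := hbic.four_le_card_of_two_le_degreeIn c (Finset.mem_insert_of_mem hw)
    (hw2.trans (h.degreeIn_le hw))
  refine hP hcard hbic x hx y hy hxy z fun v hv hvx hvy hvz => ?_
  have hvW : v ∈ W := (Finset.mem_insert.1 hv).resolve_left (by grind)
  exact (hdeg v hvW hvx hvy hvz).trans (h.degreeIn_le hvW)

end Configurations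

section Assembly

/-! ### Long paths in lobe configurations -/

variable {V : Type*} [DecidableEq V] {G : SimpleGraph V} {S T B W A₀ W₀ W₁ : Finset V}
  {a b p p' q q' r t u u₀ u₁ v x y z : V} {d e f g k k₀ k₁ : ℕ}

theorem IsLobe.exists_adj_notMem (h : IsLobe G B W u r) (hS : BiconnectedOn G S) (hBS : B ⊆ S)
    (ht : t ∈ S) (htB : t ∉ B) : ∃ p ∈ W, ∃ q ∈ S, q ∉ B ∧ G.Adj p q := by
  obtain ⟨w, hw⟩ := h.nonempty
  have hwu : w ≠ u := fun hwu => h.cut_notMem (hwu ▸ hw)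
  have htu : t ≠ u := fun htu => htB (htu ▸ h.cut_mem)
  obtain ⟨p, q, hp, -, hpq, hq, hqW⟩ := (hS u w (Finset.mem_erase.2 ⟨hwu, hBS (h.subset hw)⟩) t
    (Finset.mem_erase.2 ⟨htu, ht⟩)).exists_exit hw (fun htW => htB (h.subset htW))
  rw [Finset.mem_erase] at hq
  exact ⟨p, hp, q, hq.2, fun hqB => (h.closed p hp q hqB hpq).elim hqW hq.1, hpq⟩

theorem IsLobeConfig.isLobe (h : IsLobeConfig G S A₀ W₀ B u₀ a b) :
    IsLobe G (A₀ ∪ W₀) W₀ u₀ a where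
  nonempty := h.lobe_nonempty
  subset := Finset.subset_union_right
  root_notMem := Finset.disjoint_left.1 h.disjoint_chain_lobe h.left_mem
  cut_mem := Finset.mem_union_left _ h.cut_mem
  cut_notMem := Finset.disjoint_left.1 h.disjoint_chain_lobe h.cut_mem
  closed w hw v hv hwv := (Finset.mem_union.1 hv).symm.imp id fun hv => h.lobe_closed w hw v hv hwv

theorem IsLobeConfig.exists_lobe_adj_right (h : IsLobeConfig G S A₀ W₀ B u₀ a b)
    (hS : BiconnectedOn G S) : ∃ x ∈ W₀, ∃ y ∈ B, G.Adj x y := by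
  have hunion := h.union_eq
  have hb := h.right_mem
  have hdisj := Finset.disjoint_left.1 h.disjoint_chain_right
  have hdisj' := Finset.disjoint_left.1 h.disjoint_lobe_right
  obtain ⟨x, hx, y, hyS, hy, hxy⟩ := h.isLobe.exists_adj_notMem hS (t := b) (by grind) (by grind)
    (by grind)
  exact ⟨x, hx, y, by grind, hxy⟩

theorem IsLobeConfig.exists_endLobe_adj (h : IsLobeConfig G S A₀ W₀ B u₀ a b)
    (hS : BiconnectedOn G S) (hW : IsLobe G B W u b) : ∃ p ∈ W, ∃ q ∈ A₀ ∪ W₀, G.Adj p q := by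
  have hunion := h.union_eq
  have ha := h.left_mem
  have hdisj := Finset.disjoint_left.1 h.disjoint_chain_right
  obtain ⟨p, hp, q, hqS, hq, hpq⟩ := hW.exists_adj_notMem hS (t := a) (by grind) (by grind)
    (by grind)
  exact ⟨p, hp, q, by grind, hpq⟩

theorem IsEndLobe.longPathIn_of_unique_foot (c : G.Coloring Bool) (h : IsEndLobe G B W u r)
    (hB : ConnectedOn G B) (htu : t ≠ u) (hp : p ∈ W) (hpt : G.Adj p t)
    (hfoot : ∀ w ∈ W, ∀ v ∈ S, v ∉ B → G.Adj w v → v = t)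
    (hdeg : ∀ v ∈ W, v ≠ z → d ≤ degreeIn G S v) (htwo : ∃ v ∈ W, 2 ≤ degreeIn G B v)
    (hP : HasLongPaths G d (insert u W)) (hP' : HasLongPaths G d (insert t (insert u W)))
    (htW : t ∉ W) : LongPathIn G (insert t (insert u W)) (2 ^ d - 2) t u := by
  by_cases hall : ∀ w ∈ W, G.Adj w t → w = p
  · have hpu : LongPathIn G (insert u W) (2 ^ d - 2) p u := by
      refine h.longPathIn c hB hP (z := z) (by simp [hp]) (by simp)
        (fun hpu => h.cut_notMem (hpu ▸ hp)) (.inr (.inl rfl)) (fun v hv hvp _ hvz => ?_) htwo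
      refine (hdeg v hv hvz).trans (degreeIn_le_degreeIn fun w hw hvw => ?_)
      by_contra hwB
      obtain rfl := hfoot v hv w hw hwB hvw
      exact hvp (hall v hv hvw)
    have htpu := (LongPathIn.refl (G := G) (Finset.mem_singleton_self t)).join hpt.symm hpu
      (by simp [htu, htW])
    exact htpu.mono (by rw [← Finset.insert_eq]) (by lia)
  · push Not at hall
    obtain ⟨p', hp', hpt', hne⟩ := hall
    obtain ⟨w, hw, hw2⟩ := htwo
    have hbic := h.biconnectedOn hB
    have hcard := hbic.four_le_card_of_two_le_degreeIn c (Finset.mem_insert_of_mem hw)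
      (hw2.trans (h.degreeIn_le hw))
    have hbic' : BiconnectedOn G (insert t (insert u W)) := hbic.insert (by lia)
      (two_le_degreeIn_iff.2 ⟨p', by simp [hp'], p, by simp [hp], hne, hpt'.symm, hpt.symm⟩)
    refine hP' (hcard.trans (Finset.card_le_card (Finset.subset_insert t _))) hbic' t (by simp) u
      (by simp) htu z fun v hv hvt hvu hvz => ?_
    have hvW : v ∈ W := by grind
    refine (hdeg v hvW hvz).trans (degreeIn_le_degreeIn fun w hw hvw => ?_)
    by_cases hwB : w ∈ B
    · have := h.closed v hvW w hwB hvw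
      grind
    · simp [hfoot v hvW w hw hwB hvw]

theorem IsLobeConfig.longPathIn_of_unique_foot (c : G.Coloring Bool)
    (h : IsLobeConfig G S A₀ W₀ B u₀ a b) (hS : BiconnectedOn G S) (hW : IsEndLobe G B W u b)
    (ht : t ∈ A₀) (hfoot : ∀ w ∈ W, ∀ v ∈ A₀ ∪ W₀, G.Adj w v → v = t)
    (hdeg : ∀ v ∈ W, v ≠ z → d ≤ degreeIn G S v) (htwo : ∃ v ∈ W, 2 ≤ degreeIn G B v)
    (IH : ∀ T : Finset V, T.card < S.card → HasLongPaths G d T) :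
    LongPathIn G S (2 ^ d - 2) a b := by
  have hunion := h.union_eq
  have hdisj := Finset.disjoint_left.1 h.disjoint_chain_lobe
  have hdisj' := Finset.disjoint_left.1 h.disjoint_chain_right
  have hdisj'' := Finset.disjoint_left.1 h.disjoint_lobe_right
  have hWB := hW.subset
  have huB := hW.cut_mem
  obtain ⟨x, hx⟩ := h.lobe_nonempty
  obtain ⟨p, hp, q, hq, hpq⟩ := h.exists_endLobe_adj hS hW.toIsLobe
  obtain rfl := hfoot p hp q hq hpq
  have hlt : (insert q (insert u W)).card < S.card :=
    Finset.card_lt_card (Finset.ssubset_iff_of_subset (by grind) |>.2 ⟨x, by grind, by grind⟩)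
  have hqu : LongPathIn G (insert q (insert u W)) (2 ^ d - 2) q u :=
    hW.longPathIn_of_unique_foot (S := S) (z := z) c h.connectedOn_right (by grind) hp hpq
      (fun w hw v hvS hvB hwv => hfoot w hw v (by grind) hwv) hdeg htwo
      (IH _ ((Finset.card_le_card (Finset.subset_insert _ _)).trans_lt hlt)) (IH _ hlt) (by grind)
  have haq := (h.connectedOn_chain a h.left_mem q ht).longPathIn
  have hub := (hW.reachableIn_sdiff_cut h.connectedOn_right h.right_mem
    hW.root_notMem).symm.longPathIn
  refine ((haq.glue hqu ?_).glue hub ?_).mono ?_ (by lia) <;> grind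

theorem even_two_pow_sub_two (e : ℕ) : Even (2 ^ e - 2) := by
  rcases e with - | e
  · decide
  · exact ⟨2 ^ e - 1, by rw [pow_succ]; lia⟩

theorem two_pow_succ_sub_two (he : 1 ≤ e) : 2 ^ (e + 1) - 2 = 2 * (2 ^ e - 2) + 2 := by
  have := Nat.pow_le_pow_right two_pos he
  lia

theorem IsLobeConfig.longPathIn_of_link (h : IsLobeConfig G S A₀ W₀ B u₀ a b)
    (hW : IsLobe G B W₁ u₁ b) (h₀ : LongPathIn G A₀ k₀ a u₀)
    (h₁ : LongPathIn G (insert u₀ W₀) f u₀ x) (hxy : G.Adj x y)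
    (h₂ : LongPathIn G (insert u₁ W₁) g y u₁) (h₃ : LongPathIn G (B \ W₁) k₁ u₁ b) :
    LongPathIn G S (k₀ + f + g + k₁ + 1) a b := by
  have hunion := h.union_eq
  have hdisj := Finset.disjoint_left.1 h.disjoint_chain_lobe
  have hdisj' := Finset.disjoint_left.1 h.disjoint_chain_right
  have hdisj'' := Finset.disjoint_left.1 h.disjoint_lobe_right
  have hWB := hW.subset
  have huB := hW.cut_mem
  have huA := h.cut_mem
  refine ((h₀.glue h₁ ?_).join hxy (h₂.glue h₃ ?_) ?_).mono ?_ (by lia)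
  · grind
  · grind
  · rw [Finset.disjoint_left]; grind
  · grind

theorem IsLobeConfig.longPathIn_of_linked (h : IsLobeConfig G S A₀ W₀ B u₀ a b)
    (hlink : Linked G A₀ a q q' u₀) (hTB : T ⊆ B) (hqp : G.Adj q p) (hpp : LongPathIn G T g p p')
    (hpq : G.Adj p' q') (hux : LongPathIn G (insert u₀ W₀) f u₀ x) (hxy : G.Adj x y)
    (hyb : LongPathIn G (B \ T) k y b) : LongPathIn G S (g + f + k + 3) a b := by
  have hunion := h.union_eq
  have hdisj := Finset.disjoint_left.1 h.disjoint_chain_lobe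
  have hdisj' := Finset.disjoint_left.1 h.disjoint_chain_right
  have hdisj'' := Finset.disjoint_left.1 h.disjoint_lobe_right
  obtain ⟨P, Q, hP, hQ, hPQ, haq, hqu⟩ := hlink
  have huQ := hqu.right_mem
  have huA := h.cut_mem
  rw [Finset.disjoint_left] at hPQ
  refine (((haq.longPathIn.join hqp hpp ?_).join hpq (hqu.longPathIn.glue hux ?_) ?_).join
    hxy hyb ?_).mono ?_ (by lia)
  · rw [Finset.disjoint_left]; grind
  · grind
  · rw [Finset.disjoint_left]; grind
  · rw [Finset.disjoint_left]; grind
  · grind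

theorem IsLobeConfig.longPathIn_of_not_adj (c : G.Coloring Bool)
    (h : IsLobeConfig G S A₀ W₀ B u₀ a b) (hS : BiconnectedOn G S) (hW : IsEndLobe G B W₁ u₁ b)
    (hno : ∀ x ∈ W₀, ∀ y ∈ W₁, ¬ G.Adj x y) (hdeg : ∀ v ∈ W₁, v ≠ z → d ≤ degreeIn G S v)
    (htwo : ∃ v ∈ W₁, 2 ≤ degreeIn G B v)
    (IH : ∀ T : Finset V, T.card < S.card → HasLongPaths G d T)
    (hux : LongPathIn G (insert u₀ W₀) f u₀ x) (hxy : G.Adj x y) (hTB : T ⊆ B)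
    (hpp : ∀ p ∈ W₁, ∀ p' ∈ W₁, p ≠ p' → LongPathIn G T g p p')
    (hyb : LongPathIn G (B \ T) k y b) (hd : 2 ^ d - 2 ≤ g + f + k + 3) :
    LongPathIn G S (2 ^ d - 2) a b := by
  obtain ⟨p, hp, q, hq, hpq⟩ := h.exists_endLobe_adj hS hW.toIsLobe
  have hA₀ : ∀ p ∈ W₁, ∀ q ∈ A₀ ∪ W₀, G.Adj p q → q ∈ A₀ := fun p hp q hq hpq =>
    (Finset.mem_union.1 hq).resolve_right fun hqW => hno q hqW p hp hpq.symm
  by_cases hall : ∀ w ∈ W₁, ∀ v ∈ A₀ ∪ W₀, G.Adj w v → v = q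
  · exact h.longPathIn_of_unique_foot c hS hW (hA₀ p hp q hq hpq) hall hdeg htwo IH
  push Not at hall
  obtain ⟨p', hp', q', hq', hpq', hne⟩ := hall
  have hpp' : p ≠ p' := by
    rintro rfl
    exact hne (h.matched_right p (hW.subset hp) q' hq' q hq hpq' hpq)
  refine LongPathIn.mono ?_ subset_rfl hd
  rcases h.isBlockChain.linked h.connectedOn_chain h.left_mem h.cut_mem (hA₀ p hp q hq hpq)
    (hA₀ p' hp' q' hq' hpq') hne.symm with hlink | hlink
  · exact h.longPathIn_of_linked hlink hTB hpq.symm (hpp p hp p' hp' hpp') hpq' hux hxy hyb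
  · exact h.longPathIn_of_linked hlink hTB hpq'.symm (hpp p' hp' p hp hpp'.symm) hpq hux hxy hyb

-- Every end block of the lobe has a neighbour of `u` away from its own cut vertex.
theorem IsEndLobe.longPathIn_cut_succ (c : G.Coloring Bool) (h : IsEndLobe G B W u r)
    (hB : ConnectedOn G B) (hy : y ∈ W) (hdeg : ∀ v ∈ W, v ≠ z → e ≤ degreeIn G W v)
    (htwo : ∀ v ∈ W, 2 ≤ degreeIn G W v) (IH : ∀ T : Finset V, HasLongPaths G e T) :
    LongPathIn G (insert u W) (2 ^ e - 2 + 1) y u := by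
  obtain ⟨t, ht, hyt⟩ := exists_adj_of_degreeIn_pos (two_pos.trans_le (htwo y hy))
  obtain ⟨M, m, -, hM⟩ := (isLobe_erase (G := G) hy ht hyt.ne').exists_endLobe
  have hMW := hM.subset
  have hmW := hM.cut_mem
  have huW := h.cut_notMem
  obtain ⟨p, hp, q, hq, hqW, hpq⟩ := hM.exists_adj_notMem (h.biconnectedOn hB)
    (Finset.subset_insert u W) (Finset.mem_insert_self u W) huW
  obtain rfl : q = u := (Finset.mem_insert.1 hq).resolve_right hqW
  have hmp : LongPathIn G (insert m M) (2 ^ e - 2) m p :=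
    hM.longPathIn c h.connectedOn (IH _) (z := z) (by simp) (by simp [hp])
      (fun hmp => hM.cut_notMem (hmp ▸ hp)) (.inl rfl) (fun v hv _ _ hvz => hdeg v (hMW hv) hvz)
      ⟨p, hp, htwo p (hMW hp)⟩
  have hym := (hM.reachableIn_sdiff_cut h.connectedOn hy hM.root_notMem).longPathIn
  refine ((hym.glue hmp ?_).join hpq (.refl (Finset.mem_singleton_self q)) ?_).mono ?_ (by lia)
  · grind
  · rw [Finset.disjoint_singleton_right]; grind
  · grind

theorem IsEndLobe.longPathIn_cut (c : G.Coloring Bool) (he : 2 ≤ e) (h : IsEndLobe G B W u r)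
    (hB : ConnectedOn G B) (hdeg : ∀ v ∈ W, e ≤ degreeIn G B v)
    (hP : HasLongPaths G e (insert u W)) (hy : y ∈ W) :
    LongPathIn G (insert u W) (2 ^ e - 2) y u :=
  h.longPathIn c hB hP (z := y) (Finset.mem_insert_of_mem hy) (Finset.mem_insert_self u W)
    (fun hyu => h.cut_notMem (hyu ▸ hy)) (.inr (.inl rfl)) (fun v hv _ _ _ => hdeg v hv)
    ⟨y, hy, he.trans (hdeg y hy)⟩

theorem IsLobeConfig.degreeIn_lobe_of_color (c : G.Coloring Bool)
    (h : IsLobeConfig G S {a} W₀ B u₀ a b) (hW : IsLobe G B W u r) (hcau : c a ≠ c u)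
    (hlink : ∀ x ∈ W₀, ∀ y ∈ W, G.Adj x y → c y = c u) (hv : v ∈ W) :
    degreeIn G B v ≤ degreeIn G W v ∨ degreeIn G S v ≤ degreeIn G W v + 1 := by
  by_cases hcv : c v = c u
  · refine .inl (degreeIn_le_degreeIn fun w hw hvw => ?_)
    exact (hW.closed v hv w hw hvw).resolve_right fun hwu => c.valid hvw (hwu ▸ hcv)
  · have hcva : c v = c a := by
      rw [Bool.eq_not_of_ne hcv, Bool.eq_not_of_ne hcau]
    have hout : ∀ w ∈ S, G.Adj v w → w ∉ W → w = u := by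
      intro w hw hvw hwW
      rw [← h.union_eq, Finset.mem_union, Finset.mem_union, Finset.mem_singleton] at hw
      rcases hw with (rfl | hw) | hw
      · exact absurd hcva (c.valid hvw)
      · exact absurd (hlink w hw v hv hvw.symm) hcv
      · exact (hW.closed v hv w hw hvw).resolve_left hwW
    refine .inr (degreeIn_le_degreeIn_add_one fun w hw w' hw' hvw hvw' hwW hwW' => ?_)
    rw [hout w hw hvw hwW, hout w' hw' hvw' hwW']

theorem IsLobeConfig.longPathIn_lobe_succ (c : G.Coloring Bool) (he : 2 ≤ e)
    (h : IsLobeConfig G S {a} W₀ B u₀ a b) (hW : IsEndLobe G B W u b) (hcau : c a ≠ c u)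
    (hlink : ∀ x ∈ W₀, ∀ y ∈ W, G.Adj x y → c y = c u)
    (hdegB : ∀ v ∈ W, e ≤ degreeIn G B v) (hdegS : ∀ v ∈ W, v ≠ z → e + 1 ≤ degreeIn G S v)
    (hz : z = b ∨ 3 ≤ e) (IH : ∀ T : Finset V, HasLongPaths G e T) (hy : y ∈ W) :
    LongPathIn G (insert u W) (2 ^ e - 2 + 1) y u := by
  have hBS : ∀ v, degreeIn G B v ≤ degreeIn G S v := fun v =>
    degreeIn_le_degreeIn fun w hw _ => h.union_eq ▸ Finset.mem_union_right _ hw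
  refine hW.longPathIn_cut_succ (z := z) c h.connectedOn_right hy (fun v hv hvz => ?_)
    (fun v hv => ?_) IH
  · have := hdegB v hv
    have := hdegS v hv hvz
    have := h.degreeIn_lobe_of_color c hW.toIsLobe hcau hlink hv
    lia
  · have := hdegB v hv
    have := hBS v
    have hvb : v ≠ b := fun hvb => hW.root_notMem (hvb ▸ hv)
    have := hdegS v hv
    have := h.degreeIn_lobe_of_color c hW.toIsLobe hcau hlink hv
    grind

theorem IsLobeConfig.longPathIn_of_adj (c : G.Coloring Bool) (he : 2 ≤ e)
    (h : IsLobeConfig G S A₀ W₀ B u₀ a b) (hW : IsEndLobe G B W₁ u₁ b)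
    (hux : ∀ x ∈ W₀, LongPathIn G (insert u₀ W₀) (2 ^ e - 2) u₀ x)
    (hdegB : ∀ v ∈ W₁, e ≤ degreeIn G B v) (hdegS : ∀ v ∈ W₁, v ≠ z → e + 1 ≤ degreeIn G S v)
    (hz : z = b ∨ 3 ≤ e) (IH : ∀ T : Finset V, HasLongPaths G e T)
    (hx : x ∈ W₀) (hy : y ∈ W₁) (hxy : G.Adj x y) : LongPathIn G S (2 ^ (e + 1) - 2) a b := by
  have hyu : ∀ y ∈ W₁, LongPathIn G (insert u₁ W₁) (2 ^ e - 2) y u₁ := fun y hy =>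
    hW.longPathIn_cut c he h.connectedOn_right hdegB (IH _) hy
  have hau := (h.connectedOn_chain a h.left_mem u₀ h.cut_mem).longPathIn
  have hub :=
    (hW.reachableIn_sdiff_cut h.connectedOn_right h.right_mem hW.root_notMem).symm.longPathIn
  have hf := two_pow_succ_sub_two (e := e) (by lia)
  have hlong : LongPathIn G S (2 * (2 ^ e - 2) + 1) a b :=
    (h.longPathIn_of_link hW.toIsLobe hau (hux x hx) hxy (hyu y hy) hub).mono subset_rfl (by lia)
  by_cases hau₀ : a ≠ u₀
  · exact (h.longPathIn_of_link hW.toIsLobe (hau.one_of_ne hau₀) (hux x hx) hxy (hyu y hy)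
      hub).mono subset_rfl (by lia)
  by_cases hub₁ : u₁ ≠ b
  · exact (h.longPathIn_of_link hW.toIsLobe hau (hux x hx) hxy (hyu y hy)
      (hub.one_of_ne hub₁)).mono subset_rfl (by lia)
  by_cases hcab : c a = c b
  · exact hf ▸ hlong.succ_of_color_eq c hcab ⟨2 ^ e - 2, rfl⟩
  by_cases hodd : ∃ x ∈ W₀, ∃ y ∈ W₁, G.Adj x y ∧ c y ≠ c u₁
  · obtain ⟨x, hx, y, hy, hxy, hcy⟩ := hodd
    exact (h.longPathIn_of_link hW.toIsLobe hau (hux x hx) hxy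
      ((hyu y hy).succ_of_color_ne c hcy (even_two_pow_sub_two e)) hub).mono subset_rfl (by lia)
  push Not at hau₀ hub₁ hodd
  have hA₀ := h.eq_singleton hau₀.symm
  subst hA₀ hub₁
  have hyu' := h.longPathIn_lobe_succ c he hW hcab hodd hdegB hdegS hz IH hy
  exact (h.longPathIn_of_link hW.toIsLobe hau (hux x hx) hxy hyu' hub).mono subset_rfl (by lia)

theorem IsLobeConfig.longPathIn_of_longPathIn_lobe (h : IsLobeConfig G S A₀ W₀ B u₀ a b)
    (hux : LongPathIn G (insert u₀ W₀) k u₀ x) (hxy : G.Adj x y) (hy : y ∈ B) :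
    LongPathIn G S k a b := by
  have hunion := h.union_eq
  have hdisj := Finset.disjoint_left.1 h.disjoint_chain_lobe
  have hdisj' := Finset.disjoint_left.1 h.disjoint_chain_right
  have hdisj'' := Finset.disjoint_left.1 h.disjoint_lobe_right
  have huA := h.cut_mem
  refine (((h.connectedOn_chain a h.left_mem u₀ huA).longPathIn.glue hux ?_).join hxy
    (h.connectedOn_right y hy b h.right_mem).longPathIn ?_).mono ?_ (by lia)
  · grind
  · rw [Finset.disjoint_left]; grind
  · grind

theorem IsLobeConfig.longPathIn (c : G.Coloring Bool) (he : 2 ≤ e)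
    (h : IsLobeConfig G S A₀ W₀ B u₀ a b) (hS : BiconnectedOn G S)
    (hux : ∀ x ∈ W₀, LongPathIn G (insert u₀ W₀) (2 ^ e - 2) u₀ x)
    (hux' : ∀ x ∈ W₀, (∀ w ∈ W₀, ∀ v ∈ B, G.Adj w v → w = x) →
      LongPathIn G (insert u₀ W₀) (2 ^ (e + 1) - 2) u₀ x)
    (hdegB : ∀ v ∈ B, v ≠ b → e ≤ degreeIn G B v)
    (hdegS : ∀ v ∈ B, v ≠ b → v ≠ z → e + 1 ≤ degreeIn G S v) (hz : z = b ∨ 3 ≤ e)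
    (IH : ∀ T : Finset V, HasLongPaths G e T)
    (IH' : ∀ T : Finset V, T.card < S.card → HasLongPaths G (e + 1) T) :
    LongPathIn G S (2 ^ (e + 1) - 2) a b := by
  obtain ⟨x₁, hx₁, y₁, hy₁, hxy₁⟩ := h.exists_lobe_adj_right hS
  by_cases hall : ∀ w ∈ W₀, ∀ v ∈ B, G.Adj w v → w = x₁
  · exact h.longPathIn_of_longPathIn_lobe (hux' x₁ hx₁ hall) hxy₁ hy₁
  push Not at hall
  obtain ⟨x₂, hx₂, y₂, hy₂, hxy₂, hne⟩ := hall
  have hy₁₂ : y₁ ≠ y₂ := by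
    rintro rfl
    exact hne (h.matched_right y₁ hy₁ x₂ (by simp [hx₂]) x₁ (by simp [hx₁]) hxy₂.symm hxy₁.symm)
  obtain ⟨W₁, u₁, hW, y, ⟨-, x, hx, hxy⟩, hy⟩ := exists_endLobe_mem_or_reachableIn_root
    (Y := {y | y ∈ B ∧ ∃ x ∈ W₀, G.Adj x y}) h.connectedOn_right h.right_mem (fun y hy => hy.1)
    ⟨y₁, ⟨hy₁, x₁, hx₁, hxy₁⟩, y₂, ⟨hy₂, x₂, hx₂, hxy₂⟩, hy₁₂⟩
  have hb : ∀ v ∈ W₁, v ≠ b := fun v hv hvb => hW.root_notMem (hvb ▸ hv)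
  replace hdegB : ∀ v ∈ W₁, e ≤ degreeIn G B v := fun v hv => hdegB v (hW.subset hv) (hb v hv)
  replace hdegS : ∀ v ∈ W₁, v ≠ z → e + 1 ≤ degreeIn G S v := fun v hv =>
    hdegS v (hW.subset hv) (hb v hv)
  by_cases hadj : ∃ x ∈ W₀, ∃ y ∈ W₁, G.Adj x y
  · obtain ⟨x, hx, y, hy, hxy⟩ := hadj
    exact h.longPathIn_of_adj c he hW hux hdegB hdegS hz IH hx hy hxy
  push Not at hadj
  have hyb := hy.resolve_left fun hy => hadj x hx y hy hxy
  obtain ⟨w, hw⟩ := hW.nonempty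
  have htwo : ∃ v ∈ W₁, 2 ≤ degreeIn G B v := ⟨w, hw, he.trans (hdegB w hw)⟩
  refine h.longPathIn_of_not_adj c hS hW hadj hdegS htwo IH' (hux x hx) hxy
    (Finset.insert_subset hW.cut_mem hW.subset) (fun p hp p' hp' hpp => ?_) hyb.longPathIn
    (g := 2 ^ e - 2) (by rw [two_pow_succ_sub_two (by lia)]; lia)
  -- The cut vertex `u₁` may have low degree in its block: this is what the exceptional vertex in
  -- `HasLongPaths` is for.
  exact hW.longPathIn c h.connectedOn_right (IH _) (z := u₁) (by simp [hp]) (by simp [hp']) hpp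
    (.inr (.inr rfl)) (fun v hv _ _ _ => hdegB v hv) htwo

end Assembly

section LobeSelection

/-! ### Choosing the end lobe -/

variable {V : Type*} [DecidableEq V] {G : SimpleGraph V} {S A B X Y A₀ W₀ : Finset V}
  {a b r s u v z z₁ z₂ : V} {e : ℕ}

theorem IsLobe.inter (h : IsLobe G B X u r) (h' : IsLobe G B Y s r) (hB : ConnectedOn G B)
    (hr : r ∈ B) (hz : z ∈ X ∩ Y) : ∃ t, IsLobe G B (X ∩ Y) t r := by
  have hclosed := h.closed
  have hclosed' := h'.closed
  have hrX := h.root_notMem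
  have hrY := h'.root_notMem
  have hXB := h.subset
  have huX := h.cut_notMem
  have hsY := h'.cut_notMem
  by_cases hu : u ∈ Y
  · have hsX : s ∉ X := by
      intro hs
      obtain ⟨p, q, hp, -, hpq, hq, hqXY⟩ := (hB z (by grind) r hr).exists_exit (T := X ∪ Y)
        (by grind) (by grind)
      grind
    exact ⟨u, ⟨z, hz⟩, by grind, by grind, h.cut_mem, by grind, by grind⟩
  · exact ⟨s, ⟨z, hz⟩, by grind, by grind, h'.cut_mem, by grind, by grind⟩

theorem IsLobe.exists_endLobe_mem_or_mem_chainPart (h : IsLobe G A X u a) (hA : ConnectedOn G A)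
    (ha : a ∈ A) (hz : z ∈ X) :
    ∃ W v, IsEndLobe G A W v a ∧ (z ∈ W ∨ z ∈ chainPart G (A \ W) a v) := by
  induction X using Finset.strongInduction generalizing u with
  | H X ih =>
  obtain ⟨W, v, hWX, hW⟩ := h.exists_endLobe
  by_cases hzW : z ∈ W
  · exact ⟨W, v, hW, .inl hzW⟩
  by_cases hzC : z ∈ chainPart G (A \ W) a v
  · exact ⟨W, v, hW, .inr hzC⟩
  obtain ⟨Y, s, hY, hzY, hYW, -⟩ := hW.exists_isLobe_disjoint_chainPart hA ha
    (Finset.mem_sdiff.2 ⟨h.subset hz, hzW⟩) hzC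
  have hzXY : z ∈ X ∩ Y := Finset.mem_inter.2 ⟨hz, hzY⟩
  obtain ⟨t, ht⟩ := h.inter hY hA ha hzXY
  obtain ⟨w, hw⟩ := hW.nonempty
  exact ih (X ∩ Y) (Finset.ssubset_iff_of_subset Finset.inter_subset_left |>.2
    ⟨w, hWX hw, by grind⟩) ht hzXY

theorem exists_endLobe_mem_or_mem_chainPart (hA : ConnectedOn G A) (ha : a ∈ A)
    (hnontriv : ∃ v ∈ A, v ≠ a) (hz : z ∈ A) :
    ∃ W v, IsEndLobe G A W v a ∧ (z ∈ W ∨ z ∈ chainPart G (A \ W) a v) := by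
  rcases eq_or_ne z a with rfl | hza
  · obtain ⟨v, hv, hva⟩ := hnontriv
    obtain ⟨W, u, -, hW⟩ := (isLobe_erase (G := G) ha hv hva).exists_endLobe
    exact ⟨W, u, hW, .inr (left_mem_chainPart (Finset.mem_sdiff.2 ⟨ha, hW.root_notMem⟩))⟩
  · exact (isLobe_erase ha hz hza).exists_endLobe_mem_or_mem_chainPart hA ha (by simp [hz, hza])

theorem IsLobeConfig.degreeIn_le_right_add_one (h : IsLobeConfig G S A₀ W₀ B u a b) (hv : v ∈ B) :
    degreeIn G S v ≤ degreeIn G B v + 1 := by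
  have hunion := h.union_eq
  exact degreeIn_le_degreeIn_add_one fun w hw w' hw' hvw hvw' hwB hwB' =>
    h.matched_right v hv w (by grind) w' (by grind) hvw hvw'

theorem IsMatchedPartition.longPathIn (c : G.Coloring Bool) (he : 2 ≤ e) (hS : BiconnectedOn G S)
    (hAB : IsMatchedPartition G S A B a b) (hnontriv : ∃ v ∈ A, v ≠ a) (hz₁ : z₁ ∈ A)
    (hz₂ : z₂ ∈ B) (hdegA : ∀ v ∈ A, v ≠ a → v ≠ z₁ → e ≤ degreeIn G A v)
    (hdegz₁ : z₁ ≠ a → 2 ≤ degreeIn G A z₁) (hdegB : ∀ v ∈ B, v ≠ b → e ≤ degreeIn G B v)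
    (hdegS : ∀ v ∈ S, v ≠ a → v ≠ b → v ≠ z₁ → v ≠ z₂ → e + 1 ≤ degreeIn G S v)
    (hz : z₂ = b ∨ 3 ≤ e) (IH : ∀ T : Finset V, HasLongPaths G e T)
    (IH' : ∀ T : Finset V, T.card < S.card → HasLongPaths G (e + 1) T) :
    LongPathIn G S (2 ^ (e + 1) - 2) a b := by
  obtain ⟨W, u, hW, hzW⟩ :=
    exists_endLobe_mem_or_mem_chainPart hAB.connectedOn_left hAB.left_mem hnontriv hz₁
  obtain ⟨B', hBB, h⟩ := hW.exists_isLobeConfig hS hAB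
  have hdisj := Finset.disjoint_left.1 hAB.disjoint
  have hAB_union := hAB.union_eq
  have hbB := hAB.right_mem
  have hWA := hW.subset
  have huA := hW.cut_mem
  have ha : ∀ v ∈ W, v ≠ a := fun v hv hva => hW.root_notMem (hva ▸ hv)
  have hux : ∀ x ∈ W, u ≠ x := fun x hx hux => hW.cut_notMem (hux ▸ hx)
  have htwo : ∃ v ∈ W, 2 ≤ degreeIn G A v := by
    obtain ⟨w, hw⟩ := hW.nonempty
    by_cases hwz : w = z₁
    · exact ⟨w, hw, hwz ▸ hdegz₁ (hwz ▸ ha w hw)⟩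
    · exact ⟨w, hw, he.trans (hdegA w (hWA hw) (ha w hw) hwz)⟩
  have hdegS' : ∀ v ∈ B', v ≠ b → v ≠ z₂ → e + 1 ≤ degreeIn G S v := by
    intro v hv hvb hvz
    have hdisj₁ := Finset.disjoint_left.1 h.disjoint_chain_right
    have hdisj₂ := Finset.disjoint_left.1 h.disjoint_lobe_right
    exact hdegS v (h.union_eq ▸ Finset.mem_union_right _ hv)
      (fun hva => hdisj₁ h.left_mem (hva ▸ hv)) hvb (by grind) hvz
  refine h.longPathIn c he hS (fun x hx => ?_) (fun x hx hfoot => ?_) (fun v hv hvb => ?_) hdegS'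
    hz IH IH'
  · exact hW.longPathIn c hAB.connectedOn_left (IH _) (z := z₁) (by simp) (by simp [hx])
      (hux x hx) (.inl rfl) (fun v hv _ _ hvz => hdegA v (hWA hv) (ha v hv) hvz) htwo
  · have hlt : (insert u W).card < S.card :=
      Finset.card_lt_card (Finset.ssubset_iff_of_subset (by grind) |>.2 ⟨b, by grind, by grind⟩)
    refine hW.longPathIn c hAB.connectedOn_left (IH' _ hlt) (z := z₁) (by simp) (by simp [hx])
      (hux x hx) (.inl rfl) (fun v hv _ hvx hvz => ?_) htwo
    exact (hdegS v (by grind) (ha v hv) (by grind) hvz (by grind)).trans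
      (degreeIn_le_degreeIn fun w hw hvw => by grind)
  · by_cases hvB : v ∈ B
    · exact (hdegB v hvB hvb).trans (degreeIn_le_degreeIn fun w hw _ => hBB hw)
    · have := h.degreeIn_le_right_add_one hv
      have := hdegS' v hv hvb (fun hvz => hvB (hvz ▸ hz₂))
      lia

end LobeSelection

section DegreeTwo

/-! ### Exceptional vertices of degree two -/

variable {V : Type*} [DecidableEq V] {G : SimpleGraph V} {S B W : Finset V}
  {a b p q t u x y y₁ y₂ z : V} {d k : ℕ}

theorem IsEndLobe.longPathIn_root (c : G.Coloring Bool) (h : IsEndLobe G B W u b)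
    (hB : ConnectedOn G B) (hb : b ∈ B) (ha : a ∈ W)
    (hdeg : ∀ v ∈ W, v ≠ a → v ≠ z → d ≤ degreeIn G B v) (htwo : ∃ v ∈ W, 2 ≤ degreeIn G B v)
    (hP : HasLongPaths G d (insert u W)) : LongPathIn G B (2 ^ d - 2) a b := by
  have hau : LongPathIn G (insert u W) (2 ^ d - 2) a u :=
    h.longPathIn c hB hP (z := z) (by simp [ha]) (by simp) (fun hau => h.cut_notMem (hau ▸ ha))
      (.inr (.inl rfl)) (fun v hv hva _ hvz => hdeg v hv hva hvz) htwo
  have hub := (h.reachableIn_sdiff_cut hB hb h.root_notMem).symm.longPathIn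
  have hWB := h.subset
  have huB := h.cut_mem
  refine (hau.glue hub ?_).mono ?_ (by lia) <;> grind

theorem IsLobe.isBlockChain_sdiff (h : IsLobe G (S.erase z) W u b) (hS : BiconnectedOn G S)
    (hp : p ∈ W) (hzz : ∀ w ∈ S, G.Adj z w → w = p ∨ w = q) :
    IsBlockChain G (S.erase z \ W) u q := by
  intro s v hv hvs
  by_cases hs : s ∈ S.erase z \ W
  · have hWS := h.subset
    obtain ⟨x, y, hx, hvx, hxy, hy, hyW⟩ := (hS s v (by grind) p (by grind)).exists_exit hv
      (fun hpW => (Finset.mem_sdiff.1 hpW).2 hp)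
    have hvx : ReachableIn G ((S.erase z \ W).erase s) v x := hvx.mono (by grind)
    by_cases hyz : y = z
    · have := hzz x (by grind) (hyz ▸ hxy.symm)
      exact .inr (by grind)
    · have := h.closed y (by grind) x (by grind) hxy.symm
      exact .inl (by grind)
  · rw [Finset.erase_eq_of_notMem hs]
    rw [Finset.mem_sdiff] at hv
    exact .inl (h.reachableIn_sdiff_cut (hS z) hv.1 hv.2)

theorem IsLobe.left_mem_or_right_mem_of_isBlockChain (h : IsLobe G B W u b)
    (hB : IsBlockChain G B x y) : x ∈ W ∨ y ∈ W := by
  obtain ⟨w, hw⟩ := h.nonempty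
  have hmem : ∀ t, ReachableIn G (B.erase u) w t → t ∈ W := by
    intro t hwt
    by_contra htW
    obtain ⟨p, q, hp, -, hpq, hq, hqW⟩ := hwt.exists_exit hw htW
    rw [Finset.mem_erase] at hq
    exact (h.closed p hp q hq.2 hpq).elim hqW hq.1
  exact (hB u w (h.subset hw) (fun hwu => h.cut_notMem (hwu ▸ hw))).imp (hmem x) (hmem y)

theorem IsLobe.longPathIn_of_linked (h : IsLobe G (S.erase z) W u b) (hz : z ∈ S)
    (hup : LongPathIn G (insert u W) k u p) (hpz : G.Adj p z) (hzq : G.Adj z q)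
    (hlink : Linked G (S.erase z \ W) u x y q) : LongPathIn G S k x y := by
  obtain ⟨P, Q, hP, hQ, hPQ, hux, hyq⟩ := hlink
  have huP := hux.left_mem
  have hWS := h.subset
  rw [Finset.disjoint_left] at hPQ
  have hzy := (LongPathIn.refl (G := G) (Finset.mem_singleton_self z)).join hzq
    hyq.symm.longPathIn (by rw [Finset.disjoint_left]; grind)
  refine ((hux.symm.longPathIn.glue hup ?_).join hpz hzy ?_).mono ?_ (by lia)
  · grind
  · rw [Finset.disjoint_left]; grind
  · grind

theorem IsEndLobe.longPathIn_of_left_notMem (c : G.Coloring Bool)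
    (h : IsEndLobe G (S.erase z) W u b) (hS : BiconnectedOn G S) (ha : a ∈ S.erase z \ W)
    (hb : b ∈ S.erase z) (hab : a ≠ b) (hz : z ∈ S) (hp : p ∈ W) (hq : q ∈ S.erase z \ W)
    (hzp : G.Adj z p) (hzq : G.Adj z q) (hzz : ∀ w ∈ S, G.Adj z w → w = p ∨ w = q)
    (hdeg : ∀ v ∈ W, v ≠ p → d ≤ degreeIn G (S.erase z) v)
    (htwo : 2 ≤ degreeIn G (S.erase z) p) (hP : HasLongPaths G d (insert u W)) :
    LongPathIn G S (2 ^ d - 2) a b := by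
  have hup : LongPathIn G (insert u W) (2 ^ d - 2) u p :=
    h.longPathIn c (hS z) hP (z := p) (by simp) (by simp [hp])
      (fun hup => h.cut_notMem (hup ▸ hp)) (.inl rfl) (fun v hv _ hvp _ => hdeg v hv hvp)
      ⟨p, hp, htwo⟩
  rcases (h.isBlockChain_sdiff hS hp hzz).linked (h.connectedOn_sdiff (hS z))
    (Finset.mem_sdiff.2 ⟨h.cut_mem, h.cut_notMem⟩) hq ha
    (Finset.mem_sdiff.2 ⟨hb, h.root_notMem⟩) hab with hlink | hlink
  · exact h.longPathIn_of_linked hz hup hzp.symm hzq hlink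
  · exact (h.longPathIn_of_linked hz hup hzp.symm hzq hlink).symm

theorem IsLobe.longPathIn_sdiff_singleton (c : G.Coloring Bool) (hd : 3 ≤ d)
    (h : IsLobe G (S.erase z) {a} u b) (hS : BiconnectedOn G S) (hb : b ∈ S.erase z)
    (hz : z ∈ S) (hq : q ∈ S.erase z \ {a}) (hqu : q ≠ u)
    (hzz : ∀ w ∈ S, G.Adj z w → w = a ∨ w = q)
    (hdeg : ∀ v ∈ S, v ≠ a → v ≠ b → v ≠ z → d ≤ degreeIn G S v)
    (IH : ∀ T : Finset V, T.card < S.card → HasLongPaths G d T) :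
    LongPathIn G (S.erase z \ {a}) (2 ^ d - 2) u b ∨
      LongPathIn G (S.erase z \ {a}) (2 ^ d - 2) q b := by
  set R := S.erase z \ {a}
  have hconn : ConnectedOn G R := h.connectedOn_sdiff (hS z)
  have huR : u ∈ R := Finset.mem_sdiff.2 ⟨h.cut_mem, h.cut_notMem⟩
  have hbR : b ∈ R := Finset.mem_sdiff.2 ⟨hb, h.root_notMem⟩
  have haR : ∀ v ∈ R, G.Adj v a → v = u := fun v hv hva => by
    have := h.closed a (by simp) v (by grind) hva.symm
    grind
  have hzR : ∀ v ∈ R, G.Adj v z → v = q := fun v hv hvz => by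
    have := hzz v (by grind) hvz.symm
    grind
  obtain ⟨y, hy, hyb⟩ : ∃ y ∈ R, y ≠ b := by
    by_cases hub : u = b
    · exact ⟨q, hq, hub ▸ hqu⟩
    · exact ⟨u, huR, hub⟩
  obtain ⟨W, t, -, hW⟩ := (isLobe_erase (G := G) hbR hy hyb).exists_endLobe
  have hWR := hW.subset
  have hbW := hW.root_notMem
  have htR := hW.cut_mem
  have hlt : (insert t W).card < S.card :=
    Finset.card_lt_card (Finset.ssubset_iff_of_subset (by grind) |>.2 ⟨z, hz, by grind⟩)
  have hdegR : ∀ v ∈ W, v ≠ u → v ≠ q → d ≤ degreeIn G R v := fun v hv hvu hvq =>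
    (hdeg v (by grind) (by grind) (by grind) (by grind)).trans
      (degreeIn_le_degreeIn fun w hw hvw => by grind)
  have htwo : ∃ v ∈ W, 2 ≤ degreeIn G R v := by
    obtain ⟨v, hv⟩ := hW.nonempty
    have hle : degreeIn G S v ≤ degreeIn G R v + 1 :=
      degreeIn_le_degreeIn_add_one fun w hw w' hw' hvw hvw' hwR hwR' => by grind
    have := hdeg v (by grind) (by grind) (by grind) (by grind)
    exact ⟨v, hv, by lia⟩
  exact (hW.left_mem_or_right_mem_of_isBlockChain (h.isBlockChain_sdiff hS (by simp) hzz)).imp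
    (fun hu => hW.longPathIn_root c hconn hbR hu hdegR htwo (IH _ hlt))
    (fun hq => hW.longPathIn_root c hconn hbR hq (fun v hv hvq hvu => hdegR v hv hvu hvq) htwo
      (IH _ hlt))

theorem IsLobe.longPathIn_of_singleton (c : G.Coloring Bool) (hd : 3 ≤ d)
    (h : IsLobe G (S.erase z) {a} u b) (hS : BiconnectedOn G S) (ha : a ∈ S) (hb : b ∈ S.erase z)
    (hz : z ∈ S) (hza : G.Adj z a) (hzq : G.Adj z q) (hq : q ∈ S.erase z \ {a}) (hqu : q ≠ u)
    (hzz : ∀ w ∈ S, G.Adj z w → w = a ∨ w = q)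
    (hdeg : ∀ v ∈ S, v ≠ a → v ≠ b → v ≠ z → d ≤ degreeIn G S v)
    (IH : ∀ T : Finset V, T.card < S.card → HasLongPaths G d T) :
    LongPathIn G S (2 ^ d - 2) a b := by
  rcases h.longPathIn_sdiff_singleton c hd hS hb hz hq hqu hzz hdeg IH with hub | hqb
  · obtain ⟨w, hw, hwu⟩ := h.exists_adj_cut (hS z)
    rw [Finset.mem_singleton] at hw
    refine ((LongPathIn.refl (Finset.mem_singleton_self a)).join (hw ▸ hwu) hub ?_).mono ?_ (by lia)
    · rw [Finset.disjoint_left]; grind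
    · grind
  · refine ((reachableIn_of_adj (S := {a, z}) hza.symm (by simp) (by simp)).longPathIn.join hzq
      hqb ?_).mono ?_ (by lia)
    · rw [Finset.disjoint_left]; grind
    · grind

theorem IsEndLobe.longPathIn_of_erase (c : G.Coloring Bool) (hd : 3 ≤ d)
    (h : IsEndLobe G (S.erase z) W u b) (hS : BiconnectedOn G S) (ha : a ∈ S.erase z)
    (hb : b ∈ S.erase z) (hab : a ≠ b) (hz : z ∈ S) (hp : p ∈ W) (hq : q ∈ S.erase z)
    (hqW : q ∉ insert u W) (hzp : G.Adj z p) (hzq : G.Adj z q)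
    (hzz : ∀ w ∈ S, G.Adj z w → w = p ∨ w = q)
    (hdeg : ∀ v ∈ S, v ≠ a → v ≠ b → v ≠ z → d ≤ degreeIn G S v)
    (IH : ∀ T : Finset V, T.card < S.card → HasLongPaths G d T) :
    LongPathIn G S (2 ^ d - 2) a b := by
  have hWS := h.subset
  have huS := h.cut_mem
  have hbW := h.root_notMem
  have hlt : (insert u W).card < S.card :=
    Finset.card_lt_card (Finset.ssubset_iff_of_subset (by grind) |>.2 ⟨z, hz, by grind⟩)
  have hdegW : ∀ v ∈ W, v ≠ a → v ≠ p → d ≤ degreeIn G (S.erase z) v := fun v hv hva hvp =>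
    (hdeg v (by grind) hva (by grind) (by grind)).trans
      (degreeIn_le_degreeIn_erase fun hvz => by
        have := hzz v (by grind) hvz.symm
        grind)
  have htwo : ∀ v ∈ W, v ≠ a → 2 ≤ degreeIn G (S.erase z) v := fun v hv hva => by
    have := hdeg v (by grind) hva (by grind) (by grind)
    have := degreeIn_le_degreeIn_erase_add_one (G := G) (S := S) (v := v) (z := z)
    lia
  by_cases haW : a ∈ W
  · by_cases hsingle : ∃ v ∈ W, v ≠ a
    · obtain ⟨v, hv, hva⟩ := hsingle
      exact (h.longPathIn_root c (hS z) hb haW hdegW ⟨v, hv, htwo v hv hva⟩ (IH _ hlt)).mono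
        (Finset.erase_subset z S) le_rfl
    · push Not at hsingle
      obtain rfl := hsingle p hp
      obtain rfl : W = {p} := by grind
      exact h.longPathIn_of_singleton c hd hS (by grind) hb hz hzp hzq (by grind) (by grind) hzz
        hdeg IH
  · have hva : ∀ v ∈ W, v ≠ a := fun v hv hva => haW (hva ▸ hv)
    exact h.longPathIn_of_left_notMem c hS (by grind) hb hab hz hp (by grind) hzp hzq hzz
      (fun v hv hvp => hdegW v hv (hva v hv) hvp) (htwo p hp (hva p hp)) (IH _ hlt)

theorem IsLobe.exists_adj_erased (h : IsLobe G (S.erase z) W u b) (hS : BiconnectedOn G S)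
    (ht : t ∈ S.erase z) (htW : t ∉ insert u W) :
    ∃ p ∈ W, ∃ q ∈ S.erase z, q ∉ insert u W ∧ G.Adj z p ∧ G.Adj z q := by
  have hWS := h.subset
  have huW := h.cut_notMem
  obtain ⟨w, hw⟩ := h.nonempty
  have hwt : ReachableIn G (S.erase u) w t := hS u w (by grind) t (by grind)
  obtain ⟨p, r, hp, -, hpr, hr, hrW⟩ := hwt.exists_exit hw (by grind)
  obtain ⟨q, s, hq, -, hqs, hs, hsW⟩ := hwt.symm.exists_exit (T := S.erase z \ insert u W)
    (by grind) (by grind)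
  have hrz : r = z := by
    by_contra hrz
    have := h.closed p hp r (by grind) hpr
    grind
  have hsz : s = z := by
    by_contra hsz
    have := h.closed s (by grind) q (by grind) hqs.symm
    grind
  exact ⟨p, hp, q, by grind, by grind, hrz ▸ hpr.symm, hsz ▸ hqs.symm⟩

theorem longPathIn_or_biconnectedOn_erase (c : G.Coloring Bool) (hd : 3 ≤ d)
    (hS : BiconnectedOn G S) (hcard : 4 ≤ S.card) (ha : a ∈ S.erase z) (hb : b ∈ S.erase z)
    (hab : a ≠ b) (hz : z ∈ S) (hzz : ∀ w ∈ S, G.Adj z w → w = y₁ ∨ w = y₂)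
    (hdeg : ∀ v ∈ S, v ≠ a → v ≠ b → v ≠ z → d ≤ degreeIn G S v)
    (IH : ∀ T : Finset V, T.card < S.card → HasLongPaths G d T) :
    LongPathIn G S (2 ^ d - 2) a b ∨
      BiconnectedOn G (S.erase z) ∧ y₁ ≠ a ∧ y₁ ≠ b ∧ y₂ ≠ a ∧ y₂ ≠ b := by
  by_cases hbic : BiconnectedOn G (S.erase z)
  · rw [or_iff_not_imp_right]
    intro hne
    obtain ⟨y, hy⟩ : ∃ y, ∀ v, v ≠ a → v ≠ b → v ≠ y → v ≠ y₁ ∧ v ≠ y₂ := by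
      by_cases hy : y₁ = a ∨ y₁ = b
      · exact ⟨y₂, by grind⟩
      · exact ⟨y₁, by grind⟩
    have hcard' := Finset.card_erase_of_mem hz
    refine (IH (S.erase z) (by lia) (hbic.four_le_card c (by lia)) hbic a ha b hb hab y
      fun v hv hva hvb hvy => ?_).mono (Finset.erase_subset z S) le_rfl
    exact (hdeg v (by grind) hva hvb (by grind)).trans (degreeIn_le_degreeIn_erase fun hvz => by
      have := hzz v (by grind) hvz.symm
      grind)
  · left
    obtain ⟨W, u, -, hW⟩ := (isLobe_erase (G := G) hb ha hab).exists_endLobe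
    obtain ⟨t, ht, htW⟩ : ∃ t ∈ S.erase z, t ∉ insert u W := by
      by_contra! hcover
      have hWS : insert u W ⊆ S.erase z := Finset.insert_subset hW.cut_mem hW.subset
      exact hbic (hWS.antisymm hcover ▸ hW.biconnectedOn (hS z))
    obtain ⟨p, hp, q, hq, hqW, hzp, hzq⟩ := hW.exists_adj_erased hS ht htW
    refine hW.longPathIn_of_erase c hd hS ha hb hab hz hp hq hqW hzp hzq (fun w hw hzw => ?_)
      hdeg IH
    have := hW.subset hp
    have := hzz p (by grind) hzp
    have := hzz q (by grind) hzq
    have := hzz w hw hzw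
    grind

end DegreeTwo

section Pendant

/-! ### Exceptional vertices of degree one in their part, for `d = 3` -/

variable {V : Type*} {G : SimpleGraph V} {S A B W A₀ H : Finset V} {a b t u v x y y₁ y₂ z : V}
  {k₀ k₁ k₂ : ℕ}

theorem color_eq_of_adj_of_adj (c : G.Coloring Bool) (hxy : G.Adj x y) (hyz : G.Adj y z) :
    c x = c z := by
  rw [Bool.eq_not_of_ne (c.valid hxy), Bool.eq_not_of_ne (c.valid hyz), Bool.not_not]

theorem ReachableIn.longPathIn_two (c : G.Coloring Bool) (h : ReachableIn G S x y) (hxy : x ≠ y)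
    (hc : c x = c y) : LongPathIn G S 2 x y :=
  (h.longPathIn.one_of_ne hxy).succ_of_color_eq c hc odd_one

variable [DecidableEq V]

theorem BiconnectedOn.isBlockChain (h : BiconnectedOn G S) (hx : x ∈ S) (hy : y ∈ S)
    (hxy : x ≠ y) : IsBlockChain G S x y := by
  intro s v hv hvs
  have hvS : v ∈ S.erase s := Finset.mem_erase.2 ⟨hvs, hv⟩
  by_cases hs : x = s
  · exact .inr (h s v hvS y (Finset.mem_erase.2 ⟨hs ▸ hxy.symm, hy⟩))
  · exact .inl (h s v hvS x (Finset.mem_erase.2 ⟨hs, hx⟩))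

theorem BiconnectedOn.longPathIn_four (c : G.Coloring Bool) (h : BiconnectedOn G S)
    (hx : x ∈ S) (hy : y ∈ S) (hv : v ∈ S) (hxy : x ≠ y) (hvx : v ≠ x) (hvy : v ≠ y)
    (hcx : c v = c x) (hcy : c v = c y) : LongPathIn G S 4 x y := by
  have hcard : 3 ≤ S.card := by
    rw [← Finset.card_eq_three.2 ⟨x, y, v, hxy, hvx.symm, hvy.symm, rfl⟩]
    exact Finset.card_le_card (by grind)
  obtain ⟨P, Q, hP, hQ, hPQ, hxv, hvy'⟩ :=
    (h.isBlockChain hx hy hxy).exists_split (h.connectedOn hcard) hx hy hv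
  exact ((hxv.longPathIn_two c hvx.symm hcx.symm).glue (hvy'.longPathIn_two c hvy hcy) hPQ).mono
    (Finset.union_subset hP hQ) le_rfl

theorem IsBlockChain.longPathIn_three (c : G.Coloring Bool) (h : IsBlockChain G H a u)
    (hH : ConnectedOn G H) (ha : a ∈ H) (hu : u ∈ H) (hv : v ∈ H) (hvu : v ≠ u)
    (hcv : c v = c u) (hca : c a ≠ c u) : LongPathIn G H 3 a u := by
  obtain ⟨P, Q, hP, hQ, hPQ, hav, hvu'⟩ := h.exists_split hH ha hu hv
  have hne : a ≠ v := fun hav => hca (hav ▸ hcv)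
  exact ((hav.longPathIn.one_of_ne hne).glue (hvu'.longPathIn_two c hvu hcv) hPQ).mono
    (Finset.union_subset hP hQ) le_rfl

theorem IsLobeConfig.longPathIn_of_singleton_link (h : IsLobeConfig G S A₀ {z} B y₁ a b)
    (hW : IsLobe G B W u b) (hzy₁ : G.Adj z y₁) (hzy₂ : G.Adj z y₂) (h₀ : LongPathIn G A₀ k₀ a y₁)
    (h₁ : LongPathIn G (insert u W) k₁ y₂ u) (h₂ : LongPathIn G (B \ W) k₂ u b) :
    LongPathIn G S (k₀ + k₁ + k₂ + 2) a b := by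
  have hyz := (reachableIn_of_adj (S := insert y₁ {z}) hzy₁.symm (by simp) (by simp)).longPathIn
  exact (h.longPathIn_of_link hW h₀ (hyz.one_of_ne hzy₁.ne') hzy₂ h₁ h₂).mono subset_rfl (by lia)

theorem IsLobeConfig.adj_root_and_exists_adj_chain (c : G.Coloring Bool)
    (h : IsLobeConfig G S A₀ {z} B y₁ a b) (hW : IsLobe G B W b b) (hy₂ : y₂ ∈ W)
    (hzy₂ : G.Adj z y₂) (hcy₂ : c y₂ = c b) (hunique : ∀ v ∈ W, c v = c b → v = y₂)
    (ht : t ∈ B) (hyt : G.Adj y₂ t) (hdeg : 3 ≤ degreeIn G S t) :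
    G.Adj t b ∧ ∃ g ∈ A₀, G.Adj t g ∧ c g = c b := by
  have hct : c t ≠ c b := hcy₂ ▸ (c.valid hyt).symm
  have htb : t ≠ b := fun htb => hct (htb ▸ rfl)
  have htW : t ∈ W := (hW.closed y₂ hy₂ t ht hyt).resolve_right htb
  have hcol : ∀ w, G.Adj t w → c w = c b := fun w htw =>
    (color_eq_of_adj_of_adj c htw.symm hyt.symm).trans hcy₂
  have hnbr : ∀ w ∈ B, G.Adj t w → w = y₂ ∨ w = b := fun w hw htw =>
    (hW.closed t htW w hw htw).imp_left fun hwW => hunique w hwW (hcol w htw)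
  constructor
  · have := h.degreeIn_le_right_add_one ht
    obtain ⟨w, hw, w', hw', hne, htw, htw'⟩ := two_le_degreeIn_iff.1
      (show 2 ≤ degreeIn G B t by lia)
    grind
  · by_contra! hno
    have hle : degreeIn G S t ≤ 2 := degreeIn_le_two (x := y₂) (y := b) fun w hw htw => by
      have hunion := h.union_eq
      have hzb : c z ≠ c b := hcy₂ ▸ c.valid hzy₂
      grind
    lia

theorem IsLobeConfig.exists_mem_chain_color_eq (c : G.Coloring Bool) (hG : HasMatchingCuts G)
    (h : IsLobeConfig G S A₀ {z} B y₁ a b) (hW : IsLobe G B W b b) (hy₂ : y₂ ∈ W)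
    (hzy₂ : G.Adj z y₂) (hcy₂ : c y₂ = c b) (hunique : ∀ v ∈ W, c v = c b → v = y₂)
    (hdeg : ∀ v ∈ W, 3 ≤ degreeIn G S v) : ∃ g ∈ A₀, g ≠ y₁ ∧ c g = c b := by
  have hy₂B := hW.subset hy₂
  have hb := h.right_mem
  have hbW := hW.root_notMem
  have hdisj := Finset.disjoint_left.1 h.disjoint_chain_right
  have hle := h.degreeIn_le_right_add_one hy₂B
  have hdeg₂ := hdeg y₂ hy₂
  obtain ⟨t, ht, t', ht', hne, hyt, hyt'⟩ := two_le_degreeIn_iff.1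
    (show 2 ≤ degreeIn G B y₂ by lia)
  have hne_root : ∀ t, G.Adj y₂ t → t ≠ b := fun t hyt htb => c.valid hyt (htb ▸ hcy₂)
  have hkey : ∀ t ∈ B, G.Adj y₂ t → G.Adj t b ∧ ∃ g ∈ A₀, G.Adj t g ∧ c g = c b :=
    fun t ht hyt => h.adj_root_and_exists_adj_chain c hW hy₂ hzy₂ hcy₂ hunique ht hyt
      (hdeg t ((hW.closed y₂ hy₂ t ht hyt).resolve_right (hne_root t hyt)))
  obtain ⟨htb, g, hg, htg, hcg⟩ := hkey t ht hyt
  obtain ⟨htb', g', hg', htg', hcg'⟩ := hkey t' ht' hyt'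
  by_contra! hno
  obtain rfl : g = y₁ := by_contra fun hgy => hno g hg hgy hcg
  obtain rfl : g' = g := by_contra fun hgy => hno g' hg' hgy hcg'
  exact hne (hG.eq_of_three_common_neighbors (p := y₂) (q := b) (r := g') (by grind) (by grind)
    (by grind) hyt.symm htb htg hyt'.symm htb' htg')

theorem IsLobeConfig.longPathIn_six_of_mem (c : G.Coloring Bool) (hG : HasMatchingCuts G)
    (h : IsLobeConfig G S A₀ {z} B y₁ a b) (hay₁ : a ≠ y₁) (hzy₁ : G.Adj z y₁)
    (hzy₂ : G.Adj z y₂) (hW : IsEndLobe G B W u b) (hy₂ : y₂ ∈ W)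
    (hdeg : ∀ v ∈ W, 3 ≤ degreeIn G S v) (IH : HasLongPaths G 2 (insert u W)) :
    LongPathIn G S 6 a b := by
  have hy₁ := h.cut_mem
  have hW' := hW.toIsLobe
  have hau := ((h.connectedOn_chain a h.left_mem y₁ hy₁).longPathIn.one_of_ne hay₁)
  have hy₂u : y₂ ≠ u := fun hyu => hW.cut_notMem (hyu ▸ hy₂)
  have hyu : LongPathIn G (insert u W) 2 y₂ u :=
    hW.longPathIn_cut c le_rfl h.connectedOn_right (fun v hv => by
      have := hdeg v hv
      have := h.degreeIn_le_right_add_one (hW.subset hv)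
      lia) IH hy₂
  have hub := (hW.reachableIn_sdiff_cut h.connectedOn_right h.right_mem
    hW.root_notMem).symm.longPathIn
  by_cases hub' : u ≠ b
  · exact h.longPathIn_of_singleton_link hW' hzy₁ hzy₂ hau hyu (hub.one_of_ne hub')
  obtain rfl : u = b := not_not.1 hub'
  by_cases hca : c a = c u
  · exact (h.longPathIn_of_singleton_link hW' hzy₁ hzy₂ hau hyu hub).succ_of_color_eq c hca
      (by decide)
  by_cases hcy₂ : c y₂ = c u
  swap
  · exact h.longPathIn_of_singleton_link hW' hzy₁ hzy₂ hau
      (hyu.succ_of_color_ne c hcy₂ (by decide)) hub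
  have hcy₁ : c y₁ = c u := (color_eq_of_adj_of_adj c hzy₁.symm hzy₂).trans hcy₂
  by_cases hunique : ∀ v ∈ W, c v = c u → v = y₂
  · obtain ⟨g, hg, hgy, hcg⟩ :=
      h.exists_mem_chain_color_eq c hG hW' hy₂ hzy₂ hcy₂ hunique hdeg
    have hau₃ : LongPathIn G A₀ 3 a y₁ := h.isBlockChain.longPathIn_three c h.connectedOn_chain
      h.left_mem hy₁ hg hgy (hcg.trans hcy₁.symm) (hcy₁ ▸ hca)
    exact (h.longPathIn_of_singleton_link hW' hzy₁ hzy₂ hau₃ hyu hub).mono subset_rfl (by lia)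
  · push Not at hunique
    obtain ⟨v, hv, hcv, hvy⟩ := hunique
    exact (h.longPathIn_of_singleton_link hW' hzy₁ hzy₂ hau
      ((hW.biconnectedOn h.connectedOn_right).longPathIn_four c (by simp [hy₂]) (by simp)
        (by simp [hv]) hy₂u hvy (fun hvu => hW.cut_notMem (hvu ▸ hv)) (hcv.trans hcy₂.symm) hcv)
      hub).mono subset_rfl (by lia)

theorem IsMatchedPartition.longPathIn_of_pendant (c : G.Coloring Bool) (hG : HasMatchingCuts G)
    (hS : BiconnectedOn G S) (hAB : IsMatchedPartition G S A B a b) (hz : z ∈ A) (hza : z ≠ a)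
    (hzy₁ : G.Adj z y₁) (hy₁ : y₁ ∈ A) (hay₁ : a ≠ y₁) (hzA : ∀ w ∈ A, G.Adj z w → w = y₁)
    (hzy₂ : G.Adj z y₂) (hy₂ : y₂ ∈ B) (hy₂b : y₂ ≠ b)
    (hdeg : ∀ v ∈ S, v ≠ a → v ≠ b → v ≠ z → 3 ≤ degreeIn G S v)
    (IH : ∀ T : Finset V, HasLongPaths G 2 T)
    (IH' : ∀ T : Finset V, T.card < S.card → HasLongPaths G 3 T) :
    LongPathIn G S (2 ^ 3 - 2) a b := by
  have hlobe : IsLobe G A {z} y₁ a :=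
    isLobe_singleton hz hza hy₁ hzy₁ hzA
  obtain ⟨B', hBB, h⟩ := hlobe.exists_isLobeConfig hS hAB
  have hdisj := Finset.disjoint_left.1 h.disjoint_chain_right
  have hdisj' := Finset.disjoint_left.1 h.disjoint_lobe_right
  have hunion := h.union_eq
  have ha := h.left_mem
  obtain ⟨W, u, -, hW⟩ := (isLobe_erase (G := G) h.right_mem (hBB hy₂) hy₂b).exists_endLobe
  have hWB := hW.subset
  have hbW := hW.root_notMem
  have hdegW : ∀ v ∈ W, 3 ≤ degreeIn G S v := fun v hv =>
    hdeg v (by grind) (by grind) (by grind) (by grind)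
  by_cases hyW : y₂ ∈ W
  · exact h.longPathIn_six_of_mem c hG hay₁ hzy₁ hzy₂ hW hyW hdegW (IH _)
  have hy₁z := (reachableIn_of_adj (S := insert y₁ {z}) hzy₁.symm (by simp) (by simp)).longPathIn
  have hyb := hW.connectedOn_sdiff h.connectedOn_right y₂ (Finset.mem_sdiff.2 ⟨hBB hy₂, hyW⟩) b
    (Finset.mem_sdiff.2 ⟨h.right_mem, hbW⟩)
  refine h.longPathIn_of_not_adj c hS hW (z := z) (fun x hx y hy hxy => ?_)
    (fun v hv _ => hdegW v hv) ?_ IH' (hy₁z.one_of_ne hzy₁.ne') hzy₂ hWB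
    (fun p hp p' hp' hne => (hW.connectedOn p hp p' hp').longPathIn.one_of_ne hne)
    (hyb.longPathIn.one_of_ne hy₂b) (by lia)
  · obtain rfl := Finset.mem_singleton.1 hx
    have hyS : y ∈ A ∪ B := by grind [hAB.union_eq]
    rcases Finset.mem_union.1 hyS with hyA | hyB
    · exact hdisj h.cut_mem (hzA y hyA hxy ▸ hWB hy)
    · exact hyW (hAB.matched_left x hz y hyB y₂ hy₂ hxy hzy₂ ▸ hy)
  · obtain ⟨v, hv⟩ := hW.nonempty
    have := hdegW v hv
    have := h.degreeIn_le_right_add_one (hWB hv)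
    exact ⟨v, hv, by lia⟩

end Pendant

section Induction

/-! ### The induction -/

variable {V : Type*} [DecidableEq V] {G : SimpleGraph V} {S A B : Finset V}
  {a b y y₁ y₂ z : V} {e : ℕ}

theorem IsMatchedPartition.erase_left (h : IsMatchedPartition G S A B a b)
    (hz : IsLobe G A {z} y a) : IsMatchedPartition G (S.erase z) (A.erase z) B a b where
  disjoint := h.disjoint.mono_left (Finset.erase_subset z A)
  union_eq := by
    have hzB : z ∉ B := Finset.disjoint_left.1 h.disjoint (hz.subset (Finset.mem_singleton_self z))
    rw [← h.union_eq, Finset.erase_union_distrib, Finset.erase_eq_of_notMem hzB]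
  connectedOn_left := Finset.erase_eq A z ▸ hz.connectedOn_sdiff h.connectedOn_left
  connectedOn_right := h.connectedOn_right
  left_mem :=
    Finset.mem_erase.2 ⟨fun haz => hz.root_notMem (Finset.mem_singleton.2 haz), h.left_mem⟩
  right_mem := h.right_mem
  matched_left v hv := h.matched_left v (Finset.mem_of_mem_erase hv)
  matched_right v hv w hw w' hw' :=
    h.matched_right v hv w (Finset.mem_of_mem_erase hw) w' (Finset.mem_of_mem_erase hw')

theorem IsMatchedPartition.longPathIn_of_pendant_of_three_le (c : G.Coloring Bool) (he : 3 ≤ e)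
    (hS : BiconnectedOn G (S.erase z)) (hAB : IsMatchedPartition G S A B a b)
    (hz : IsLobe G A {z} y₁ a) (hy₁a : y₁ ≠ a) (hy₂ : y₂ ∈ B) (hzy₂ : G.Adj z y₂)
    (hdegA : ∀ v ∈ A, v ≠ a → v ≠ z → e ≤ degreeIn G A v)
    (hdegB : ∀ v ∈ B, v ≠ b → e ≤ degreeIn G B v)
    (hdegS : ∀ v ∈ S, v ≠ a → v ≠ b → v ≠ z → e + 1 ≤ degreeIn G S v)
    (IH : ∀ T : Finset V, HasLongPaths G e T)
    (IH' : ∀ T : Finset V, T.card < S.card → HasLongPaths G (e + 1) T) :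
    LongPathIn G S (2 ^ (e + 1) - 2) a b := by
  have hzA : z ∈ A := hz.subset (Finset.mem_singleton_self z)
  have hunion := hAB.union_eq
  have hy₁z : y₁ ≠ z := fun hyz => hz.cut_notMem (Finset.mem_singleton.2 hyz)
  have hy₁ : y₁ ∈ A.erase z := Finset.mem_erase.2 ⟨hy₁z, hz.cut_mem⟩
  have hnotAdj : ∀ v ∈ A, v ≠ z → v ≠ y₁ → ¬ G.Adj v z := fun v hv hvz hvy hadj =>
    (hz.closed z (Finset.mem_singleton_self z) v hv hadj.symm).elim
      (fun hvz' => hvz (Finset.mem_singleton.1 hvz')) hvy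
  have hnotAdj' : ∀ v ∈ B, v ≠ y₂ → ¬ G.Adj v z := fun v hv hvy hadj =>
    hvy (hAB.matched_left z hzA v hv y₂ hy₂ hadj.symm hzy₂)
  have hcard : (S.erase z).card < S.card := Finset.card_erase_lt_of_mem (by grind)
  refine ((hAB.erase_left hz).longPathIn c (by lia) hS ⟨y₁, hy₁, hy₁a⟩ hy₁ hy₂ ?_ ?_ hdegB ?_
    (.inr he) IH fun T hT => IH' T (hT.trans hcard)).mono (Finset.erase_subset z S) le_rfl
  · intro v hv hva hvy₁
    obtain ⟨hvz, hvA⟩ := Finset.mem_erase.1 hv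
    exact (hdegA v hvA hva hvz).trans (degreeIn_le_degreeIn_erase (hnotAdj v hvA hvz hvy₁))
  · intro _
    have := hdegA y₁ hz.cut_mem hy₁a hy₁z
    have := degreeIn_le_degreeIn_erase_add_one (G := G) (S := A) (v := y₁) (z := z)
    lia
  · intro v hv hva hvb hvy₁ hvy₂
    obtain ⟨hvz, hvS⟩ := Finset.mem_erase.1 hv
    exact (hdegS v hvS hva hvb hvz).trans (degreeIn_le_degreeIn_erase (by grind))

theorem IsMatchedPartition.exists_adj_right (hAB : IsMatchedPartition G S A B a b)
    (hlt : degreeIn G A z < degreeIn G S z) : ∃ y ∈ B, G.Adj z y := by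
  by_contra! hno
  refine hlt.not_ge (degreeIn_le_degreeIn fun w hw hzw => ?_)
  rw [← hAB.union_eq] at hw
  exact (Finset.mem_union.1 hw).resolve_right fun hwB => hno w hwB hzw

theorem IsMatchedPartition.longPathIn_of_mem_left (c : G.Coloring Bool) (hG : HasMatchingCuts G)
    (he : 2 ≤ e) (hS : BiconnectedOn G S) (hcard : 4 ≤ S.card)
    (hAB : IsMatchedPartition G S A B a b) (hz : z ∈ A)
    (hdeg : ∀ v ∈ S, v ≠ a → v ≠ b → v ≠ z → e + 1 ≤ degreeIn G S v)
    (IH : ∀ T : Finset V, HasLongPaths G e T)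
    (IH' : ∀ T : Finset V, T.card < S.card → HasLongPaths G (e + 1) T) :
    LongPathIn G S (2 ^ (e + 1) - 2) a b := by
  have hdisj := Finset.disjoint_left.1 hAB.disjoint
  have hunion := hAB.union_eq
  have ha := hAB.left_mem
  have hb := hAB.right_mem
  have hdegA : ∀ v ∈ A, v ≠ a → v ≠ z → e ≤ degreeIn G A v := fun v hv hva hvz => by
    have := hdeg v (by grind) hva (by grind) hvz
    have := hAB.degreeIn_le_left_add_one hv
    lia
  have hdegB : ∀ v ∈ B, v ≠ b → e ≤ degreeIn G B v := fun v hv hvb => by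
    have := hdeg v (by grind) (by grind) hvb (by grind)
    have := hAB.symm.degreeIn_le_left_add_one hv
    lia
  have hpos : ∀ v ∈ A, 0 < degreeIn G A v := fun v hv => by
    have := hS.two_le_degreeIn (by lia) (show v ∈ S by grind)
    have := hAB.degreeIn_le_left_add_one hv
    lia
  obtain ⟨x, hx, hax⟩ := exists_adj_of_degreeIn_pos (hpos a ha)
  by_cases hcase : z = a ∨ 2 ≤ degreeIn G A z
  · exact hAB.longPathIn c he hS ⟨x, hx, hax.ne'⟩ hz hb hdegA (fun hza => hcase.resolve_left hza)
      hdegB (fun v hv hva hvb hvz _ => hdeg v hv hva hvb hvz) (.inl rfl) IH IH'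
  push Not at hcase
  obtain ⟨hza, hzA⟩ := hcase
  obtain ⟨y₁, hy₁, hzy₁⟩ := exists_adj_of_degreeIn_pos (hpos z hz)
  have hunique : ∀ w ∈ A, G.Adj z w → w = y₁ := fun w hw hzw => by_contra fun hne =>
    hzA.not_ge (two_le_degreeIn_iff.2 ⟨w, hw, y₁, hy₁, hne, hzw, hzy₁⟩)
  have hzS : z ∈ S := by grind
  obtain ⟨y₂, hy₂, hzy₂⟩ := hAB.exists_adj_right (hzA.trans_le (hS.two_le_degreeIn (by lia) hzS))
  have hzz : ∀ w ∈ S, G.Adj z w → w = y₁ ∨ w = y₂ := fun w hw hzw =>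
    (Finset.mem_union.1 (hunion ▸ hw)).imp (hunique w · hzw)
      (hAB.matched_left z hz w · y₂ hy₂ hzw hzy₂)
  obtain h | ⟨hbic, hy₁a, -, -, hy₂b⟩ := longPathIn_or_biconnectedOn_erase c (by lia) hS hcard
    (show a ∈ S.erase z by grind) (show b ∈ S.erase z by grind) (by grind) hzS hzz hdeg IH'
  · exact h
  obtain rfl | he := he.eq_or_lt
  · exact hAB.longPathIn_of_pendant c hG hS hz hza hzy₁ hy₁ hy₁a.symm hunique hzy₂ hy₂ hy₂b hdeg
      IH IH'
  · exact hAB.longPathIn_of_pendant_of_three_le c he hbic (isLobe_singleton hz hza hy₁ hzy₁ hunique)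
      hy₁a hy₂ hzy₂ hdegA hdegB hdeg IH IH'

theorem hasLongPaths_of_le_two (he : e ≤ 2) (S : Finset V) : HasLongPaths G e S := by
  intro hcard hS a ha b hb hab _ _
  obtain ⟨w, hw, hwb, haw⟩ := hS.exists_adj_ne (by lia) ha hab.symm
  have hpath : LongPathIn G (S.erase a) 1 w b :=
    (hS a w (by grind [haw.ne']) b (by grind)).longPathIn.one_of_ne hwb
  refine ((LongPathIn.refl (Finset.mem_singleton_self a)).join haw hpath (by simp)).mono
    (by grind) ?_
  calc 2 ^ e - 2 ≤ 2 ^ 2 - 2 := by gcongr; norm_num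
    _ = 0 + 1 + 1 := rfl

theorem HasMatchingCuts.hasLongPaths_succ (hG : HasMatchingCuts G) (c : G.Coloring Bool)
    (he : 2 ≤ e) (IH : ∀ T : Finset V, HasLongPaths G e T) (S : Finset V) :
    HasLongPaths G (e + 1) S := by
  induction hn : S.card using Nat.strong_induction_on generalizing S with
  | _ n IH' =>
    subst hn
    intro hcard hS a ha b hb hab z₀ hdeg₀
    obtain ⟨z, hz, hdeg⟩ :
        ∃ z ∈ S, ∀ v ∈ S, v ≠ a → v ≠ b → v ≠ z → e + 1 ≤ degreeIn G S v := by
      by_cases hz₀ : z₀ ∈ S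
      · exact ⟨z₀, hz₀, hdeg₀⟩
      · exact ⟨a, ha, fun v hv hva hvb _ => hdeg₀ v hv hva hvb fun hvz => hz₀ (hvz ▸ hv)⟩
    have IH'' : ∀ T : Finset V, T.card < S.card → HasLongPaths G (e + 1) T := fun T hT =>
      IH' T.card hT T rfl
    obtain ⟨A, B, hAB⟩ := hG.exists_isMatchedPartition (hS.connectedOn (by lia)) ha hb hab
    rcases Finset.mem_union.1 (hAB.union_eq ▸ hz) with hzA | hzB
    · exact hAB.longPathIn_of_mem_left c hG he hS hcard hzA hdeg IH IH''
    · exact (hAB.symm.longPathIn_of_mem_left c hG he hS hcard hzB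
        (fun v hv hvb hva hvz => hdeg v hv hva hvb hvz) IH IH'').symm

theorem HasMatchingCuts.hasLongPaths (hG : HasMatchingCuts G) (c : G.Coloring Bool) (d : ℕ) :
    ∀ S : Finset V, HasLongPaths G d S := by
  obtain hd | hd := Nat.le_total d 2
  · exact hasLongPaths_of_le_two hd
  · induction d, hd using Nat.le_induction with
    | base => exact hasLongPaths_of_le_two le_rfl
    | succ e he IH => exact hG.hasLongPaths_succ c he IH

end Induction

section Hypercube

/-! ### Two-connected graphs and the hypercube -/

theorem three_le_card_of_twoConnected {V : Type*} [Fintype V] {G : SimpleGraph V}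
    (h : TwoConnected G) : 3 ≤ (Finset.univ : Finset V).card := by
  obtain ⟨x, y, z, hxy, hxz, hyz⟩ := h.1
  exact Finset.two_lt_card.2 ⟨x, Finset.mem_univ x, y, Finset.mem_univ y, z, Finset.mem_univ z,
    hxy, hxz, hyz⟩

theorem biconnectedOn_univ_of_twoConnected {V : Type*} [Fintype V] [DecidableEq V]
    {G : SimpleGraph V} (h : TwoConnected G) : BiconnectedOn G Finset.univ := by
  intro v x hx y hy
  have hverts : ∀ w, w ∈ ((⊤ : G.Subgraph).deleteVerts {v}).verts ↔ w ∈ Finset.univ.erase v := by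
    simp
  obtain ⟨p⟩ := (h.2 v).preconnected ⟨x, (hverts x).2 hx⟩ ⟨y, (hverts y).2 hy⟩
  refine ⟨p.map (SimpleGraph.Subgraph.hom _), fun w hw => ?_⟩
  obtain ⟨u, -, rfl⟩ := List.mem_map.1 (p.support_map (SimpleGraph.Subgraph.hom _) ▸ hw)
  exact (hverts u).1 u.2

theorem ncard_neighborSet_le_degreeIn {V : Type*} {G : SimpleGraph V} (H : G.Subgraph)
    [Fintype H.verts] (z : H.verts) :
    (H.neighborSet z).ncard ≤ degreeIn H.coe Finset.univ z := by
  classical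
  have hsub : H.neighborSet z ⊆
      ((Finset.univ.filter (H.coe.Adj z)).image Subtype.val : Finset V) := by
    intro w hw
    have hzw : H.Adj z w := hw
    simpa using ⟨hzw, hzw.snd_mem⟩
  calc (H.neighborSet z).ncard
      ≤ ((Finset.univ.filter (H.coe.Adj z)).image Subtype.val).card := by
        rw [← Set.ncard_coe_finset]
        exact Set.ncard_le_ncard hsub (Finset.finite_toSet _)
    _ ≤ (Finset.univ.filter (H.coe.Adj z)).card := Finset.card_image_le
    _ = degreeIn H.coe Finset.univ z := by rw [degreeIn]; congr

variable {n : ℕ}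

theorem exists_coord_of_hypercube_adj {x y : Fin n → Bool} (h : (hypercube n).Adj x y) :
    ∃ i, x i ≠ y i ∧ ∀ j, j ≠ i → x j = y j := by
  have hdist : hammingDist x y = 1 := by
    simpa [hypercube, hammingDist_comm y x, h.ne] using h
  obtain ⟨i, hi⟩ := Finset.card_eq_one.1 hdist
  have hiff : ∀ j, x j ≠ y j ↔ j = i := fun j => by simpa using Finset.ext_iff.1 hi j
  exact ⟨i, (hiff i).2 rfl, fun j hj => not_not.1 fun hne => hj ((hiff j).1 hne)⟩

theorem bodd_sum_ne_of_hypercube_adj {x y : Fin n → Bool} (h : (hypercube n).Adj x y) :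
    (∑ i, (x i).toNat).bodd ≠ (∑ i, (y i).toNat).bodd := by
  obtain ⟨i, hi, hrest⟩ := exists_coord_of_hypercube_adj h
  have hsum : ∑ j ∈ Finset.univ.erase i, (x j).toNat = ∑ j ∈ Finset.univ.erase i, (y j).toNat :=
    Finset.sum_congr rfl fun j hj => by rw [hrest j (Finset.ne_of_mem_erase hj)]
  rw [← Finset.add_sum_erase _ _ (Finset.mem_univ i),
    ← Finset.add_sum_erase (a := i) (f := fun j => (y j).toNat) _ (Finset.mem_univ i), hsum,
    Nat.bodd_add, Nat.bodd_add]
  cases hx : x i <;> cases hy : y i <;> simp_all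

/-- The proper 2-colouring of the hypercube by the parity of the number of `true` coordinates. -/
def hypercubeParity (n : ℕ) : (hypercube n).Coloring Bool :=
  .mk (fun x => (∑ i, (x i).toNat).bodd) bodd_sum_ne_of_hypercube_adj

theorem hasMatchingCuts_hypercube (n : ℕ) : HasMatchingCuts (hypercube n) := by
  intro a b hab
  obtain ⟨i, hi⟩ := Function.ne_iff.1 hab
  have hflip : ∀ v w : Fin n → Bool, (hypercube n).Adj v w → w i ≠ v i →
      w = Function.update v i (!v i) := by
    intro v w hvw hwi
    obtain ⟨j, -, hrest⟩ := exists_coord_of_hypercube_adj hvw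
    obtain rfl : i = j := by_contra fun hij => hwi (hrest i hij).symm
    exact Function.eq_update_iff.2 ⟨Bool.eq_not_of_ne hwi, fun k hk => (hrest k hk).symm⟩
  exact ⟨fun x => x i, hi, fun v w w' hvw hvw' hw hw' =>
    (hflip v w hvw hw).trans (hflip v w' hvw' hw').symm⟩

end Hypercube

end CubePath

theorem hypercube_twoConnected_path_general {V : Type*} {G : SimpleGraph V} (c : G.Coloring Bool)
    (hG : CubePath.HasMatchingCuts G) (d : ℕ) (H : G.Subgraph) (hfin : H.verts.Finite)
    (h2 : TwoConnected H.coe) (a b : V) (ha : a ∈ H.verts) (hb : b ∈ H.verts) (hab : a ≠ b)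
    (hdeg : ∀ z ∈ H.verts, z ≠ a → z ≠ b → d ≤ (H.neighborSet z).ncard) :
    ∃ p : H.coe.Walk ⟨a, ha⟩ ⟨b, hb⟩, p.IsPath ∧ 2 ^ d - 2 ≤ p.length := by
  classical
  have : Fintype H.verts := hfin.fintype
  let cH : H.coe.Coloring Bool := c.comp H.hom
  have hbic := CubePath.biconnectedOn_univ_of_twoConnected h2
  have hcard := hbic.four_le_card cH (CubePath.three_le_card_of_twoConnected h2)
  have hcuts := hG.comap H.hom SimpleGraph.Subgraph.hom_injective
  obtain ⟨p, hp, -, hlen⟩ := hcuts.hasLongPaths cH d Finset.univ hcard hbic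
    ⟨a, ha⟩ (Finset.mem_univ _) ⟨b, hb⟩ (Finset.mem_univ _) (Subtype.coe_ne_coe.1 hab) ⟨a, ha⟩
    fun v _ hva hvb _ => (hdeg v v.2 (Subtype.coe_ne_coe.2 hva) (Subtype.coe_ne_coe.2 hvb)).trans
      (CubePath.ncard_neighborSet_le_degreeIn H v)
  exact ⟨p, hp, hlen⟩

/-- Let `G` be a 2-connected subgraph of `Q_n`, and `a ≠ b` vertices of `G` such that
every other vertex has degree at least `d` in `G`. Then `G` contains an `a-b` path of
length at least `2^d - 2`. -/
theorem hypercube_twoConnected_path (n d : ℕ) (G : (hypercube n).Subgraph)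
    (h2 : TwoConnected G.coe)
    (a b : Fin n → Bool) (ha : a ∈ G.verts) (hb : b ∈ G.verts) (hab : a ≠ b)
    (hdeg : ∀ z ∈ G.verts, z ≠ a → z ≠ b → d ≤ (G.neighborSet z).ncard) :
    ∃ p : G.coe.Walk ⟨a, ha⟩ ⟨b, hb⟩, p.IsPath ∧ 2 ^ d - 2 ≤ p.length :=
  hypercube_twoConnected_path_general (CubePath.hypercubeParity n)
    (CubePath.hasMatchingCuts_hypercube n) d G G.verts.toFinite h2 a b ha hb hab hdeg
end
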